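/- Let n ≥ 2 be fixed and let (X_d)_{d≥1} be a unitarily invariant sequence of random positive semidefinite matrices X_d ∈ M_n(ℂ) ⊗ M_d(ℂ) converging strongly to a compactly supported probability measure μ with supp(μ) ⊆ [A,B] ⊆ [0,∞), mean m and variance σ². If n(m − 2σ) > B − A + 2σ, then almost surely, for all sufficiently large d, X_d ∈ PPT_{n,d}; in particular lim_{d→∞} P(X_d ∈ PPT_{n,d}) = 1. -/

import Mathlib

open MeasureTheory Filter Topology Polynomial Matrix Kronecker
open scoped ComplexOrder

noncomputable section

/-- Measurable space structure on matrices (entrywise). -/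
instance matMS (m n : Type*) : MeasurableSpace (Matrix m n ℂ) :=
  inferInstanceAs (MeasurableSpace (m → n → ℂ))

/-- The ℓ²→ℓ² operator norm of a complex square matrix. -/
def opNorm {N : Type*} [Fintype N] [DecidableEq N] (X : Matrix N N ℂ) : ℝ :=
  ‖Matrix.toEuclideanCLM (𝕜 := ℂ) (n := N) X‖

/-- Application of a real polynomial to a complex square matrix. -/
def polyApply {N : Type*} [Fintype N] [DecidableEq N] (P : Polynomial ℝ)
    (X : Matrix N N ℂ) : Matrix N N ℂ :=
  Polynomial.aeval X (P.map (algebraMap ℝ ℂ))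

/-- The (topological) support of a measure on ℝ: points all of whose open
neighbourhoods have positive measure. -/
def msupport (μ : Measure ℝ) : Set ℝ :=
  {x | ∀ U : Set ℝ, IsOpen U → x ∈ U → 0 < μ U}

/-- Strong convergence of a sequence of random matrices `X d ∈ M_n(ℂ) ⊗ M_d(ℂ)`
towards a compactly supported probability measure `μ`: almost surely, for every
real polynomial `P`, the normalized traces of `P(X d)` converge to `∫ P dμ` and the
operator norms of `P(X d)` converge to `sup {|P(x)| : x ∈ supp μ}`. -/
def StrongConv {Ω : Type*} [MeasurableSpace Ω] (ℙ : Measure Ω) (n : ℕ)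
    (X : (d : ℕ) → Ω → Matrix (Fin n × Fin d) (Fin n × Fin d) ℂ)
    (μ : Measure ℝ) : Prop :=
  ∀ᵐ ω ∂ℙ, ∀ P : Polynomial ℝ,
    Tendsto (fun d : ℕ => ((n : ℂ) * (d : ℂ))⁻¹ * (polyApply P (X d ω)).trace) atTop
      (𝓝 ((∫ x, P.eval x ∂μ : ℝ) : ℂ)) ∧
    Tendsto (fun d : ℕ => opNorm (polyApply P (X d ω))) atTop
      (𝓝 (sSup ((fun x => |P.eval x|) '' msupport μ)))

/-- Unitary invariance of a sequence of random matrices: for every `d` and every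
unitary `U`, the random matrix `U (X d) U*` has the same distribution as `X d`. -/
def UnitInv {Ω : Type*} [MeasurableSpace Ω] (ℙ : Measure Ω) (n : ℕ)
    (X : (d : ℕ) → Ω → Matrix (Fin n × Fin d) (Fin n × Fin d) ℂ) : Prop :=
  ∀ d : ℕ, ∀ U : Matrix (Fin n × Fin d) (Fin n × Fin d) ℂ,
    U ∈ unitary (Matrix (Fin n × Fin d) (Fin n × Fin d) ℂ) →
    Measure.map (fun ω => U * X d ω * star U) ℙ = Measure.map (X d) ℙ

/-- The separable cone `SEP_{n,d}`. -/
def SEP (n d : ℕ) : Set (Matrix (Fin n × Fin d) (Fin n × Fin d) ℂ) :=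
  {X | ∃ (k : ℕ) (A : Fin k → Matrix (Fin n) (Fin n) ℂ)
      (B : Fin k → Matrix (Fin d) (Fin d) ℂ),
    (∀ i, (A i).PosSemidef) ∧ (∀ i, (B i).PosSemidef) ∧ X = ∑ i, A i ⊗ₖ B i}

/-- The partial transpose on `M_n(ℂ) ⊗ M_d(ℂ)`: transposition of the first factor. -/
def ptrans {n d : ℕ} (X : Matrix (Fin n × Fin d) (Fin n × Fin d) ℂ) :
    Matrix (Fin n × Fin d) (Fin n × Fin d) ℂ :=
  fun p q => X (q.1, p.2) (p.1, q.2)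

/-- The PPT cone `PPT_{n,d}`: positive semidefinite matrices with positive
semidefinite partial transpose. -/
def PPT (n d : ℕ) : Set (Matrix (Fin n × Fin d) (Fin n × Fin d) ℂ) :=
  {X | X.PosSemidef ∧ (ptrans X).PosSemidef}

section SpectralGap

open scoped InnerProductSpace

variable {ι P H : Type*} [Fintype ι] [DecidableEq ι] [AddCommGroup P] [Module ℂ P]
  [NormedAddCommGroup H] [InnerProductSpace ℂ H]

/-- Operators `D i j` realizing the commutation relations of matrix units (with reversed bracket),
mutually adjoint for the semi-inner product pulled back along `ψ`, and with vanishing trace part. -/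
structure MatrixUnitAction (ψ : P →ₗ[ℂ] H) (D : ι → ι → P →ₗ[ℂ] P) : Prop where
  adj : ∀ i j f g, ⟪ψ f, ψ (D i j g)⟫_ℂ = ⟪ψ (D j i f), ψ g⟫_ℂ
  comm : ∀ i j k l f, D i j (D k l f) - D k l (D i j f) =
    (if i = l then D k j f else 0) - (if k = j then D i l f else 0)
  sum_diag : ∀ f, ∑ i, D i i f = 0

namespace MatrixUnitAction

variable {ψ : P →ₗ[ℂ] H} {D : ι → ι → P →ₗ[ℂ] P}

/-- The Casimir operator `∑ D j i D i j`. -/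
def casimir (D : ι → ι → P →ₗ[ℂ] P) : P →ₗ[ℂ] P := ∑ i, ∑ j, D j i ∘ₗ D i j

lemma casimir_apply (f : P) : casimir D f = ∑ i, ∑ j, D j i (D i j f) := by
  simp [casimir, LinearMap.sum_apply]

lemma inner_casimir (h : MatrixUnitAction ψ D) (f g : P) :
    ⟪ψ f, ψ (casimir D g)⟫_ℂ = ∑ i, ∑ j, ⟪ψ (D i j f), ψ (D i j g)⟫_ℂ := by
  simp only [casimir_apply, map_sum, inner_sum, h.adj]

lemma casimir_comm (h : MatrixUnitAction ψ D) (a b : ι) (f : P) :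
    D a b (casimir D f) = casimir D (D a b f) := by
  have key : ∀ i j, D a b (D j i (D i j f)) - D j i (D i j (D a b f)) =
      (if a = i then D j b (D i j f) else 0) - (if j = b then D a i (D i j f) else 0)
      + (if a = j then D j i (D i b f) else 0) - (if i = b then D j i (D a j f) else 0) := by
    intro i j
    have h1 := h.comm a b j i (D i j f)
    have h2 := congrArg (D j i) (h.comm a b i j f)
    simp only [map_sub, apply_ite (D j i), map_zero] at h2
    have : D a b (D j i (D i j f)) - D j i (D i j (D a b f)) =
      (D a b (D j i (D i j f)) - D j i (D a b (D i j f))) +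
      (D j i (D a b (D i j f)) - D j i (D i j (D a b f))) := by abel
    rw [this, h1, h2]
    abel
  rw [← sub_eq_zero]
  simp only [casimir_apply, map_sum, ← Finset.sum_sub_distrib, key]
  simp only [Finset.sum_add_distrib, Finset.sum_sub_distrib]
  simp only [Finset.sum_ite_eq, Finset.sum_ite_eq', Finset.mem_univ, if_true,
    Finset.sum_ite_irrel, Finset.sum_const_zero]
  abel

lemma casimir_norm_sq (h : MatrixUnitAction ψ D) (f : P) :
    ‖ψ (casimir D f)‖ ^ 2 = ∑ i, ∑ j, ∑ k, ∑ l, ‖ψ (D k l (D i j f))‖ ^ 2 := by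
  have h1 : ⟪ψ (casimir D f), ψ (casimir D f)⟫_ℂ =
      ∑ i, ∑ j, ∑ k, ∑ l, ⟪ψ (D k l (D i j f)), ψ (D k l (D i j f))⟫_ℂ := by
    rw [h.inner_casimir]
    refine Finset.sum_congr rfl fun i _ => Finset.sum_congr rfl fun j _ => ?_
    rw [h.casimir_comm, ← inner_conj_symm, h.inner_casimir]
    simp only [map_sum, inner_conj_symm]
  simp only [inner_self_eq_norm_sq_to_K] at h1
  exact_mod_cast h1

lemma gap_aux (h : MatrixUnitAction ψ D) (f : P) :
    (Fintype.card ι : ℝ) / 2 * ∑ i, ∑ j, ‖ψ (D i j f)‖ ^ 2 ≤ ‖ψ (casimir D f)‖ ^ 2 := by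
  rw [h.casimir_norm_sq]
  have hc : ∀ i j k l, ‖ψ (D i j (D k l f)) - ψ (D k l (D i j f))‖ ^ 2 ≤
      2 * ‖ψ (D i j (D k l f))‖ ^ 2 + 2 * ‖ψ (D k l (D i j f))‖ ^ 2 := by
    intro i j k l
    have := parallelogram_law_with_norm ℂ (ψ (D i j (D k l f))) (ψ (D k l (D i j f)))
    nlinarith [sq_nonneg ‖ψ (D i j (D k l f)) + ψ (D k l (D i j f))‖]
  have he : ∀ i j k l, ‖ψ (D i j (D k l f)) - ψ (D k l (D i j f))‖ ^ 2 =
      (if i = l then ‖ψ (D k j f)‖ ^ 2 else 0) + (if k = j then ‖ψ (D i l f)‖ ^ 2 else 0)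
      - 2 * (if i = l then (if k = j then (⟪ψ (D k k f), ψ (D i i f)⟫_ℂ).re else 0) else 0) := by
    intro i j k l
    rw [← map_sub, h.comm]
    rw [map_sub, @norm_sub_sq ℂ]
    by_cases h1 : i = l <;> by_cases h2 : k = j <;> simp [h1, h2]
    ring
  have hz : ∑ i, ∑ k, (⟪ψ (D k k f), ψ (D i i f)⟫_ℂ).re = 0 := by
    have : ∑ i, ∑ k, ⟪ψ (D k k f), ψ (D i i f)⟫_ℂ = 0 := by
      simp_rw [← sum_inner, ← map_sum, h.sum_diag]
      simp
    have h' := congrArg Complex.re this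
    simpa using h'
  have hsum : ∑ i, ∑ j, ∑ k, ∑ l, ‖ψ (D i j (D k l f)) - ψ (D k l (D i j f))‖ ^ 2 =
      2 * (Fintype.card ι : ℝ) * ∑ i, ∑ j, ‖ψ (D i j f)‖ ^ 2 := by
    simp only [he, Finset.sum_sub_distrib, Finset.sum_add_distrib, ← Finset.mul_sum,
      Finset.sum_ite_eq, Finset.sum_ite_eq', Finset.mem_univ, if_true,
      Finset.sum_ite_irrel, Finset.sum_const_zero, hz, Finset.sum_const, Finset.card_univ,
      nsmul_eq_mul]
    rw [Finset.sum_comm (f := fun x y => ‖ψ (D y x f)‖ ^ 2)]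
    ring
  have hle : ∑ i, ∑ j, ∑ k, ∑ l, ‖ψ (D i j (D k l f)) - ψ (D k l (D i j f))‖ ^ 2 ≤
      ∑ i, ∑ j, ∑ k, ∑ l, (2 * ‖ψ (D i j (D k l f))‖ ^ 2 + 2 * ‖ψ (D k l (D i j f))‖ ^ 2) :=
    Finset.sum_le_sum fun i _ => Finset.sum_le_sum fun j _ => Finset.sum_le_sum fun k _ =>
      Finset.sum_le_sum fun l _ => hc i j k l
  have hswap : ∑ i, ∑ j, ∑ k, ∑ l, ‖ψ (D i j (D k l f))‖ ^ 2 =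
      ∑ i, ∑ j, ∑ k, ∑ l, ‖ψ (D k l (D i j f))‖ ^ 2 := by
    have e1 : ∀ F : ι → ι → ι → ι → ℝ, ∑ i, ∑ j, ∑ k, ∑ l, F i j k l =
        ∑ a : ι × ι, ∑ b : ι × ι, F a.1 a.2 b.1 b.2 := by
      intro F; simp only [Fintype.sum_prod_type]
    rw [e1 fun i j k l => ‖ψ (D i j (D k l f))‖ ^ 2, Finset.sum_comm,
      ← e1 fun i j k l => ‖ψ (D k l (D i j f))‖ ^ 2]
  simp only [Finset.sum_add_distrib, ← Finset.mul_sum] at hle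
  rw [hsum, hswap] at hle
  linarith

/-- Spectral gap: a vector orthogonal to the joint kernel of the `D i j` is controlled by its
Dirichlet energy. -/
theorem norm_sq_le [FiniteDimensional ℂ P] [Nonempty ι] (h : MatrixUnitAction ψ D) (f : P)
    (hf : ∀ g, (∀ i j, ψ (D i j g) = 0) → ⟪ψ g, ψ f⟫_ℂ = 0) :
    ‖ψ f‖ ^ 2 ≤ 2 / (Fintype.card ι : ℝ) * ∑ i, ∑ j, ‖ψ (D i j f)‖ ^ 2 := by
  obtain ⟨s, hs⟩ := ψ.rangeRestrict.exists_rightInverse_of_surjective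
    (LinearMap.range_rangeRestrict ψ)
  have hs' : ∀ v : LinearMap.range ψ, ψ (s v) = v := fun v => by
    have := LinearMap.congr_fun hs v
    simpa using congrArg Subtype.val this
  let T : LinearMap.range ψ →ₗ[ℂ] LinearMap.range ψ := ψ.rangeRestrict ∘ₗ casimir D ∘ₗ s
  have hT : ∀ v, (T v : H) = ψ (casimir D (s v)) := fun v => rfl
  have hsym : T.IsSymmetric := by
    intro v w
    rw [Submodule.coe_inner, Submodule.coe_inner, hT, hT]
    nth_rewrite 1 [← hs' w]
    nth_rewrite 1 [← hs' v]
    rw [h.inner_casimir, ← inner_conj_symm, h.inner_casimir]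
    simp only [map_sum, inner_conj_symm]
  have hmem : ψ.rangeRestrict f ∈ LinearMap.range T := by
    rw [← Submodule.orthogonal_orthogonal (LinearMap.range T), hsym.orthogonal_range,
      Submodule.mem_orthogonal]
    intro v hv
    rw [Submodule.coe_inner, ← hs' v]
    apply hf
    have h0 : ∑ i, ∑ j, ⟪ψ (D i j (s v)), ψ (D i j (s v))⟫_ℂ = 0 := by
      rw [← h.inner_casimir, ← hT, LinearMap.mem_ker.mp hv]; simp
    simp only [inner_self_eq_norm_sq_to_K] at h0
    have h1 : ∑ i, ∑ j, ‖ψ (D i j (s v))‖ ^ 2 = 0 := by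
      have h1 := congrArg Complex.re h0
      simpa [← Complex.ofReal_pow] using h1
    intro i j
    have h2 := (Finset.sum_eq_zero_iff_of_nonneg (fun i _ => Finset.sum_nonneg
      fun j _ => by positivity)).mp h1 i (Finset.mem_univ _)
    have h3 := (Finset.sum_eq_zero_iff_of_nonneg (fun j _ => by positivity)).mp h2 j
      (Finset.mem_univ _)
    simpa using h3
  obtain ⟨v, hv⟩ := hmem
  set u := s v
  have hu : ψ (casimir D u) = ψ f := congrArg Subtype.val hv
  have hN : (0 : ℝ) < Fintype.card ι := by exact_mod_cast Fintype.card_pos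
  have hgap := h.gap_aux u
  rw [hu] at hgap
  have hfe : ‖ψ f‖ ^ 2 ≤ ∑ a : ι × ι, ‖ψ (D a.1 a.2 f)‖ * ‖ψ (D a.1 a.2 u)‖ := by
    have h1 : ⟪ψ f, ψ f⟫_ℂ = ∑ a : ι × ι, ⟪ψ (D a.1 a.2 f), ψ (D a.1 a.2 u)⟫_ℂ := by
      nth_rewrite 2 [← hu]
      rw [h.inner_casimir, Fintype.sum_prod_type]
    have h2 : ‖ψ f‖ ^ 2 = ‖⟪ψ f, ψ f⟫_ℂ‖ := by
      rw [inner_self_eq_norm_sq_to_K]; simp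
    rw [h2, h1]
    exact (norm_sum_le _ _).trans (Finset.sum_le_sum fun a _ => norm_inner_le_norm _ _)
  have hcs := Finset.sum_mul_sq_le_sq_mul_sq Finset.univ
    (fun a : ι × ι => ‖ψ (D a.1 a.2 f)‖) (fun a : ι × ι => ‖ψ (D a.1 a.2 u)‖)
  simp only [Fintype.sum_prod_type] at hcs hfe
  set F := ∑ i, ∑ j, ‖ψ (D i j f)‖ ^ 2
  set U := ∑ i, ∑ j, ‖ψ (D i j u)‖ ^ 2
  have hF : 0 ≤ F := Finset.sum_nonneg fun i _ => Finset.sum_nonneg fun j _ => by positivity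
  have hU : U ≤ 2 / (Fintype.card ι : ℝ) * ‖ψ f‖ ^ 2 := by
    rw [div_mul_eq_mul_div, le_div_iff₀ hN]; linarith
  have h4 : (‖ψ f‖ ^ 2) * ‖ψ f‖ ^ 2 ≤ (2 / (Fintype.card ι : ℝ) * F) * ‖ψ f‖ ^ 2 := by
    have : (‖ψ f‖ ^ 2) ^ 2 ≤ F * U := (pow_le_pow_left₀ (by positivity) hfe 2).trans hcs
    nlinarith [mul_le_mul_of_nonneg_left hU hF]
  rcases (sq_nonneg ‖ψ f‖).eq_or_lt with h0 | h0
  · rw [← h0]; positivity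
  · exact le_of_mul_le_mul_right h4 h0

end MatrixUnitAction

end SpectralGap

section MatrixDerivation

variable {ι : Type*}

/-- Polynomial functions in the entries of a matrix. -/
abbrev EntryPoly (ι : Type*) := MvPolynomial (ι × ι) ℂ

/-- The generic matrix, whose entries are the variables. -/
def gen (ι : Type*) : Matrix ι ι (EntryPoly ι) := fun i j => MvPolynomial.X (i, j)

/-- Evaluation of a polynomial in the entries at a matrix. -/
def evalAt (x : Matrix ι ι ℂ) : EntryPoly ι →ₐ[ℂ] ℂ := MvPolynomial.aeval fun s => x s.1 s.2

lemma evalAt_X (x : Matrix ι ι ℂ) (s : ι × ι) : evalAt x (MvPolynomial.X s) = x s.1 s.2 := by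
  simp [evalAt]

lemma map_evalAt_gen (x : Matrix ι ι ℂ) : (gen ι).map (evalAt x) = x := by
  ext i j; simp [gen, evalAt_X]

/-- A complex matrix viewed as a constant polynomial matrix. -/
def constMat (B : Matrix ι ι ℂ) : Matrix ι ι (EntryPoly ι) := B.map MvPolynomial.C

lemma map_evalAt_constMat (x B : Matrix ι ι ℂ) : (constMat B).map (evalAt x) = B := by
  ext i j; simp [constMat, evalAt]

section
variable {R : Type*} [CommRing R] [Algebra ℂ R]

lemma map_derivation_mul [Fintype ι] (δ : Derivation ℂ R R) (P Q : Matrix ι ι R) :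
    (P * Q).map δ = P.map δ * Q + P * Q.map δ := by
  ext i j
  simp only [Matrix.map_apply, Matrix.mul_apply, Matrix.add_apply, map_sum, Derivation.leibniz,
    smul_eq_mul, Finset.sum_add_distrib]
  rw [add_comm]
  congr 1
  exact Finset.sum_congr rfl fun _ _ => mul_comm _ _

lemma map_derivation_one [DecidableEq ι] (δ : Derivation ℂ R R) :
    (1 : Matrix ι ι R).map δ = 0 := by
  ext i j
  by_cases h : i = j <;> simp [h]

lemma map_derivation_pow [Fintype ι] [DecidableEq ι] (δ : Derivation ℂ R R) (P : Matrix ι ι R)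
    (k : ℕ) :
    (P ^ k).map δ = ∑ r ∈ Finset.range k, P ^ r * P.map δ * P ^ (k - 1 - r) := by
  induction k with
  | zero => simp [map_derivation_one]
  | succ k ih =>
    rw [pow_succ, map_derivation_mul, ih, Finset.sum_range_succ, Finset.sum_mul]
    congr 1
    · refine Finset.sum_congr rfl fun r hr => ?_
      have : k + 1 - 1 - r = (k - 1 - r) + 1 := by
        have := Finset.mem_range.mp hr; omega
      rw [this, pow_succ]; simp only [mul_assoc]
    · simp

lemma trace_map_derivation [Fintype ι] (δ : Derivation ℂ R R) (P : Matrix ι ι R) :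
    (P.map δ).trace = δ P.trace := by
  simp [Matrix.trace]

lemma sum_entry_commutator [Fintype ι] [DecidableEq ι] (P W Q : Matrix ι ι R) :
    ∑ i, ∑ j, (P * (Matrix.single i j 1 * W - W * Matrix.single i j 1) * Q : Matrix ι ι R) i j =
      P.trace * (W * Q).trace - (P * W).trace * Q.trace := by
  have h : ∀ (A B : Matrix ι ι R) i j, (A * Matrix.single i j 1 * B : Matrix ι ι R) i j = A i i * B j j := by
    intro A B i j
    rw [Matrix.mul_apply, Finset.sum_eq_single j]
    · simp [Matrix.mul_single_apply_same]
    · intro b _ hb; rw [Matrix.mul_single_apply_of_ne _ _ _ _ _ hb, zero_mul]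
    · simp
  have : ∀ i j, (P * (Matrix.single i j 1 * W - W * Matrix.single i j 1) * Q : Matrix ι ι R) i j =
      P i i * (W * Q) j j - (P * W) i i * Q j j := by
    intro i j
    rw [← h, ← h]
    simp only [mul_sub, sub_mul, Matrix.sub_apply, mul_assoc]
  simp only [this, Matrix.trace, Matrix.diag_apply, Finset.sum_mul_sum, Finset.sum_sub_distrib]

lemma trace_commutator_single_mul [Fintype ι] [DecidableEq ι] (i j : ι) (W H : Matrix ι ι R) :
    ((Matrix.single i j 1 * W - W * Matrix.single i j 1) * H).trace =
      (W * H - H * W : Matrix ι ι R) j i := by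
  have h1 : (Matrix.single i j 1 * W * H).trace = (W * H : Matrix ι ι R) j i := by
    rw [mul_assoc, Matrix.trace_single_mul, one_smul]
  have h2 : (W * Matrix.single i j 1 * H).trace = (H * W : Matrix ι ι R) j i := by
    rw [Matrix.trace_mul_comm, ← mul_assoc, Matrix.trace_mul_comm, Matrix.trace_single_mul,
      one_smul]
  rw [sub_mul, Matrix.trace_sub, h1, h2, Matrix.sub_apply]

end

variable [DecidableEq ι]

/-- The derivation acting on the generic matrix `X` as the commutator `[E i j, X]`. -/
def commDer (i j : ι) : Derivation ℂ (EntryPoly ι) (EntryPoly ι) :=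
  MvPolynomial.mkDerivation ℂ fun s =>
    (if s.1 = i then MvPolynomial.X (j, s.2) else 0) -
      (if s.2 = j then MvPolynomial.X (s.1, i) else 0)

lemma commDer_X (i j : ι) (s : ι × ι) : commDer i j (MvPolynomial.X s) =
    (if s.1 = i then MvPolynomial.X (j, s.2) else 0) -
      (if s.2 = j then MvPolynomial.X (s.1, i) else 0) := by
  simp [commDer]

lemma commDer_comm (i j k l : ι) (f : EntryPoly ι) :
    commDer i j (commDer k l f) - commDer k l (commDer i j f) =
      (if i = l then commDer k j f else 0) - (if k = j then commDer i l f else 0) := by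
  have h : ⁅commDer i j, commDer k l⁆ =
      (if i = l then commDer k j else 0) - (if k = j then commDer i l else 0) := by
    refine MvPolynomial.derivation_ext fun s => ?_
    obtain ⟨a, b⟩ := s
    rw [Derivation.commutator_apply, commDer_X, commDer_X, Derivation.sub_apply]
    simp only [map_sub, apply_ite (commDer i j), apply_ite (commDer k l), commDer_X, map_zero,
      apply_ite (fun δ : Derivation ℂ (EntryPoly ι) (EntryPoly ι) => δ (MvPolynomial.X (a, b))),
      Derivation.zero_apply]
    split_ifs <;> subst_vars <;> first | contradiction | abel
  have h' := congrArg (fun δ : Derivation ℂ (EntryPoly ι) (EntryPoly ι) => δ f) h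
  simp only [Derivation.commutator_apply, Derivation.sub_apply] at h'
  rw [h']
  split_ifs <;> simp

variable [Fintype ι]

lemma sum_commDer_diag (f : EntryPoly ι) : ∑ i, commDer i i f = 0 := by
  have hs : ∀ f : EntryPoly ι, (∑ i, commDer (ι := ι) i i) f = ∑ i, commDer i i f := fun f => by
    rw [← Derivation.coeFnAddMonoidHom_apply, map_sum, Finset.sum_apply]; rfl
  have h : ∑ i, commDer (ι := ι) i i = 0 := by
    refine MvPolynomial.derivation_ext fun s => ?_
    rw [hs, Derivation.zero_apply]
    simp [commDer_X, Finset.sum_sub_distrib]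
  rw [← hs, h, Derivation.zero_apply]

/-- Every polynomial lies in a finite-dimensional subspace stable under all `commDer i j`. -/
lemma exists_stable_submodule (f : EntryPoly ι) :
    ∃ P : Submodule ℂ (EntryPoly ι), P.FG ∧ f ∈ P ∧ ∀ i j, ∀ g ∈ P, commDer i j g ∈ P := by
  induction f using MvPolynomial.induction_on with
  | C a =>
    refine ⟨Submodule.span ℂ {1}, Submodule.fg_span_singleton _, ?_, ?_⟩
    · rw [Submodule.mem_span_singleton]
      exact ⟨a, by simp [MvPolynomial.smul_eq_C_mul]⟩
    · intro i j g hg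
      obtain ⟨c, rfl⟩ := Submodule.mem_span_singleton.mp hg
      simp
  | add p q hp hq =>
    obtain ⟨P, hP, hpP, hPs⟩ := hp
    obtain ⟨Q, hQ, hqQ, hQs⟩ := hq
    refine ⟨P ⊔ Q, hP.sup hQ, Submodule.add_mem_sup hpP hqQ, ?_⟩
    intro i j g hg
    obtain ⟨y, hy, z, hz, rfl⟩ := Submodule.mem_sup.mp hg
    rw [map_add]
    exact Submodule.add_mem_sup (hPs _ _ _ hy) (hQs _ _ _ hz)
  | mul_X p s hp =>
    obtain ⟨P, hP, hpP, hPs⟩ := hp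
    let S : Submodule ℂ (EntryPoly ι) := Submodule.span ℂ (Set.range MvPolynomial.X)
    have hS : ∀ s, (MvPolynomial.X s : EntryPoly ι) ∈ S := fun s =>
      Submodule.subset_span ⟨s, rfl⟩
    have hSs : ∀ i j, ∀ g ∈ S, commDer i j g ∈ S := by
      intro i j g hg
      induction hg using Submodule.span_induction with
      | mem x hx =>
        obtain ⟨s, rfl⟩ := hx
        rw [commDer_X]
        refine S.sub_mem ?_ ?_ <;> split_ifs <;> simp [hS]
      | zero => simp
      | add x y _ _ hx hy => rw [map_add]; exact S.add_mem hx hy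
      | smul a x _ hx => rw [Derivation.map_smul]; exact S.smul_mem _ hx
    refine ⟨P * S, hP.mul (Submodule.fg_span (Set.finite_range _)),
      Submodule.mul_mem_mul hpP (hS s), ?_⟩
    intro i j g hg
    refine Submodule.mul_induction_on hg (fun x hx y hy => ?_) fun x y hx hy => ?_
    · rw [Derivation.leibniz, smul_eq_mul, smul_eq_mul, mul_comm y]
      exact add_mem (Submodule.mul_mem_mul hx (hSs _ _ _ hy))
        (Submodule.mul_mem_mul (hPs _ _ _ hx) hy)
    · rw [map_add]; exact add_mem hx hy

lemma gen_map_commDer (i j : ι) : (gen ι).map (commDer i j) =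
    Matrix.single i j 1 * gen ι - gen ι * Matrix.single i j 1 := by
  ext k l : 2
  have h1 : (Matrix.single i j 1 * gen ι : Matrix ι ι (EntryPoly ι)) k l =
      if k = i then MvPolynomial.X (j, l) else 0 := by
    split_ifs with h
    · subst h; simp [gen]
    · rw [Matrix.single_mul_apply_of_ne _ _ _ _ _ h]
  have h2 : (gen ι * Matrix.single i j 1 : Matrix ι ι (EntryPoly ι)) k l =
      if l = j then MvPolynomial.X (k, i) else 0 := by
    split_ifs with h
    · subst h; simp [gen]
    · rw [Matrix.mul_single_apply_of_ne _ _ _ _ _ h]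
  rw [Matrix.sub_apply, h1, h2, Matrix.map_apply, gen, commDer_X]

lemma constMat_map_commDer (i j : ι) (B : Matrix ι ι ℂ) : (constMat B).map (commDer i j) = 0 := by
  ext k l; simp [constMat]

/-- Polynomial matrices transforming by commutators, such as polynomials in the generic matrix. -/
def IsEquivariant (Φ : Matrix ι ι (EntryPoly ι)) : Prop :=
  ∀ i j, Φ.map (commDer i j) = Matrix.single i j 1 * Φ - Φ * Matrix.single i j 1

lemma isEquivariant_gen : IsEquivariant (gen ι) := gen_map_commDer

lemma isEquivariant_one : IsEquivariant (1 : Matrix ι ι (EntryPoly ι)) := fun i j => by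
  rw [map_derivation_one]; simp

lemma IsEquivariant.mul {Φ Ψ : Matrix ι ι (EntryPoly ι)} (h : IsEquivariant Φ)
    (h' : IsEquivariant Ψ) : IsEquivariant (Φ * Ψ) := fun i j => by
  rw [map_derivation_mul, h, h']; noncomm_ring

lemma IsEquivariant.sub {Φ Ψ : Matrix ι ι (EntryPoly ι)} (h : IsEquivariant Φ)
    (h' : IsEquivariant Ψ) : IsEquivariant (Φ - Ψ) := fun i j => by
  have : (Φ - Ψ).map (commDer i j) = Φ.map (commDer i j) - Ψ.map (commDer i j) := by
    ext; simp
  rw [this, h, h']; noncomm_ring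

lemma IsEquivariant.smul {Φ : Matrix ι ι (EntryPoly ι)} (h : IsEquivariant Φ) (c : ℂ) :
    IsEquivariant (c • Φ) := fun i j => by
  have : (c • Φ).map (commDer i j) = c • Φ.map (commDer i j) := by
    ext k l : 2; simp
  rw [this, h, smul_sub]; simp

end MatrixDerivation

section UnitaryHaar

open scoped Matrix.Norms.L2Operator

variable {ι : Type*} [Fintype ι] [DecidableEq ι]

/-- The unitary group of complex matrices indexed by `ι`. -/
abbrev UMat (ι : Type*) [Fintype ι] [DecidableEq ι] := unitary (Matrix ι ι ℂ)

instance : BorelSpace (Matrix ι ι ℂ) := inferInstanceAs (BorelSpace (ι → ι → ℂ))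

instance : SecondCountableTopology (Matrix ι ι ℂ) :=
  inferInstanceAs (SecondCountableTopology (ι → ι → ℂ))

instance : CompactSpace (UMat ι) := by
  refine isCompact_iff_compactSpace.mp
    (?_ : IsCompact (unitary (Matrix ι ι ℂ) : Set (Matrix ι ι ℂ)))
  have hcl : IsClosed (unitary (Matrix ι ι ℂ) : Set (Matrix ι ι ℂ)) := by
    have : (unitary (Matrix ι ι ℂ) : Set (Matrix ι ι ℂ)) =
        {U | star U * U = 1} ∩ {U | U * star U = 1} := by
      ext U; simp [Unitary.mem_iff]
    rw [this]
    exact (isClosed_eq (by fun_prop) continuous_const).inter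
      (isClosed_eq (by fun_prop) continuous_const)
  have : ProperSpace (Matrix ι ι ℂ) := FiniteDimensional.proper ℂ _
  refine Metric.isCompact_of_isClosed_isBounded hcl ?_
  rcases subsingleton_or_nontrivial (Matrix ι ι ℂ) with h | h
  · exact (Set.toFinite _).isBounded
  · refine (Metric.isBounded_closedBall (x := 0) (r := 1)).subset fun U hU => ?_
    rw [mem_closedBall_zero_iff, CStarRing.norm_of_mem_unitary hU]

instance : BorelSpace (UMat ι) := Subtype.borelSpace _

/-- The Haar probability measure on the unitary group. -/
def haarU (ι : Type*) [Fintype ι] [DecidableEq ι] : Measure (UMat ι) :=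
  Measure.haarMeasure ⊤

instance : (haarU ι).IsHaarMeasure := inferInstanceAs (Measure.haarMeasure ⊤).IsHaarMeasure

instance : IsProbabilityMeasure (haarU ι) := ⟨by
  have := Measure.haarMeasure_self (G := UMat ι) (K₀ := ⊤)
  simpa [haarU] using this⟩

/-- The conjugate of a matrix by a unitary. -/
def orb (D : Matrix ι ι ℂ) (V : UMat ι) : Matrix ι ι ℂ := V * D * star (V : Matrix ι ι ℂ)

@[fun_prop]
lemma continuous_orb (D : Matrix ι ι ℂ) : Continuous (orb D) := by
  unfold orb; fun_prop

lemma orb_mul (D : Matrix ι ι ℂ) (W V : UMat ι) :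
    orb D (W * V) = W * orb D V * star (W : Matrix ι ι ℂ) := by
  simp [orb, mul_assoc]

lemma continuous_evalAt (f : EntryPoly ι) : Continuous fun x : Matrix ι ι ℂ => evalAt x f := by
  have : (fun x : Matrix ι ι ℂ => evalAt x f) =
      (fun v => MvPolynomial.eval v f) ∘ fun x (s : ι × ι) => x s.1 s.2 := by
    ext x; simp [evalAt, MvPolynomial.aeval_eq_eval]
  rw [this]
  exact (MvPolynomial.continuous_eval f).comp (by fun_prop)

lemma integrable_haarU {f : UMat ι → ℂ} (hf : Continuous f) : Integrable f (haarU ι) :=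
  hf.integrable_of_hasCompactSupport (HasCompactSupport.of_compactSpace f)

/-- The one-parameter group generated by a skew-Hermitian matrix. -/
def expU (A : skewAdjoint (Matrix ι ι ℂ)) (t : ℝ) : UMat ι :=
  ⟨NormedSpace.exp (t • (A : Matrix ι ι ℂ)), by
    let : NormedAlgebra ℚ (Matrix ι ι ℂ) := NormedAlgebra.restrictScalars ℚ ℂ _
    exact NormedSpace.exp_mem_unitary_of_mem_skewAdjoint (t • A).2⟩

lemma hasDerivAt_orb_expU (A : skewAdjoint (Matrix ι ι ℂ)) (D : Matrix ι ι ℂ) (V : UMat ι)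
    (t : ℝ) : HasDerivAt (fun t => orb D (expU A t * V))
      ((A : Matrix ι ι ℂ) * orb D (expU A t * V) - orb D (expU A t * V) * A) t := by
  have hA : star (A : Matrix ι ι ℂ) = -A := A.2
  have h1 : HasDerivAt (fun t : ℝ => NormedSpace.exp (t • (A : Matrix ι ι ℂ)))
      (A * NormedSpace.exp (t • (A : Matrix ι ι ℂ))) t := hasDerivAt_exp_smul_const' _ t
  have h2 : HasDerivAt (fun t : ℝ => star (NormedSpace.exp (t • (A : Matrix ι ι ℂ))))
      (star (NormedSpace.exp (t • (A : Matrix ι ι ℂ))) * -A) t := by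
    have := h1.star
    rwa [star_mul, hA] at this
  have h3 := (h1.mul_const (orb D V)).mul h2
  have h4 : ∀ t, orb D (expU A t * V) = NormedSpace.exp (t • (A : Matrix ι ι ℂ)) * orb D V *
      star (NormedSpace.exp (t • (A : Matrix ι ι ℂ))) := fun t => orb_mul _ _ _
  rw [funext h4, h4]
  exact h3.congr_deriv (by noncomm_ring)

/-- The linear combination of the `commDer i j` with coefficients the entries of `A`. -/
def dirDer (A : Matrix ι ι ℂ) (f : EntryPoly ι) : EntryPoly ι := ∑ i, ∑ j, A i j • commDer i j f

lemma hasDerivAt_evalAt {x : ℝ → Matrix ι ι ℂ} {A : Matrix ι ι ℂ} {t : ℝ}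
    (hx : HasDerivAt x (A * x t - x t * A) t) (f : EntryPoly ι) :
    HasDerivAt (fun t => evalAt (x t) f) (evalAt (x t) (dirDer A f)) t := by
  induction f using MvPolynomial.induction_on with
  | C a =>
    simp only [dirDer, MvPolynomial.derivation_C, smul_zero, Finset.sum_const_zero, map_zero]
    simpa [evalAt] using hasDerivAt_const t a
  | add p q hp hq =>
    have : dirDer A (p + q) = dirDer A p + dirDer A q := by
      simp [dirDer, Finset.sum_add_distrib]
    simp only [map_add, this]
    exact hp.add hq
  | mul_X p s hp =>
    have hL : dirDer A (p * MvPolynomial.X s) =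
        dirDer A p * MvPolynomial.X s + p * dirDer A (MvPolynomial.X s) := by
      simp only [dirDer, Derivation.leibniz, smul_eq_mul, Finset.sum_mul, Finset.mul_sum,
        ← Finset.sum_add_distrib]
      refine Finset.sum_congr rfl fun i _ => Finset.sum_congr rfl fun j _ => ?_
      simp only [smul_add, MvPolynomial.smul_eq_C_mul]; ring
    have hX : evalAt (x t) (dirDer A (MvPolynomial.X s)) = (A * x t - x t * A) s.1 s.2 := by
      simp only [dirDer, commDer_X, map_sum, map_smul, map_sub, apply_ite (evalAt (x t)),
        evalAt_X, map_zero, smul_eq_mul, mul_sub, mul_ite, mul_zero, Finset.sum_sub_distrib,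
        Finset.sum_ite_eq, Finset.sum_ite_irrel, Finset.sum_const_zero,
        Finset.mem_univ, if_true, Matrix.sub_apply, Matrix.mul_apply]
      congr 1
      exact Finset.sum_congr rfl fun _ _ => mul_comm _ _
    have hs : HasDerivAt (fun t => x t s.1 s.2) ((A * x t - x t * A) s.1 s.2) t :=
      hasDerivAt_pi.mp (hasDerivAt_pi.mp hx s.1) s.2
    simp only [hL, map_add, map_mul, evalAt_X, hX]
    exact hp.mul hs

end UnitaryHaar

section HaarExpectation

open scoped Matrix.Norms.L2Operator InnerProductSpace ComplexConjugate

variable {ι : Type*} [Fintype ι] [DecidableEq ι]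

lemma expU_zero (A : skewAdjoint (Matrix ι ι ℂ)) : expU A 0 = 1 := by
  ext1; simp [expU]

lemma integral_mul_left_haarU (W : UMat ι) (h : UMat ι → ℂ) :
    ∫ V, h (W * V) ∂haarU ι = ∫ V, h V ∂haarU ι :=
  integral_mul_left_eq_self h W

lemma integral_flow_deriv_eq_zero (A : skewAdjoint (Matrix ι ι ℂ)) {h h' : UMat ι → ℂ}
    (hc : Continuous h) (hc' : Continuous h')
    (hd : ∀ V t, HasDerivAt (fun t => h (expU A t * V)) (h' (expU A t * V)) t) :
    ∫ V, h' V ∂haarU ι = 0 := by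
  obtain ⟨C, hC⟩ := (isCompact_range hc').isBounded.exists_norm_le
  have key := hasDerivAt_integral_of_dominated_loc_of_deriv_le (μ := haarU ι) (x₀ := (0 : ℝ))
    (s := Set.univ) (F := fun t V => h (expU A t * V)) (F' := fun t V => h' (expU A t * V))
    (bound := fun _ => C) Filter.univ_mem
    (Eventually.of_forall fun t => (hc.comp (continuous_const_mul _)).aestronglyMeasurable)
    (integrable_haarU (hc.comp (continuous_const_mul _)))
    (hc'.comp (continuous_const_mul _)).aestronglyMeasurable
    (Eventually.of_forall fun V t _ => hC _ ⟨_, rfl⟩) (integrable_const _)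
    (Eventually.of_forall fun V t _ => hd V t)
  have h2 := key.2
  simp only [integral_mul_left_haarU, expU_zero, one_mul] at h2
  exact h2.unique (hasDerivAt_const _ _)

/-- The expectation of a polynomial in the entries of a Haar-random conjugate of `D`. -/
def haarE (D : Matrix ι ι ℂ) : EntryPoly ι →ₗ[ℂ] ℂ where
  toFun f := ∫ V, evalAt (orb D V) f ∂haarU ι
  map_add' f g := by
    simp only [map_add]
    exact integral_add (integrable_haarU ((continuous_evalAt f).comp (continuous_orb D)))
      (integrable_haarU ((continuous_evalAt g).comp (continuous_orb D)))
  map_smul' c f := by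
    simp only [map_smul, smul_eq_mul, RingHom.id_apply]
    exact integral_const_mul _ _

lemma haarE_apply (D : Matrix ι ι ℂ) (f : EntryPoly ι) :
    haarE D f = ∫ V, evalAt (orb D V) f ∂haarU ι := rfl

@[fun_prop]
lemma continuous_evalAt_orb (D : Matrix ι ι ℂ) (f : EntryPoly ι) :
    Continuous fun V => evalAt (orb D V) f := (continuous_evalAt f).comp (continuous_orb D)

lemma integral_conj_dirDer_skew (D : Matrix ι ι ℂ) (A : skewAdjoint (Matrix ι ι ℂ))
    (f g : EntryPoly ι) :
    ∫ V, conj (evalAt (orb D V) f) * evalAt (orb D V) (dirDer A g) ∂haarU ι =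
      ∫ V, conj (evalAt (orb D V) (dirDer (star (A : Matrix ι ι ℂ)) f)) *
        evalAt (orb D V) g ∂haarU ι := by
  have hA : star (A : Matrix ι ι ℂ) = -A := A.2
  have hneg : dirDer (star (A : Matrix ι ι ℂ)) f = -dirDer (A : Matrix ι ι ℂ) f := by
    rw [hA]; simp [dirDer]
  rw [hneg, ← sub_eq_zero, ← integral_sub (integrable_haarU (by fun_prop))
    (integrable_haarU (by fun_prop))]
  refine integral_flow_deriv_eq_zero A (h := fun V => conj (evalAt (orb D V) f) *
    evalAt (orb D V) g) (by fun_prop) (by fun_prop) fun V t => ?_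
  have hx := hasDerivAt_orb_expU A D V t
  have := (hasDerivAt_evalAt hx f).star.mul (hasDerivAt_evalAt hx g)
  refine this.congr_deriv ?_
  simp only [map_neg, neg_mul, sub_neg_eq_add, starRingEnd_apply]
  ring

lemma integral_conj_dirDer (D A : Matrix ι ι ℂ) (f g : EntryPoly ι) :
    ∫ V, conj (evalAt (orb D V) f) * evalAt (orb D V) (dirDer A g) ∂haarU ι =
      ∫ V, conj (evalAt (orb D V) (dirDer (star A) f)) * evalAt (orb D V) g ∂haarU ι := by
  have hadd : ∀ (A B : Matrix ι ι ℂ) (f : EntryPoly ι),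
      dirDer (A + B) f = dirDer A f + dirDer B f := by
    intro A B f; simp [dirDer, add_smul, Finset.sum_add_distrib]
  have hsmul : ∀ (c : ℂ) (A : Matrix ι ι ℂ) (f : EntryPoly ι),
      dirDer (c • A) f = c • dirDer A f := by
    intro c A f; simp [dirDer, smul_smul, Finset.smul_sum]
  let S : skewAdjoint (Matrix ι ι ℂ) := ⟨(2⁻¹ : ℂ) • (A - star A), by
    rw [skewAdjoint.mem_iff]; simp [← smul_neg]⟩
  let T : skewAdjoint (Matrix ι ι ℂ) := ⟨(-Complex.I * 2⁻¹) • (A + star A), by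
    rw [skewAdjoint.mem_iff]; simp [add_comm, ← neg_smul]⟩
  have hAST : A = (S : Matrix ι ι ℂ) + Complex.I • (T : Matrix ι ι ℂ) := by
    simp only [S, T, smul_smul]
    rw [← mul_assoc, show Complex.I * -Complex.I = 1 by simp, one_mul, ← smul_add]
    rw [show A - star A + (A + star A) = (2 : ℂ) • A by rw [two_smul]; abel, smul_smul]
    simp
  have h1 := integral_conj_dirDer_skew D S f g
  have h2 := integral_conj_dirDer_skew D T f g
  rw [hAST]
  simp only [hadd, hsmul, star_add, star_smul, map_add, map_smul, smul_eq_mul, mul_add, add_mul,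
    map_mul]
  rw [integral_add (integrable_haarU (by fun_prop)) (integrable_haarU (by fun_prop)),
    integral_add (integrable_haarU (by fun_prop)) (integrable_haarU (by fun_prop)), h1]
  congr 1
  have e1 : ∀ V, conj (evalAt (orb D V) f) * (Complex.I * evalAt (orb D V) (dirDer (T : Matrix ι ι ℂ) g)) =
      Complex.I * (conj (evalAt (orb D V) f) * evalAt (orb D V) (dirDer (T : Matrix ι ι ℂ) g)) := fun V => by ring
  simp only [e1, mul_assoc, integral_const_mul, h2]
  simp

lemma dirDer_single (i j : ι) (f : EntryPoly ι) :
    dirDer (Matrix.single i j 1) f = commDer i j f := by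
  rw [dirDer, Finset.sum_eq_single i, Finset.sum_eq_single j]
  · simp
  · intro b _ hb; simp [Matrix.single, hb.symm]
  · simp
  · intro b _ hb
    refine Finset.sum_eq_zero fun c _ => ?_
    simp [Matrix.single, hb.symm]
  · simp

lemma integral_conj_commDer (D : Matrix ι ι ℂ) (i j : ι) (f g : EntryPoly ι) :
    ∫ V, conj (evalAt (orb D V) f) * evalAt (orb D V) (commDer i j g) ∂haarU ι =
      ∫ V, conj (evalAt (orb D V) (commDer j i f)) * evalAt (orb D V) g ∂haarU ι := by
  have := integral_conj_dirDer D (Matrix.single i j 1) f g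
  rwa [dirDer_single, Matrix.star_eq_conjTranspose, Matrix.conjTranspose_single, star_one,
    dirDer_single] at this

lemma haarE_commDer (D : Matrix ι ι ℂ) (i j : ι) (f : EntryPoly ι) :
    haarE D (commDer i j f) = 0 := by
  have := integral_conj_commDer D i j 1 f
  simpa [haarE_apply] using this

lemma mul_star_self_of_norm_eq_one {z : ℂ} (hz : ‖z‖ = 1) : z * star z = 1 := by
  have := Complex.mul_conj z
  rw [Complex.normSq_eq_norm_sq, hz] at this
  simpa using this

lemma smul_mem_unitary_of_norm_eq_one {z : ℂ} (hz : ‖z‖ = 1) (W : UMat ι) :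
    z • (W : Matrix ι ι ℂ) ∈ unitary (Matrix ι ι ℂ) := by
  have hzz := mul_star_self_of_norm_eq_one hz
  rw [Unitary.mem_iff, star_smul, smul_mul_smul_comm, smul_mul_smul_comm, hzz, mul_comm, hzz,
    one_smul, one_smul]
  exact Unitary.mem_iff.mp W.2

lemma exists_phase_norm_sub_one_lt_two (W : UMat ι) :
    ∃ z : ℂ, ‖z‖ = 1 ∧ ‖z • (W : Matrix ι ι ℂ) - 1‖ < 2 := by
  rcases isEmpty_or_nonempty ι with h | h
  · refine ⟨1, by simp, ?_⟩
    rw [Subsingleton.elim ((1 : ℂ) • (W : Matrix ι ι ℂ) - 1) 0]; simp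
  have hfin : (spectrum ℂ (W : Matrix ι ι ℂ)).Finite := Matrix.finite_spectrum _
  have hinf : (Metric.sphere (0 : ℂ) 1).Infinite := by
    intro hf
    have h1 : Set.InjOn (fun k : ℕ => Complex.exp ((k : ℂ) * Complex.I)) Set.univ := by
      intro a _ b _ hab
      simp only at hab
      rw [Complex.exp_eq_exp_iff_exists_int] at hab
      obtain ⟨m, hm⟩ := hab
      have h2 : (a : ℂ) = b + m * (2 * Real.pi) := by
        have := congrArg (· * -Complex.I) hm
        simp only [add_mul, mul_assoc, mul_neg, Complex.I_mul_I] at this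
        linear_combination (norm := (push_cast; simp; ring)) this
      have h3 : (a : ℝ) = b + m * (2 * Real.pi) := by exact_mod_cast h2
      by_contra hne
      have hm0 : m ≠ 0 := by
        rintro rfl
        apply hne
        simp at h3; exact_mod_cast h3
      apply irrational_pi.ne_rat (((a : ℚ) - b) / (2 * m))
      push_cast
      have : (m : ℝ) ≠ 0 := by exact_mod_cast hm0
      field_simp
      linarith
    refine Set.infinite_univ (α := ℕ) (Set.Finite.of_finite_image (hf.subset ?_) h1)
    rintro _ ⟨k, _, rfl⟩
    have := Complex.norm_exp_ofReal_mul_I k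
    simpa using this
  obtain ⟨w, hw, hws⟩ := (hinf.sdiff hfin).nonempty
  have hw1 : ‖w‖ = 1 := by simpa using hw
  have hw0 : w ≠ 0 := by intro h; simp [h] at hw1
  refine ⟨-w⁻¹, by simp [hw1], ?_⟩
  have hu := smul_mem_unitary_of_norm_eq_one (z := -w⁻¹) (by simp [hw1]) W
  rw [Unitary.norm_sub_one_lt_two_iff hu]
  intro hmem
  apply hws
  have h3 : (-w⁻¹) • (W : Matrix ι ι ℂ) = (Units.mk0 (-w⁻¹) (by simpa using hw0)) •
    (W : Matrix ι ι ℂ) := rfl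
  rw [h3, spectrum.unit_smul_eq_smul] at hmem
  obtain ⟨y, hy, hy2⟩ := hmem
  have : y = w := by
    have h4 : -w⁻¹ * y = -1 := hy2
    field_simp at h4
    linear_combination -h4
  rwa [← this]

lemma evalAt_orb_eq_of_commDer_eq_zero (D : Matrix ι ι ℂ) (g : EntryPoly ι)
    (hg : ∀ i j V, evalAt (orb D V) (commDer i j g) = 0) (W : UMat ι) :
    evalAt (orb D W) g = evalAt D g := by
  obtain ⟨z, hz, hlt⟩ := exists_phase_norm_sub_one_lt_two W
  have hzz : z * star z = 1 := mul_star_self_of_norm_eq_one hz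
  have hu := smul_mem_unitary_of_norm_eq_one hz W
  let U : UMat ι := ⟨_, hu⟩
  have hU : orb D U = orb D W := by
    simp only [orb, U, star_smul]
    rw [smul_mul_assoc, smul_mul_smul_comm, hzz, one_smul]
  have hexp := expUnitary_argSelfAdjoint (u := U) hlt
  let A : skewAdjoint (Matrix ι ι ℂ) := ⟨Complex.I • (Unitary.argSelfAdjoint U : Matrix ι ι ℂ), by
    rw [skewAdjoint.mem_iff, star_smul, (Unitary.argSelfAdjoint U).2.star_eq]; simp⟩
  have hA : expU A 1 = U := by
    rw [← hexp]; ext1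
    simp [expU, A, selfAdjoint.expUnitary]
  have hconst : ∀ t : ℝ, HasDerivAt (fun t => evalAt (orb D (expU A t * 1)) g) 0 t := by
    intro t
    refine (hasDerivAt_evalAt (hasDerivAt_orb_expU A D 1 t) g).congr_deriv ?_
    simp [dirDer, hg]
  have h01 := is_const_of_deriv_eq_zero (fun t => (hconst t).differentiableAt)
    (fun t => (hconst t).deriv) 1 0
  simp only [hA, mul_one, expU_zero, hU] at h01
  rw [h01]; simp [orb]

/-- The class in `L²` of a polynomial in the entries of a Haar-random conjugate of `D`. -/
def orbLp (D : Matrix ι ι ℂ) : EntryPoly ι →ₗ[ℂ] Lp ℂ 2 (haarU ι) where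
  toFun f := ContinuousMap.toLp 2 (haarU ι) ℂ ⟨fun V => evalAt (orb D V) f, by fun_prop⟩
  map_add' f g := by
    rw [← map_add]; congr 1; ext V; simp
  map_smul' c f := by
    rw [RingHom.id_apply, ← map_smul]; congr 1; ext V; simp

lemma inner_orbLp (D : Matrix ι ι ℂ) (f g : EntryPoly ι) : ⟪orbLp D f, orbLp D g⟫_ℂ =
    ∫ V, conj (evalAt (orb D V) f) * evalAt (orb D V) g ∂haarU ι := by
  refine (MeasureTheory.ContinuousMap.inner_toLp (haarU ι) _ _).trans ?_
  simp [mul_comm]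

lemma norm_sq_orbLp (D : Matrix ι ι ℂ) (f : EntryPoly ι) : ‖orbLp D f‖ ^ 2 =
    ∫ V, ‖evalAt (orb D V) f‖ ^ 2 ∂haarU ι := by
  have h := inner_orbLp D f f
  simp only [inner_self_eq_norm_sq_to_K, ← Complex.normSq_eq_conj_mul_self,
    Complex.normSq_eq_norm_sq] at h
  rw [integral_complex_ofReal] at h
  refine Complex.ofReal_injective (Eq.trans ?_ h)
  simp

/-- Poincaré inequality on the orbit of `D` under unitary conjugation. -/
theorem variance_le [Nonempty ι] (D : Matrix ι ι ℂ) (f : EntryPoly ι) :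
    ∫ V, ‖evalAt (orb D V) f - haarE D f‖ ^ 2 ∂haarU ι ≤
      2 / (Fintype.card ι : ℝ) *
        ∑ i, ∑ j, ∫ V, ‖evalAt (orb D V) (commDer i j f)‖ ^ 2 ∂haarU ι := by
  set f₀ : EntryPoly ι := f - MvPolynomial.C (haarE D f) with hf₀
  have hd : ∀ i j, commDer i j f₀ = commDer i j f := fun i j => by simp [hf₀]
  obtain ⟨P, hP, hfP, hPs⟩ := exists_stable_submodule f₀
  have : FiniteDimensional ℂ P := Module.Finite.iff_fg.mpr hP
  let Dp : ι → ι → P →ₗ[ℂ] P := fun i j =>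
    (commDer i j).toLinearMap.restrict fun g hg => hPs i j g hg
  let ψ : P →ₗ[ℂ] Lp ℂ 2 (haarU ι) := orbLp D ∘ₗ P.subtype
  have hψ : ∀ g : P, ψ g = orbLp D g := fun g => rfl
  have hDp : ∀ i j (g : P), ((Dp i j g : P) : EntryPoly ι) = commDer i j g := fun i j g => rfl
  have hact : MatrixUnitAction ψ Dp := by
    refine ⟨fun i j f g => ?_, fun i j k l f => ?_, fun f => ?_⟩
    · simp only [hψ, hDp, inner_orbLp]
      exact integral_conj_commDer D i j f g
    · ext1
      have := commDer_comm i j k l (f : EntryPoly ι)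
      rw [Submodule.coe_sub, Submodule.coe_sub]
      simp only [hDp, this]
      split_ifs <;> simp [hDp]
    · ext1
      simp [hDp, sum_commDer_diag]
  have hmean : ∫ V, evalAt (orb D V) f₀ ∂haarU ι = 0 := by
    rw [← haarE_apply, hf₀, map_sub, sub_eq_zero]
    simp [haarE_apply, evalAt]
  have key := hact.norm_sq_le ⟨f₀, hfP⟩ (by
    intro g hg
    have hg' : ∀ i j V, evalAt (orb D V) (commDer i j (g : EntryPoly ι)) = 0 := by
      intro i j V
      have h1 : orbLp D (commDer i j (g : EntryPoly ι)) = 0 := hg i j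
      have h2 := (ContinuousMap.toLp_injective (p := 2) (𝕜 := ℂ) (haarU ι)) (h1.trans (map_zero _).symm)
      exact congrArg (fun φ : C(UMat ι, ℂ) => φ V) h2
    have hc := evalAt_orb_eq_of_commDer_eq_zero D g hg'
    simp only [hψ, inner_orbLp, hc]
    rw [integral_const_mul, hmean, mul_zero])
  simp only [hψ, hDp, norm_sq_orbLp, hd] at key
  convert key using 4 with V
  simp [hf₀, evalAt]

end HaarExpectation

section PartialTranspose

variable {n d : ℕ} {R : Type*} [CommRing R]

/-- Partial transposition over a general commutative ring. -/
def ptr (X : Matrix (Fin n × Fin d) (Fin n × Fin d) R) :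
    Matrix (Fin n × Fin d) (Fin n × Fin d) R :=
  fun p q => X (q.1, p.2) (p.1, q.2)

/-- The matrix unit `E a b ⊗ 1`. -/
def blk (a b : Fin n) : Matrix (Fin n × Fin d) (Fin n × Fin d) R :=
  Matrix.single a b 1 ⊗ₖ 1

lemma blk_apply (a b : Fin n) (p q : Fin n × Fin d) :
    (blk a b : Matrix (Fin n × Fin d) (Fin n × Fin d) R) p q =
      if p.1 = a ∧ q = (b, p.2) then 1 else 0 := by
  obtain ⟨p1, p2⟩ := p
  obtain ⟨q1, q2⟩ := q
  simp only [blk, Matrix.kroneckerMap_apply, Matrix.single, Matrix.of_apply, Matrix.one_apply,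
    Prod.mk.injEq]
  by_cases h1 : p1 = a <;> by_cases h2 : q1 = b <;> by_cases h3 : p2 = q2 <;>
    simp [h1, h2, h3, eq_comm] <;> tauto

lemma blk_mul_apply (a b : Fin n) (X : Matrix (Fin n × Fin d) (Fin n × Fin d) R)
    (p q : Fin n × Fin d) : (blk a b * X : Matrix (Fin n × Fin d) (Fin n × Fin d) R) p q =
      if p.1 = a then X (b, p.2) q else 0 := by
  simp only [Matrix.mul_apply, blk_apply, ite_and]
  split_ifs with h <;> simp

lemma mul_blk_apply (a b : Fin n) (X : Matrix (Fin n × Fin d) (Fin n × Fin d) R)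
    (p q : Fin n × Fin d) : (X * blk a b : Matrix (Fin n × Fin d) (Fin n × Fin d) R) p q =
      if q.1 = b then X p (a, q.2) else 0 := by
  rw [Matrix.mul_apply, Finset.sum_eq_single (a, q.2)]
  · obtain ⟨q1, q2⟩ := q
    simp [blk_apply]
  · intro r _ hr
    rw [blk_apply, if_neg, mul_zero]
    rintro ⟨h1, h2⟩
    apply hr
    rw [h2]; ext1
    · exact h1
    · rfl
  · simp

lemma blk_mul_blk (a b c e : Fin n) :
    (blk a b * blk c e : Matrix (Fin n × Fin d) (Fin n × Fin d) R) =
      if b = c then blk a e else 0 := by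
  rw [blk, blk, ← Matrix.mul_kronecker_mul, one_mul]
  split_ifs with h
  · subst h; simp [blk]
  · rw [Matrix.single_mul_single_of_ne _ _ _ _ h]; simp

lemma sum_blk_diag : ∑ a, (blk a a : Matrix (Fin n × Fin d) (Fin n × Fin d) R) = 1 := by
  ext p q
  simp only [Matrix.sum_apply, blk_apply, Matrix.one_apply]
  obtain ⟨p1, p2⟩ := p
  obtain ⟨q1, q2⟩ := q
  simp [ite_and, eq_comm]

lemma ptr_eq_sum (X : Matrix (Fin n × Fin d) (Fin n × Fin d) R) :
    ptr X = ∑ a, ∑ b, blk a b * X * blk a b := by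
  ext p q
  simp only [Matrix.sum_apply, mul_blk_apply, blk_mul_apply, ptr]
  simp

lemma trace_ptr_mul (X Z : Matrix (Fin n × Fin d) (Fin n × Fin d) R) :
    (ptr X * Z).trace = (X * ptr Z).trace := by
  simp only [ptr_eq_sum, Finset.sum_mul, Finset.mul_sum, Matrix.trace_sum]
  refine Finset.sum_congr rfl fun a _ => Finset.sum_congr rfl fun b _ => ?_
  rw [mul_assoc, mul_assoc, Matrix.trace_mul_comm]
  simp only [mul_assoc]

lemma ptr_map {S : Type*} [CommRing S] (f : R → S)
    (X : Matrix (Fin n × Fin d) (Fin n × Fin d) R) : (ptr X).map f = ptr (X.map f) := rfl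

lemma ptr_commutator_blk (a b : Fin n) (X : Matrix (Fin n × Fin d) (Fin n × Fin d) R) :
    ptr (blk a b * X - X * blk a b) = ptr X * blk b a - blk b a * ptr X := by
  ext p q
  simp only [ptr, Matrix.sub_apply, blk_mul_apply, mul_blk_apply]

/-- The partial transpose of the generic matrix. -/
def genY (n d : ℕ) : Matrix (Fin n × Fin d) (Fin n × Fin d) (EntryPoly (Fin n × Fin d)) :=
  ptr (gen _)

/-- The trace of the product of `Φ`, `B`, the `k`-th power of the partial transpose, and a second
constant matrix. -/
def obs (Φ : Matrix (Fin n × Fin d) (Fin n × Fin d) (EntryPoly (Fin n × Fin d)))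
    (B : Matrix (Fin n × Fin d) (Fin n × Fin d) ℂ) (k : ℕ)
    (B' : Matrix (Fin n × Fin d) (Fin n × Fin d) ℂ) : EntryPoly (Fin n × Fin d) :=
  (Φ * constMat B * genY n d ^ k * constMat B').trace

lemma map_commDer_obs_mat {Φ : Matrix (Fin n × Fin d) (Fin n × Fin d) (EntryPoly (Fin n × Fin d))}
    (hΦ : IsEquivariant Φ) (B : Matrix (Fin n × Fin d) (Fin n × Fin d) ℂ) (k : ℕ)
    (B' : Matrix (Fin n × Fin d) (Fin n × Fin d) ℂ) (i j : Fin n × Fin d) :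
    (Φ * constMat B * genY n d ^ k * constMat B').map (commDer i j) =
      (Matrix.single i j 1 * Φ - Φ * Matrix.single i j 1) *
        (constMat B * genY n d ^ k * constMat B') +
      ∑ r ∈ Finset.range k, Φ * constMat B * genY n d ^ r *
        ptr (Matrix.single i j 1 * gen _ - gen _ * Matrix.single i j 1) *
          (genY n d ^ (k - 1 - r) * constMat B') := by
  rw [map_derivation_mul, map_derivation_mul, map_derivation_mul, constMat_map_commDer,
    constMat_map_commDer, map_derivation_pow, hΦ i j]
  simp only [genY, ptr_map, gen_map_commDer, mul_zero, add_zero, add_mul, Finset.mul_sum,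
    Finset.sum_mul, mul_assoc]

lemma commDer_obs {Φ : Matrix (Fin n × Fin d) (Fin n × Fin d) (EntryPoly (Fin n × Fin d))}
    (hΦ : IsEquivariant Φ) (B : Matrix (Fin n × Fin d) (Fin n × Fin d) ℂ) (k : ℕ)
    (B' : Matrix (Fin n × Fin d) (Fin n × Fin d) ℂ) (i j : Fin n × Fin d) :
    commDer i j (obs Φ B k B') =
      ((Φ * (constMat B * genY n d ^ k * constMat B') -
          constMat B * genY n d ^ k * constMat B' * Φ) +
        ∑ r ∈ Finset.range k,
          (gen _ * ptr (genY n d ^ (k - 1 - r) * constMat B' * Φ * constMat B * genY n d ^ r) -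
          ptr (genY n d ^ (k - 1 - r) * constMat B' * Φ * constMat B * genY n d ^ r) * gen _) :
        Matrix (Fin n × Fin d) (Fin n × Fin d) (EntryPoly (Fin n × Fin d))) j i := by
  rw [obs, ← trace_map_derivation, map_commDer_obs_mat hΦ, Matrix.trace_add, Matrix.trace_sum,
    trace_commutator_single_mul, Matrix.add_apply, Matrix.sum_apply]
  congr 1
  refine Finset.sum_congr rfl fun r _ => ?_
  rw [← trace_commutator_single_mul, ← trace_ptr_mul, mul_assoc, Matrix.trace_mul_comm]
  simp only [mul_assoc]

lemma sum_commDer_entry {Φ : Matrix (Fin n × Fin d) (Fin n × Fin d) (EntryPoly (Fin n × Fin d))}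
    (hΦ : IsEquivariant Φ) (B : Matrix (Fin n × Fin d) (Fin n × Fin d) ℂ) (k : ℕ)
    (B' : Matrix (Fin n × Fin d) (Fin n × Fin d) ℂ) :
    ∑ i, ∑ j, commDer i j ((Φ * constMat B * genY n d ^ k * constMat B') i j) =
      ((n * d : ℕ) : EntryPoly (Fin n × Fin d)) * obs Φ B k B' -
        Φ.trace * (constMat B * genY n d ^ k * constMat B').trace +
      ∑ r ∈ Finset.range k, ∑ u : Fin n, ∑ v : Fin n,
        (obs Φ B r (blk u v) * obs (gen _) (blk u v) (k - 1 - r) B' -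
          obs (gen _ * Φ) B r (blk u v) * obs 1 (blk u v) (k - 1 - r) B') := by
  have h0 : ∀ i j, commDer i j ((Φ * constMat B * genY n d ^ k * constMat B') i j) =
      ((Φ * constMat B * genY n d ^ k * constMat B').map (commDer i j)) i j := fun _ _ => rfl
  have hblk : ∀ u v : Fin n, (constMat (blk u v) :
      Matrix (Fin n × Fin d) (Fin n × Fin d) (EntryPoly (Fin n × Fin d))) = blk u v := by
    intro u v; ext p q : 2
    simp only [constMat, Matrix.map_apply, blk_apply]; split_ifs <;> simp
  simp only [h0, map_commDer_obs_mat hΦ, Matrix.add_apply, Finset.sum_add_distrib,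
    Matrix.sum_apply]
  congr 1
  · have := sum_entry_commutator 1 Φ (constMat B * genY n d ^ k * constMat B')
    simp only [one_mul] at this
    rw [this, obs]
    simp [mul_assoc]
  · have hc : ∀ F : Fin n × Fin d → Fin n × Fin d → ℕ → EntryPoly (Fin n × Fin d),
        ∑ i, ∑ j, ∑ r ∈ Finset.range k, F i j r = ∑ r ∈ Finset.range k, ∑ i, ∑ j, F i j r := by
      intro F
      exact (Finset.sum_congr rfl fun i _ => Finset.sum_comm).trans Finset.sum_comm
    rw [hc]
    refine Finset.sum_congr rfl fun r _ => ?_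
    simp only [ptr_eq_sum, Finset.mul_sum, Finset.sum_mul, Matrix.sum_apply]
    have hc' : ∀ F : Fin n × Fin d → Fin n × Fin d → Fin n → Fin n → EntryPoly (Fin n × Fin d),
        ∑ i, ∑ j, ∑ u, ∑ v, F i j u v = ∑ u, ∑ v, ∑ i, ∑ j, F i j u v := by
      intro F
      have e1 := Finset.sum_comm (s := Finset.univ) (t := Finset.univ)
        (f := fun (a : (Fin n × Fin d) × (Fin n × Fin d)) (b : Fin n × Fin n) =>
          F a.1 a.2 b.1 b.2)
      simpa only [Fintype.sum_prod_type (f := fun a : (Fin n × Fin d) × (Fin n × Fin d) => _),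
        Fintype.sum_prod_type (f := fun a : Fin n × Fin n => _)] using e1
    rw [hc']
    refine Finset.sum_congr rfl fun u _ => Finset.sum_congr rfl fun v _ => ?_
    have := sum_entry_commutator (Φ * constMat B * genY n d ^ r * blk u v) (gen _)
      (blk u v * (genY n d ^ (k - 1 - r) * constMat B'))
    have e1 : obs Φ B r (blk u v) = (Φ * constMat B * genY n d ^ r * blk u v).trace := by
      rw [obs, hblk]
    have e2 : obs (gen _) (blk u v) (k - 1 - r) B' =
        (gen _ * (blk u v * (genY n d ^ (k - 1 - r) * constMat B'))).trace := by
      rw [obs, hblk, mul_assoc, mul_assoc]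
    have e3 : obs (gen _ * Φ) B r (blk u v) =
        (Φ * constMat B * genY n d ^ r * blk u v * gen _).trace := by
      rw [obs, hblk, Matrix.trace_mul_comm _ (gen _)]
      simp only [mul_assoc]
    have e4 : obs 1 (blk u v) (k - 1 - r) B' =
        (blk u v * (genY n d ^ (k - 1 - r) * constMat B')).trace := by
      rw [obs, hblk, one_mul, mul_assoc]
    rw [e1, e2, e3, e4, ← this]
    refine Finset.sum_congr rfl fun i _ => Finset.sum_congr rfl fun j _ => ?_
    simp only [mul_assoc]

end PartialTranspose

section HilbertSchmidt

open scoped Matrix.Norms.L2Operator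

variable {ι : Type*} [Fintype ι]

/-- The squared Hilbert-Schmidt norm. -/
def hsSq (X : Matrix ι ι ℂ) : ℝ := ∑ i, ∑ j, ‖X i j‖ ^ 2

lemma hsSq_nonneg (X : Matrix ι ι ℂ) : 0 ≤ hsSq X :=
  Finset.sum_nonneg fun _ _ => Finset.sum_nonneg fun _ _ => sq_nonneg _

lemma hsSq_add_le (X Y : Matrix ι ι ℂ) : hsSq (X + Y) ≤ 2 * hsSq X + 2 * hsSq Y := by
  simp only [hsSq, Finset.mul_sum, ← Finset.sum_add_distrib]
  refine Finset.sum_le_sum fun i _ => Finset.sum_le_sum fun j _ => ?_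
  have h := norm_add_le (X i j) (Y i j)
  have h2 : ‖(X + Y) i j‖ ^ 2 ≤ (‖X i j‖ + ‖Y i j‖) ^ 2 := by
    rw [Matrix.add_apply]; gcongr
  nlinarith [sq_nonneg (‖X i j‖ - ‖Y i j‖)]

lemma hsSq_neg (X : Matrix ι ι ℂ) : hsSq (-X) = hsSq X := by simp [hsSq]

lemma hsSq_sub_le (X Y : Matrix ι ι ℂ) : hsSq (X - Y) ≤ 2 * hsSq X + 2 * hsSq Y := by
  rw [sub_eq_add_neg]
  simpa only [hsSq_neg] using hsSq_add_le X (-Y)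

lemma hsSq_sum_le {κ : Type*} (s : Finset κ) (X : κ → Matrix ι ι ℂ) :
    hsSq (∑ r ∈ s, X r) ≤ s.card * ∑ r ∈ s, hsSq (X r) := by
  have h : ∀ i j, ‖(∑ r ∈ s, X r) i j‖ ^ 2 ≤ s.card * ∑ r ∈ s, ‖X r i j‖ ^ 2 := by
    intro i j
    rw [Matrix.sum_apply]
    refine le_trans ?_ sq_sum_le_card_mul_sum_sq
    gcongr
    exact norm_sum_le _ _
  calc hsSq (∑ r ∈ s, X r) ≤ ∑ i, ∑ j, s.card * ∑ r ∈ s, ‖X r i j‖ ^ 2 :=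
        Finset.sum_le_sum fun i _ => Finset.sum_le_sum fun j _ => h i j
    _ = s.card * ∑ r ∈ s, hsSq (X r) := by
        simp only [← Finset.mul_sum, hsSq]
        congr 1
        exact (Finset.sum_congr rfl fun i _ => Finset.sum_comm).trans Finset.sum_comm

lemma hsSq_conjTranspose (X : Matrix ι ι ℂ) : hsSq Xᴴ = hsSq X := by
  simp only [hsSq, Matrix.conjTranspose_apply, norm_star]
  exact Finset.sum_comm

lemma hsSq_eq_trace (X : Matrix ι ι ℂ) : (hsSq X : ℂ) = (X * Xᴴ).trace := by
  simp only [hsSq, Matrix.trace, Matrix.diag_apply, Matrix.mul_apply, Matrix.conjTranspose_apply,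
    Complex.ofReal_sum]
  refine Finset.sum_congr rfl fun i _ => Finset.sum_congr rfl fun j _ => ?_
  rw [← starRingEnd_apply, Complex.mul_conj, Complex.normSq_eq_norm_sq]

lemma norm_trace_mul_sq_le (X Y : Matrix ι ι ℂ) : ‖(X * Y).trace‖ ^ 2 ≤ hsSq X * hsSq Y := by
  have h : ‖(X * Y).trace‖ ≤ ∑ s : ι × ι, ‖X s.1 s.2‖ * ‖Y s.2 s.1‖ := by
    simp only [Matrix.trace, Matrix.diag_apply, Matrix.mul_apply, Fintype.sum_prod_type]
    refine (norm_sum_le _ _).trans (Finset.sum_le_sum fun i _ => (norm_sum_le _ _).trans ?_)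
    exact Finset.sum_le_sum fun j _ => (norm_mul _ _).le
  calc ‖(X * Y).trace‖ ^ 2 ≤ (∑ s : ι × ι, ‖X s.1 s.2‖ * ‖Y s.2 s.1‖) ^ 2 := by gcongr
    _ ≤ (∑ s : ι × ι, ‖X s.1 s.2‖ ^ 2) * ∑ s : ι × ι, ‖Y s.2 s.1‖ ^ 2 :=
        Finset.sum_mul_sq_le_sq_mul_sq _ _ _
    _ = hsSq X * hsSq Y := by
        simp only [Fintype.sum_prod_type, hsSq]
        rw [Finset.sum_comm (f := fun x x_1 => ‖Y x_1 x‖ ^ 2)]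

@[fun_prop]
lemma continuous_hsSq : Continuous (hsSq : Matrix ι ι ℂ → ℝ) := by
  unfold hsSq; fun_prop

variable [DecidableEq ι]

lemma hsSq_mul_le_left (A X : Matrix ι ι ℂ) : hsSq (A * X) ≤ ‖A‖ ^ 2 * hsSq X := by
  have h : ∀ j, ∑ i, ‖(A * X) i j‖ ^ 2 ≤ ‖A‖ ^ 2 * ∑ i, ‖X i j‖ ^ 2 := by
    intro j
    have := Matrix.l2_opNorm_mulVec A (WithLp.toLp 2 fun i => X i j)
    have h2 := pow_le_pow_left₀ (norm_nonneg _) this 2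
    rw [mul_pow, EuclideanSpace.norm_sq_eq, EuclideanSpace.norm_sq_eq] at h2
    exact h2
  rw [hsSq, hsSq, Finset.sum_comm, Finset.sum_comm (f := fun i j => ‖X i j‖ ^ 2), Finset.mul_sum]
  exact Finset.sum_le_sum fun j _ => h j

lemma hsSq_mul_le_right (X A : Matrix ι ι ℂ) : hsSq (X * A) ≤ ‖A‖ ^ 2 * hsSq X := by
  rw [← hsSq_conjTranspose, Matrix.conjTranspose_mul, ← hsSq_conjTranspose X,
    ← Matrix.l2_opNorm_conjTranspose A]
  exact hsSq_mul_le_left _ _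

lemma hsSq_mul_unitary (X : Matrix ι ι ℂ) (U : UMat ι) : hsSq (X * (U : Matrix ι ι ℂ)) = hsSq X := by
  have : (hsSq (X * (U : Matrix ι ι ℂ)) : ℂ) = hsSq X := by
    rw [hsSq_eq_trace, hsSq_eq_trace, Matrix.conjTranspose_mul, mul_assoc,
      ← mul_assoc (U : Matrix ι ι ℂ), ← Matrix.star_eq_conjTranspose (U : Matrix ι ι ℂ),
      Unitary.mul_star_self_of_mem U.2, one_mul]
  exact_mod_cast this

lemma hsSq_unitary_mul (U : UMat ι) (X : Matrix ι ι ℂ) : hsSq ((U : Matrix ι ι ℂ) * X) = hsSq X := by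
  have : (hsSq ((U : Matrix ι ι ℂ) * X) : ℂ) = hsSq X := by
    rw [hsSq_eq_trace, hsSq_eq_trace, Matrix.conjTranspose_mul, Matrix.trace_mul_comm, mul_assoc,
      ← mul_assoc _ (U : Matrix ι ι ℂ), ← Matrix.star_eq_conjTranspose (U : Matrix ι ι ℂ),
      Unitary.star_mul_self_of_mem U.2, one_mul, Matrix.trace_mul_comm]
  exact_mod_cast this

lemma exists_diagonalization {Y : Matrix ι ι ℂ} (hY : Y.IsHermitian) :
    ∃ (U : UMat ι) (l : ι → ℝ), ∀ k : ℕ, Y ^ k =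
      (U : Matrix ι ι ℂ) * Matrix.diagonal (fun i => (l i : ℂ) ^ k) * star (U : Matrix ι ι ℂ) := by
  refine ⟨hY.eigenvectorUnitary, hY.eigenvalues, fun k => ?_⟩
  conv_lhs => rw [hY.spectral_theorem, ← map_pow, Matrix.diagonal_pow]
  rw [Unitary.conjStarAlgAut_apply]
  rfl

lemma hsSq_pow_mul_pow_le {Y : Matrix ι ι ℂ} (hY : Y.IsHermitian) (G : Matrix ι ι ℂ) (a b : ℕ) :
    hsSq (Y ^ a * G * Y ^ b) ≤ 2 * ‖G‖ ^ 2 * hsSq (Y ^ (a + b)) := by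
  obtain ⟨U, l, hl⟩ := exists_diagonalization hY
  set G' : Matrix ι ι ℂ := star (U : Matrix ι ι ℂ) * G * U with hG'
  have key : ∀ a b : ℕ, hsSq (Y ^ a * G * Y ^ b) =
      ∑ i, ∑ j, (l i ^ 2) ^ a * (l j ^ 2) ^ b * ‖G' i j‖ ^ 2 := by
    intro a b
    have e : Y ^ a * G * Y ^ b = (U : Matrix ι ι ℂ) * (Matrix.diagonal (fun i => (l i : ℂ) ^ a) * G' *
        Matrix.diagonal (fun i => (l i : ℂ) ^ b)) * (star U : UMat ι) := by
      rw [hl, hl, hG', Unitary.coe_star]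
      simp only [mul_assoc]
    rw [e, hsSq_mul_unitary, hsSq_unitary_mul, hsSq]
    refine Finset.sum_congr rfl fun i _ => Finset.sum_congr rfl fun j _ => ?_
    rw [Matrix.mul_diagonal, Matrix.diagonal_mul, norm_mul, norm_mul, norm_pow, norm_pow,
      Complex.norm_real, Complex.norm_real, mul_pow, mul_pow, ← pow_mul, ← pow_mul, mul_comm a,
      mul_comm b, pow_mul, pow_mul, Real.norm_eq_abs, Real.norm_eq_abs, sq_abs, sq_abs]
    ring
  have hxy : ∀ x y : ℝ, 0 ≤ x → 0 ≤ y → x ^ a * y ^ b ≤ x ^ (a + b) + y ^ (a + b) := by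
    intro x y hx hy
    rcases le_total x y with h | h
    · have : x ^ a * y ^ b ≤ y ^ (a + b) := by rw [pow_add]; gcongr
      linarith [pow_nonneg hx (a + b)]
    · have : x ^ a * y ^ b ≤ x ^ (a + b) := by rw [pow_add]; gcongr
      linarith [pow_nonneg hy (a + b)]
  calc hsSq (Y ^ a * G * Y ^ b)
      ≤ hsSq (Y ^ (a + b) * G * Y ^ 0) + hsSq (Y ^ 0 * G * Y ^ (a + b)) := by
        rw [key, key, key, ← Finset.sum_add_distrib]
        refine Finset.sum_le_sum fun i _ => ?_
        rw [← Finset.sum_add_distrib]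
        refine Finset.sum_le_sum fun j _ => ?_
        rw [pow_zero, pow_zero, mul_one, one_mul, ← add_mul]
        gcongr
        exact hxy _ _ (sq_nonneg _) (sq_nonneg _)
    _ ≤ ‖G‖ ^ 2 * hsSq (Y ^ (a + b)) + ‖G‖ ^ 2 * hsSq (Y ^ (a + b)) := by
        rw [pow_zero, mul_one, one_mul]
        exact add_le_add (hsSq_mul_le_right _ _) (hsSq_mul_le_left _ _)
    _ = _ := by ring

lemma hsSq_pow_eq_sum {Y : Matrix ι ι ℂ} {U : UMat ι} {l : ι → ℝ} (hl : ∀ k : ℕ, Y ^ k =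
      (U : Matrix ι ι ℂ) * Matrix.diagonal (fun i => (l i : ℂ) ^ k) * star (U : Matrix ι ι ℂ))
    (k : ℕ) : hsSq (Y ^ k) = ∑ i, (l i) ^ (2 * k) := by
  rw [hl, ← Unitary.coe_star, hsSq_mul_unitary, hsSq_unitary_mul, hsSq]
  refine Finset.sum_congr rfl fun i _ => ?_
  rw [Finset.sum_eq_single i]
  · rw [Matrix.diagonal_apply_eq, norm_pow, Complex.norm_real, Real.norm_eq_abs, ← pow_mul,
      mul_comm k, pow_mul, sq_abs, ← pow_mul]
  · intro j _ hj
    rw [Matrix.diagonal_apply_ne' _ hj]; simp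
  · simp

/-- Interpolation of even spectral moments between order `0` and order `2 p`. -/
lemma hsSq_pow_le {Y : Matrix ι ι ℂ} (hY : Y.IsHermitian) {ρ : ℝ} (hρ : 0 < ρ) {k p : ℕ}
    (hk : k ≤ p) :
    hsSq (Y ^ k) ≤ ρ ^ (2 * k) * (Fintype.card ι + hsSq (Y ^ p) / ρ ^ (2 * p)) := by
  obtain ⟨U, l, hl⟩ := exists_diagonalization hY
  rw [hsSq_pow_eq_sum hl, hsSq_pow_eq_sum hl, Finset.sum_div, ← Finset.card_univ,
    Finset.cast_card, ← Finset.sum_add_distrib, Finset.mul_sum]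
  refine Finset.sum_le_sum fun i _ => ?_
  have h2 : l i ^ (2 * k) = ρ ^ (2 * k) * ((l i / ρ) ^ 2) ^ k := by
    rw [← pow_mul, div_pow]; field_simp
  have h3 : l i ^ (2 * p) / ρ ^ (2 * p) = ((l i / ρ) ^ 2) ^ p := by
    rw [← pow_mul, div_pow]
  rw [h2, h3]
  gcongr
  rcases le_total ((l i / ρ) ^ 2) 1 with h | h
  · linarith [pow_le_one₀ (n := k) (sq_nonneg _) h, pow_nonneg (sq_nonneg (l i / ρ)) p]
  · linarith [pow_le_pow_right₀ h hk]

lemma hsSq_pow_eq_trace {Y : Matrix ι ι ℂ} (hY : Y.IsHermitian) (k : ℕ) :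
    (hsSq (Y ^ k) : ℂ) = (Y ^ (2 * k)).trace := by
  rw [hsSq_eq_trace, Matrix.conjTranspose_pow, hY.eq, ← pow_add, two_mul]

lemma hsSq_ptr {n d : ℕ} (X : Matrix (Fin n × Fin d) (Fin n × Fin d) ℂ) :
    hsSq (ptr X) = hsSq X := by
  simp only [hsSq, ptr, Fintype.sum_prod_type]
  have e1 : ∀ F : Fin n → Fin d → Fin n → Fin d → ℝ,
      ∑ a, ∑ b, ∑ c, ∑ e, F c b a e = ∑ a, ∑ b, ∑ c, ∑ e, F a b c e := by
    intro F
    have h : ∀ G : Fin n → Fin d → Fin n → Fin d → ℝ,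
        ∑ a, ∑ b, ∑ c, ∑ e, G a b c e = ∑ b, ∑ e, ∑ a, ∑ c, G a b c e := by
      intro G
      rw [Finset.sum_comm]
      refine Finset.sum_congr rfl fun b _ => ?_
      exact (Finset.sum_congr rfl fun a _ => Finset.sum_comm).trans Finset.sum_comm
    rw [h, h F]
    exact Finset.sum_congr rfl fun b _ => Finset.sum_congr rfl fun e _ => Finset.sum_comm
  exact e1 fun a b c e => ‖X (a, b) (c, e)‖ ^ 2

end HilbertSchmidt

section Observables

open scoped Matrix.Norms.L2Operator

variable {ι : Type*} [Fintype ι] [DecidableEq ι]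

/-- Evaluation of a polynomial matrix at a matrix. -/
def evM (x : Matrix ι ι ℂ) : Matrix ι ι (EntryPoly ι) →ₐ[ℂ] Matrix ι ι ℂ := (evalAt x).mapMatrix

lemma evM_gen (x : Matrix ι ι ℂ) : evM x (gen ι) = x := map_evalAt_gen x

lemma evM_constMat (x B : Matrix ι ι ℂ) : evM x (constMat B) = B := map_evalAt_constMat x B

lemma evalAt_apply_eq (x : Matrix ι ι ℂ) (M : Matrix ι ι (EntryPoly ι)) (i j : ι) :
    evalAt x (M i j) = evM x M i j := rfl

lemma evalAt_trace (x : Matrix ι ι ℂ) (M : Matrix ι ι (EntryPoly ι)) :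
    evalAt x M.trace = (evM x M).trace := by
  simp [Matrix.trace, evM]

lemma orb_isHermitian {D : Matrix ι ι ℂ} (hD : D.IsHermitian) (V : UMat ι) :
    (orb D V).IsHermitian := by
  rw [orb, Matrix.star_eq_conjTranspose]
  exact Matrix.isHermitian_mul_mul_conjTranspose _ hD

lemma trace_orb (D : Matrix ι ι ℂ) (V : UMat ι) : (orb D V).trace = D.trace := by
  rw [orb, Matrix.trace_mul_comm, ← mul_assoc, Unitary.star_mul_self_of_mem V.2, one_mul]

lemma norm_orb (D : Matrix ι ι ℂ) (V : UMat ι) : ‖orb D V‖ = ‖D‖ := by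
  rw [orb, ← Unitary.coe_star, CStarRing.norm_mul_coe_unitary, CStarRing.norm_coe_unitary_mul]

lemma orb_mul_orb (D D' : Matrix ι ι ℂ) (V : UMat ι) : orb D V * orb D' V = orb (D * D') V := by
  simp only [orb, mul_assoc]
  rw [← mul_assoc (star (V : Matrix ι ι ℂ)) V, Unitary.star_mul_self_of_mem V.2, one_mul]

lemma orb_sub (D D' : Matrix ι ι ℂ) (V : UMat ι) : orb (D - D') V = orb D V - orb D' V := by
  simp only [orb, mul_sub, sub_mul]

lemma orb_smul_one (c : ℂ) (V : UMat ι) : orb (c • 1) V = c • 1 := by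
  simp [orb, Unitary.mul_star_self_of_mem V.2]

/-- Polynomials in the generic matrix, recursively multiplied by the generic matrix and centred
on the unitary orbit of `D`. -/
def cenPow (D : Matrix ι ι ℂ) : ℕ → Matrix ι ι (EntryPoly ι)
  | 0 => gen ι
  | j + 1 => gen ι * cenPow D j -
      ((D * evM D (cenPow D j)).trace / (Fintype.card ι : ℂ)) • (1 : Matrix ι ι (EntryPoly ι))

/-- The centring constants of `cenPow`. -/
def cenConst (D : Matrix ι ι ℂ) (j : ℕ) : ℂ :=
  (D * evM D (cenPow D j)).trace / (Fintype.card ι : ℂ)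

lemma cenPow_succ (D : Matrix ι ι ℂ) (j : ℕ) : cenPow D (j + 1) = gen ι * cenPow D j -
    cenConst D j • (1 : Matrix ι ι (EntryPoly ι)) := rfl

lemma isEquivariant_cenPow (D : Matrix ι ι ℂ) (j : ℕ) : IsEquivariant (cenPow D j) := by
  induction j with
  | zero => exact isEquivariant_gen
  | succ j ih => exact (isEquivariant_gen.mul ih).sub (isEquivariant_one.smul _)

lemma evM_cenPow_succ (D : Matrix ι ι ℂ) (j : ℕ) : evM D (cenPow D (j + 1)) =
    D * evM D (cenPow D j) - cenConst D j • (1 : Matrix ι ι ℂ) := by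
  rw [cenPow_succ, map_sub, map_mul, evM_gen, map_smul, map_one]

lemma evM_orb_cenPow (D : Matrix ι ι ℂ) (j : ℕ) (V : UMat ι) :
    evM (orb D V) (cenPow D j) = orb (evM D (cenPow D j)) V := by
  induction j with
  | zero => simp only [cenPow, evM_gen]
  | succ j ih =>
    rw [evM_cenPow_succ, cenPow_succ, map_sub, map_mul, evM_gen, map_smul, map_one, ih,
      orb_mul_orb, orb_sub, orb_smul_one]

lemma trace_evM_cenPow [Nonempty ι] {D : Matrix ι ι ℂ} (h0 : D.trace = 0) (j : ℕ) :
    (evM D (cenPow D j)).trace = 0 := by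
  cases j with
  | zero => simpa only [cenPow, evM_gen]
  | succ j =>
    rw [evM_cenPow_succ, cenConst, Matrix.trace_sub, Matrix.trace_smul, Matrix.trace_one,
      smul_eq_mul, div_mul_cancel₀, sub_self]
    exact Nat.cast_ne_zero.mpr Fintype.card_ne_zero

lemma hsSq_sub_trace_le [Nonempty ι] (M : Matrix ι ι ℂ) :
    hsSq (M - (M.trace / (Fintype.card ι : ℂ)) • (1 : Matrix ι ι ℂ)) ≤ hsSq M := by
  set c := M.trace / (Fintype.card ι : ℂ) with hc
  have hN : (Fintype.card ι : ℂ) ≠ 0 := Nat.cast_ne_zero.mpr Fintype.card_ne_zero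
  have ht : M.trace = c * Fintype.card ι := by rw [hc, div_mul_cancel₀ _ hN]
  have h : (hsSq (M - c • (1 : Matrix ι ι ℂ)) : ℂ) =
      ((hsSq M - Fintype.card ι * ‖c‖ ^ 2 : ℝ) : ℂ) := by
    push_cast
    rw [hsSq_eq_trace, hsSq_eq_trace, Matrix.conjTranspose_sub, Matrix.conjTranspose_smul,
      Matrix.conjTranspose_one]
    simp only [sub_mul, mul_sub, Matrix.trace_sub, Matrix.trace_smul, smul_mul_assoc,
      mul_smul_comm, one_mul, mul_one, Matrix.trace_conjTranspose, Matrix.trace_one, ht,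
      smul_eq_mul]
    have : ((‖c‖ : ℂ)) ^ 2 = c * star c := by
      rw [← starRingEnd_apply, Complex.mul_conj, Complex.normSq_eq_norm_sq]; norm_cast
    rw [this, star_mul']
    simp
    ring
  have h' : hsSq (M - c • (1 : Matrix ι ι ℂ)) = hsSq M - Fintype.card ι * ‖c‖ ^ 2 := by
    exact_mod_cast h
  rw [h']
  have : (0 : ℝ) ≤ Fintype.card ι * ‖c‖ ^ 2 := by positivity
  linarith

lemma hsSq_cenPow_le [Nonempty ι] {D : Matrix ι ι ℂ} {L : ℝ} (hL : ‖D‖ ≤ L) (j : ℕ) :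
    hsSq (evM D (cenPow D j)) ≤ (L ^ j) ^ 2 * hsSq D := by
  induction j with
  | zero => simp [cenPow, evM_gen]
  | succ j ih =>
    rw [evM_cenPow_succ, cenConst]
    calc _ ≤ hsSq (D * evM D (cenPow D j)) := hsSq_sub_trace_le _
      _ ≤ ‖D‖ ^ 2 * hsSq (evM D (cenPow D j)) := hsSq_mul_le_left _ _
      _ ≤ L ^ 2 * ((L ^ j) ^ 2 * hsSq D) := by
          gcongr
          exact hsSq_nonneg _
      _ = _ := by ring

lemma norm_cenConst_le [Nonempty ι] {D : Matrix ι ι ℂ} {L σ : ℝ} (hL : ‖D‖ ≤ L)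
    (hσ : hsSq D ≤ Fintype.card ι * σ ^ 2) (j : ℕ) : ‖cenConst D j‖ ≤ σ ^ 2 * L ^ j := by
  have hN : (0 : ℝ) < Fintype.card ι := Nat.cast_pos.mpr Fintype.card_pos
  have hL0 : 0 ≤ L := (norm_nonneg _).trans hL
  have h1 : ‖(D * evM D (cenPow D j)).trace‖ ≤ L ^ j * hsSq D := by
    refine abs_le_of_sq_le_sq' ?_ (mul_nonneg (by positivity) (hsSq_nonneg _)) |>.2
    calc _ ≤ hsSq D * hsSq (evM D (cenPow D j)) := norm_trace_mul_sq_le _ _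
      _ ≤ hsSq D * ((L ^ j) ^ 2 * hsSq D) := by
          gcongr
          · exact hsSq_nonneg _
          · exact hsSq_cenPow_le hL j
      _ = _ := by ring
  rw [cenConst, norm_div, Complex.norm_natCast, div_le_iff₀ hN]
  calc _ ≤ L ^ j * hsSq D := h1
    _ ≤ L ^ j * (Fintype.card ι * σ ^ 2) := by gcongr
    _ = _ := by ring

lemma hsSq_one : hsSq (1 : Matrix ι ι ℂ) = Fintype.card ι := by
  have : (hsSq (1 : Matrix ι ι ℂ) : ℂ) = (Fintype.card ι : ℂ) := by
    rw [hsSq_eq_trace]; simp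
  exact_mod_cast this

lemma norm_cenPow_le [Nonempty ι] {D : Matrix ι ι ℂ} {L : ℝ} (hL : ‖D‖ ≤ L) (j : ℕ) :
    ‖evM D (cenPow D j)‖ ≤ (j + 1) * L ^ (j + 1) := by
  induction j with
  | zero => simpa [cenPow, evM_gen] using hL
  | succ j ih =>
    have hL0 : 0 ≤ L := (norm_nonneg _).trans hL
    have h1 : ‖cenConst D j‖ ≤ L ^ 2 * L ^ j := by
      refine norm_cenConst_le hL ?_ j
      calc hsSq D = hsSq (D * 1) := by rw [mul_one]
        _ ≤ ‖D‖ ^ 2 * hsSq (1 : Matrix ι ι ℂ) := hsSq_mul_le_left _ _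
        _ ≤ L ^ 2 * hsSq (1 : Matrix ι ι ℂ) := by gcongr; exact hsSq_nonneg _
        _ = _ := by rw [hsSq_one, mul_comm]
    rw [evM_cenPow_succ]
    calc _ ≤ ‖D * evM D (cenPow D j)‖ + ‖cenConst D j • (1 : Matrix ι ι ℂ)‖ := norm_sub_le _ _
      _ ≤ ‖D‖ * ‖evM D (cenPow D j)‖ + ‖cenConst D j‖ * 1 := by
          gcongr
          · exact norm_mul_le _ _
          · rw [norm_smul, CStarRing.norm_one]
      _ ≤ L * ((j + 1) * L ^ (j + 1)) + L ^ 2 * L ^ j * 1 := by gcongr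
      _ = _ := by push_cast; ring

end Observables

section VarianceBound

open scoped Matrix.Norms.L2Operator

variable {n d : ℕ}

@[fun_prop]
lemma continuous_ptr : Continuous (ptr : Matrix (Fin n × Fin d) (Fin n × Fin d) ℂ → _) := by
  unfold ptr; fun_prop

lemma ptr_isHermitian {X : Matrix (Fin n × Fin d) (Fin n × Fin d) ℂ} (hX : X.IsHermitian) :
    (ptr X).IsHermitian := by
  ext p q
  exact congrFun (congrFun hX (q.1, p.2)) (p.1, q.2)

lemma norm_blk_le_one (a b : Fin n) :
    ‖(blk a b : Matrix (Fin n × Fin d) (Fin n × Fin d) ℂ)‖ ≤ 1 := by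
  have hstar : ∀ a b : Fin n, (blk a b : Matrix (Fin n × Fin d) (Fin n × Fin d) ℂ)ᴴ = blk b a := by
    intro a b
    simp [blk, Matrix.conjTranspose_kronecker]
  have hsq : ∀ a b : Fin n, ‖(blk a b : Matrix (Fin n × Fin d) (Fin n × Fin d) ℂ)‖ *
      ‖(blk a b : Matrix (Fin n × Fin d) (Fin n × Fin d) ℂ)‖ =
        ‖(blk b b : Matrix (Fin n × Fin d) (Fin n × Fin d) ℂ)‖ := by
    intro a b
    rw [← Matrix.l2_opNorm_conjTranspose_mul_self, hstar, blk_mul_blk, if_pos rfl]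
  have h1 := hsq b b
  have h2 := hsq a b
  have h3 := norm_nonneg (blk b b : Matrix (Fin n × Fin d) (Fin n × Fin d) ℂ)
  have h4 := norm_nonneg (blk a b : Matrix (Fin n × Fin d) (Fin n × Fin d) ℂ)
  have h5 : ‖(blk b b : Matrix (Fin n × Fin d) (Fin n × Fin d) ℂ)‖ ≤ 1 := by
    by_contra! h
    nlinarith
  by_contra! h
  nlinarith

/-- The expected normalized even moment of order `2 k` of the partial transpose along the unitary
orbit of `D`. -/
def evenMom (D : Matrix (Fin n × Fin d) (Fin n × Fin d) ℂ) (k : ℕ) : ℝ :=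
  (∫ V, hsSq (ptr (orb D V) ^ k) ∂haarU (Fin n × Fin d)) / (n * d : ℕ)

lemma evenMom_nonneg (D : Matrix (Fin n × Fin d) (Fin n × Fin d) ℂ) (k : ℕ) : 0 ≤ evenMom D k :=
  div_nonneg (integral_nonneg fun _ => hsSq_nonneg _) (Nat.cast_nonneg _)

lemma integrable_haarU_real {ι : Type*} [Fintype ι] [DecidableEq ι] {f : UMat ι → ℝ}
    (hf : Continuous f) : Integrable f (haarU ι) :=
  hf.integrable_of_hasCompactSupport (HasCompactSupport.of_compactSpace f)

lemma norm_integral_mul_le {ι : Type*} [Fintype ι] [DecidableEq ι] {F G : UMat ι → ℂ}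
    (hF : Continuous F) (hG : Continuous G) :
    ‖∫ V, F V * G V ∂haarU ι‖ ≤
      √(∫ V, ‖F V‖ ^ 2 ∂haarU ι) * √(∫ V, ‖G V‖ ^ 2 ∂haarU ι) := by
  have hm : ∀ {f : UMat ι → ℂ}, Continuous f → MemLp f (ENNReal.ofReal 2) (haarU ι) := fun hf =>
    hf.memLp_of_hasCompactSupport (HasCompactSupport.of_compactSpace _)
  have h := integral_mul_norm_le_Lp_mul_Lq (μ := haarU ι)
    (show (2 : ℝ).HolderConjugate 2 from ⟨by norm_num, by norm_num, by norm_num⟩) (hm hF) (hm hG)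
  refine (norm_integral_le_integral_norm _).trans ?_
  simp only [norm_mul]
  simpa only [Real.rpow_two, Real.sqrt_eq_rpow] using h

lemma evM_genY (x : Matrix (Fin n × Fin d) (Fin n × Fin d) ℂ) : evM x (genY n d) = ptr x := by
  have := congrArg ptr (evM_gen x)
  exact this

lemma evM_ptr (x : Matrix (Fin n × Fin d) (Fin n × Fin d) ℂ)
    (M : Matrix (Fin n × Fin d) (Fin n × Fin d) (EntryPoly (Fin n × Fin d))) :
    evM x (ptr M) = ptr (evM x M) := rfl

lemma evalAt_obs (x : Matrix (Fin n × Fin d) (Fin n × Fin d) ℂ)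
    (Φ : Matrix (Fin n × Fin d) (Fin n × Fin d) (EntryPoly (Fin n × Fin d)))
    (B : Matrix (Fin n × Fin d) (Fin n × Fin d) ℂ) (k : ℕ)
    (B' : Matrix (Fin n × Fin d) (Fin n × Fin d) ℂ) :
    evalAt x (obs Φ B k B') = (evM x Φ * B * ptr x ^ k * B').trace := by
  rw [obs, evalAt_trace, map_mul, map_mul, map_mul, map_pow, evM_genY, evM_constMat, evM_constMat]

lemma sum_norm_commDer_obs_le
    {Φ : Matrix (Fin n × Fin d) (Fin n × Fin d) (EntryPoly (Fin n × Fin d))}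
    (hΦ : IsEquivariant Φ) {B B' x : Matrix (Fin n × Fin d) (Fin n × Fin d) ℂ} (k : ℕ)
    (hB : ‖B‖ ≤ 1) (hB' : ‖B'‖ ≤ 1) (hx : x.IsHermitian) {L b : ℝ} (hL : ‖x‖ ≤ L)
    (hb : ‖evM x Φ‖ ≤ b) :
    ∑ i, ∑ j, ‖evalAt x (commDer i j (obs Φ B k B'))‖ ^ 2 ≤
      8 * b ^ 2 * (hsSq (ptr x ^ k) + 2 * k ^ 2 * L ^ 2 * hsSq (ptr x ^ (k - 1))) := by
  have hb0 : 0 ≤ b := (norm_nonneg _).trans hb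
  have hL0 : 0 ≤ L := (norm_nonneg _).trans hL
  have hY := ptr_isHermitian hx
  set Y := ptr x with hYdef
  set P := evM x Φ with hP
  set G : ℕ → Matrix (Fin n × Fin d) (Fin n × Fin d) ℂ :=
    fun r => ptr (Y ^ (k - 1 - r) * B' * P * B * Y ^ r) with hG
  set W := B * Y ^ k * B' with hW
  have hcomm : ∀ (A : Matrix (Fin n × Fin d) (Fin n × Fin d) ℂ) (Z) {a : ℝ}, ‖A‖ ≤ a →
      hsSq (A * Z - Z * A) ≤ 4 * a ^ 2 * hsSq Z := by
    intro A Z a ha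
    have h1 := hsSq_sub_le (A * Z) (Z * A)
    have h2 := hsSq_mul_le_left A Z
    have h3 := hsSq_mul_le_right Z A
    have h4 : ‖A‖ ^ 2 * hsSq Z ≤ a ^ 2 * hsSq Z := by
      gcongr
      exact hsSq_nonneg _
    linarith
  have e : ∑ i, ∑ j, ‖evalAt x (commDer i j (obs Φ B k B'))‖ ^ 2 =
      hsSq ((P * W - W * P) + ∑ r ∈ Finset.range k, (x * G r - G r * x)) := by
    rw [hsSq, Finset.sum_comm]
    refine Finset.sum_congr rfl fun i _ => Finset.sum_congr rfl fun j _ => ?_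
    rw [commDer_obs hΦ, evalAt_apply_eq]
    simp only [map_add, map_sub, map_sum, map_mul, map_pow, evM_ptr, evM_genY, evM_gen,
      evM_constMat]
    rfl
  have hone : ∀ Z : Matrix (Fin n × Fin d) (Fin n × Fin d) ℂ, ‖Z‖ ≤ 1 → ‖Z‖ ^ 2 ≤ 1 :=
    fun Z hZ => pow_le_one₀ (norm_nonneg _) hZ
  have hWle : hsSq W ≤ hsSq (Y ^ k) := by
    calc hsSq W ≤ ‖B'‖ ^ 2 * hsSq (B * Y ^ k) := hsSq_mul_le_right _ _
      _ ≤ 1 * hsSq (B * Y ^ k) := by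
          gcongr
          exacts [hsSq_nonneg _, hone _ hB']
      _ ≤ 1 * (‖B‖ ^ 2 * hsSq (Y ^ k)) := by gcongr; exact hsSq_mul_le_left _ _
      _ ≤ 1 * (1 * hsSq (Y ^ k)) := by
          gcongr
          exacts [hsSq_nonneg _, hone _ hB]
      _ = _ := by ring
  have hGle : ∀ r ∈ Finset.range k, hsSq (G r) ≤ 2 * b ^ 2 * hsSq (Y ^ (k - 1)) := by
    intro r hr
    have hr' := Finset.mem_range.mp hr
    rw [hG]
    simp only
    rw [hsSq_ptr]
    have h1 := hsSq_pow_mul_pow_le hY (B' * P * B) (k - 1 - r) r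
    have h2 : ‖B' * P * B‖ ≤ b := by
      calc _ ≤ ‖B' * P‖ * ‖B‖ := norm_mul_le _ _
        _ ≤ ‖B'‖ * ‖P‖ * ‖B‖ := by gcongr; exact norm_mul_le _ _
        _ ≤ 1 * b * 1 := by gcongr
        _ = b := by ring
    rw [show k - 1 - r + r = k - 1 by omega] at h1
    simp only [mul_assoc] at h1 ⊢
    refine h1.trans ?_
    simp only [mul_assoc] at h2
    gcongr
    exact hsSq_nonneg _
  rw [e]
  have h1 := hsSq_add_le (P * W - W * P) (∑ r ∈ Finset.range k, (x * G r - G r * x))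
  have h2 := hcomm P W hb
  have h3 := hsSq_sum_le (Finset.range k) fun r => x * G r - G r * x
  have h4 : ∑ r ∈ Finset.range k, hsSq (x * G r - G r * x) ≤
      ∑ r ∈ Finset.range k, 4 * L ^ 2 * (2 * b ^ 2 * hsSq (Y ^ (k - 1))) :=
    Finset.sum_le_sum fun r hr => (hcomm x (G r) hL).trans (by
      gcongr
      exact hGle r hr)
  rw [Finset.sum_const, nsmul_eq_mul, Finset.card_range] at h4
  rw [Finset.card_range] at h3
  have h5 : (k : ℝ) * ∑ r ∈ Finset.range k, hsSq (x * G r - G r * x) ≤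
    k * (k * (4 * L ^ 2 * (2 * b ^ 2 * hsSq (Y ^ (k - 1))))) := by gcongr
  have h6 : 4 * b ^ 2 * hsSq W ≤ 4 * b ^ 2 * hsSq (Y ^ k) := by gcongr
  linarith

lemma variance_obs_le [NeZero n] [NeZero d]
    {Φ : Matrix (Fin n × Fin d) (Fin n × Fin d) (EntryPoly (Fin n × Fin d))}
    (hΦ : IsEquivariant Φ) {B B' D : Matrix (Fin n × Fin d) (Fin n × Fin d) ℂ} (k : ℕ)
    (hB : ‖B‖ ≤ 1) (hB' : ‖B'‖ ≤ 1) (hD : D.IsHermitian) {L b : ℝ} (hL : ‖D‖ ≤ L)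
    (hb : ∀ V, ‖evM (orb D V) Φ‖ ≤ b) :
    ∫ V, ‖evalAt (orb D V) (obs Φ B k B') - haarE D (obs Φ B k B')‖ ^ 2 ∂haarU (Fin n × Fin d) ≤
      16 * b ^ 2 * (evenMom D k + 2 * k ^ 2 * L ^ 2 * evenMom D (k - 1)) := by
  refine (variance_le D _).trans ?_
  have hN : (0 : ℝ) < (n * d : ℕ) := by
    exact_mod_cast Nat.mul_pos (Nat.pos_of_ne_zero (NeZero.ne n)) (Nat.pos_of_ne_zero (NeZero.ne d))
  have hcard : (Fintype.card (Fin n × Fin d) : ℝ) = (n * d : ℕ) := by simp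
  have hintg : ∀ i j, Integrable (fun V => ‖evalAt (orb D V) (commDer i j (obs Φ B k B'))‖ ^ 2)
      (haarU (Fin n × Fin d)) := fun i j => integrable_haarU_real (by fun_prop)
  have hS : ∀ k, Integrable (fun V => hsSq (ptr (orb D V) ^ k)) (haarU (Fin n × Fin d)) :=
    fun k => integrable_haarU_real (by fun_prop)
  have e : ∑ i, ∑ j, ∫ V, ‖evalAt (orb D V) (commDer i j (obs Φ B k B'))‖ ^ 2
      ∂haarU (Fin n × Fin d) =
      ∫ V, ∑ i, ∑ j, ‖evalAt (orb D V) (commDer i j (obs Φ B k B'))‖ ^ 2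
        ∂haarU (Fin n × Fin d) := by
    rw [integral_finsetSum _ fun i _ => integrable_finsetSum _ fun j _ => hintg i j]
    exact Finset.sum_congr rfl fun i _ => (integral_finsetSum _ fun j _ => hintg i j).symm
  rw [e, hcard]
  have h1 : ∫ V, ∑ i, ∑ j, ‖evalAt (orb D V) (commDer i j (obs Φ B k B'))‖ ^ 2
      ∂haarU (Fin n × Fin d) ≤ ∫ V, 8 * b ^ 2 * (hsSq (ptr (orb D V) ^ k) +
        2 * k ^ 2 * L ^ 2 * hsSq (ptr (orb D V) ^ (k - 1))) ∂haarU (Fin n × Fin d) := by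
    refine integral_mono (integrable_finsetSum _ fun i _ => integrable_finsetSum _ fun j _ =>
      hintg i j) (((hS _).add ((hS _).const_mul _)).const_mul _) fun V => ?_
    exact sum_norm_commDer_obs_le hΦ k hB hB' (orb_isHermitian hD V) ((norm_orb D V).le.trans hL)
      (hb V)
  rw [integral_const_mul, integral_add (hS _) ((hS _).const_mul _), integral_const_mul] at h1
  refine (mul_le_mul_of_nonneg_left h1 (by positivity)).trans_eq ?_
  rw [evenMom, evenMom]; field_simp; ring

end VarianceBound

section LoopEquation

open scoped Matrix.Norms.L2Operator

variable {n d : ℕ}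

lemma haarE_const {ι : Type*} [Fintype ι] [DecidableEq ι] {D : Matrix ι ι ℂ} {f : EntryPoly ι}
    {z : ℂ} (h : ∀ V, evalAt (orb D V) f = z) : haarE D f = z := by
  simp [haarE_apply, h]

/-- The covariance of two polynomial functions on the unitary orbit of `D`. -/
def covU {ι : Type*} [Fintype ι] [DecidableEq ι] (D : Matrix ι ι ℂ) (f g : EntryPoly ι) : ℂ :=
  haarE D (f * g) - haarE D f * haarE D g

lemma norm_covU_le {ι : Type*} [Fintype ι] [DecidableEq ι] (D : Matrix ι ι ℂ) (f g : EntryPoly ι) :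
    ‖covU D f g‖ ≤ √(∫ V, ‖evalAt (orb D V) f - haarE D f‖ ^ 2 ∂haarU ι) *
      √(∫ V, ‖evalAt (orb D V) g - haarE D g‖ ^ 2 ∂haarU ι) := by
  have e : covU D f g = ∫ V, (evalAt (orb D V) f - haarE D f) * (evalAt (orb D V) g - haarE D g)
      ∂haarU ι := by
    have e2 : covU D f g = haarE D ((f - MvPolynomial.C (haarE D f)) *
        (g - MvPolynomial.C (haarE D g))) := by
      have hC : ∀ z : ℂ, haarE D (MvPolynomial.C z) = z := fun z => haarE_const fun V => by
        simp [evalAt]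
      have : (f - MvPolynomial.C (haarE D f)) * (g - MvPolynomial.C (haarE D g)) =
          f * g - haarE D g • f - haarE D f • g + MvPolynomial.C (haarE D f * haarE D g) := by
        simp only [MvPolynomial.smul_eq_C_mul, map_mul]; ring
      rw [this, map_add, map_sub, map_sub, map_smul, map_smul, hC, covU]
      simp only [smul_eq_mul]; ring
    rw [e2, haarE_apply]
    simp [evalAt]
  rw [e]
  exact norm_integral_mul_le (by fun_prop) (by fun_prop)

/-- The expected normalized moments of the partial transpose along the orbit of `D`. -/
def yMom (D : Matrix (Fin n × Fin d) (Fin n × Fin d) ℂ) (k : ℕ) : ℂ :=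
  haarE D (genY n d ^ k).trace / (n * d : ℕ)

lemma evalAt_trace_genY_pow (x : Matrix (Fin n × Fin d) (Fin n × Fin d) ℂ) (k : ℕ) :
    evalAt x (genY n d ^ k).trace = (ptr x ^ k).trace := by
  rw [evalAt_trace, map_pow, evM_genY]

lemma yMom_zero [NeZero n] [NeZero d] (D : Matrix (Fin n × Fin d) (Fin n × Fin d) ℂ) :
    yMom D 0 = 1 := by
  rw [yMom, haarE_const (z := ((n * d : ℕ) : ℂ)), div_self]
  · exact Nat.cast_ne_zero.mpr (mul_ne_zero (NeZero.ne n) (NeZero.ne d))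
  · intro V
    rw [evalAt_trace_genY_pow]; simp

lemma yMom_two_mul {D : Matrix (Fin n × Fin d) (Fin n × Fin d) ℂ} (hD : D.IsHermitian) (k : ℕ) :
    yMom D (2 * k) = evenMom D k := by
  rw [yMom, evenMom, haarE_apply, Complex.ofReal_div, ← integral_complex_ofReal]
  simp only [evalAt_trace_genY_pow, hsSq_pow_eq_trace (ptr_isHermitian (orb_isHermitian hD _))]
  norm_cast

/-- The expected normalized traces `Tr (Q_j (E_s ⊗ 1) Y ^ k (E_t ⊗ 1))`. -/
def tMat (D : Matrix (Fin n × Fin d) (Fin n × Fin d) ℂ) (j k : ℕ) :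
    Matrix (Fin n × Fin n) (Fin n × Fin n) ℂ :=
  fun s t => haarE D (obs (cenPow D j) (blk s.1 s.2) k (blk t.1 t.2)) / (n * d : ℕ)

lemma constMat_blk (u v : Fin n) : (constMat (blk u v) :
    Matrix (Fin n × Fin d) (Fin n × Fin d) (EntryPoly (Fin n × Fin d))) = blk u v := by
  ext p q : 2
  simp only [constMat, Matrix.map_apply, blk_apply]; split_ifs <;> simp

lemma yMom_succ (D : Matrix (Fin n × Fin d) (Fin n × Fin d) ℂ) (k : ℕ) :
    yMom D (k + 1) = ∑ s, tMat D 0 k s s := by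
  have h : (genY n d ^ (k + 1)).trace =
      ∑ s : Fin n × Fin n, obs (cenPow D 0) (blk s.1 s.2) k (blk s.1 s.2) := by
    have hY : genY n d = ∑ a, ∑ b, blk a b * gen (Fin n × Fin d) * blk a b := ptr_eq_sum _
    rw [pow_succ', Fintype.sum_prod_type]
    nth_rw 1 [hY]
    simp only [Finset.sum_mul, Matrix.trace_sum]
    refine Finset.sum_congr rfl fun a _ => Finset.sum_congr rfl fun b _ => ?_
    rw [obs, constMat_blk, Matrix.trace_mul_comm _ (blk a b), cenPow]
    simp only [mul_assoc]
  simp only [yMom, tMat, h, map_sum, Finset.sum_div]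

lemma sum_single_eq_blk {R : Type*} [CommRing R] (a b : Fin n) :
    ∑ k : Fin d, (Matrix.single (a, k) (b, k) 1 : Matrix (Fin n × Fin d) (Fin n × Fin d) R) =
      blk a b := by
  ext ⟨p1, p2⟩ ⟨q1, q2⟩
  simp only [Matrix.sum_apply, Matrix.single, Matrix.of_apply, blk_apply, Prod.mk.injEq]
  rw [Finset.sum_eq_single p2]
  · by_cases h1 : p1 = a <;> by_cases h2 : q1 = b <;> by_cases h3 : p2 = q2 <;>
      simp [h1, h2, h3, eq_comm] <;> tauto
  · intro k _ hk
    rw [if_neg]; tauto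
  · simp

lemma sum_pow_commutator {A : Type*} [Ring A] (y e : A) (l : ℕ) :
    ∑ r ∈ Finset.range l, y ^ r * (y * e - e * y) * y ^ (l - 1 - r) = y ^ l * e - e * y ^ l := by
  induction l with
  | zero => simp
  | succ l ih =>
    rw [Finset.sum_range_succ]
    have : ∀ r ∈ Finset.range l, y ^ r * (y * e - e * y) * y ^ (l + 1 - 1 - r) =
        y ^ r * (y * e - e * y) * y ^ (l - 1 - r) * y := by
      intro r hr
      have hr' := Finset.mem_range.mp hr
      rw [show l + 1 - 1 - r = l - 1 - r + 1 by omega, pow_succ]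
      simp only [mul_assoc]
    rw [Finset.sum_congr rfl this, ← Finset.sum_mul, ih]
    simp only [Nat.add_sub_cancel, Nat.sub_self, pow_zero, mul_one, pow_succ]
    noncomm_ring

lemma haarE_trace_genY_pow_commutator (D : Matrix (Fin n × Fin d) (Fin n × Fin d) ℂ) (a b : Fin n)
    (C : Matrix (Fin n × Fin d) (Fin n × Fin d) ℂ) (l : ℕ) :
    haarE D ((genY n d ^ l * blk b a - blk b a * genY n d ^ l) * constMat C).trace = 0 := by
  have h0 : haarE D (∑ k : Fin d, commDer (a, k) (b, k) (genY n d ^ l * constMat C).trace) = 0 := by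
    rw [map_sum]
    exact Finset.sum_eq_zero fun k _ => haarE_commDer D _ _ _
  rw [← h0]
  congr 1
  have h1 : ∀ k : Fin d, commDer (a, k) (b, k) (genY n d ^ l * constMat C).trace =
      ∑ r ∈ Finset.range l, (genY n d ^ r *
        ptr (Matrix.single (a, k) (b, k) 1 * gen _ - gen _ * Matrix.single (a, k) (b, k) 1) *
          genY n d ^ (l - 1 - r) * constMat C).trace := by
    intro k
    rw [← trace_map_derivation, map_derivation_mul, constMat_map_commDer, map_derivation_pow,
      mul_zero, add_zero, Finset.sum_mul, Matrix.trace_sum]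
    simp only [genY, ptr_map, gen_map_commDer]
  have h2 : ∑ k : Fin d, ptr (Matrix.single (a, k) (b, k) 1 * gen (Fin n × Fin d) -
      gen _ * Matrix.single (a, k) (b, k) 1) = genY n d * blk b a - blk b a * genY n d := by
    rw [genY, ← ptr_commutator_blk, ← sum_single_eq_blk]
    simp only [ptr_eq_sum, Finset.sum_mul, Finset.mul_sum, mul_sub, sub_mul,
      Finset.sum_sub_distrib]
    rw [Finset.sum_comm]
    congr 1
    · exact Finset.sum_congr rfl fun _ _ => Finset.sum_comm
    · rw [Finset.sum_comm]
      exact Finset.sum_congr rfl fun _ _ => Finset.sum_comm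
  simp only [h1]
  rw [Finset.sum_comm, ← sum_pow_commutator, Finset.sum_mul, Matrix.trace_sum]
  refine Finset.sum_congr rfl fun r _ => ?_
  rw [← h2, ← Matrix.trace_sum]
  simp only [Finset.mul_sum, Finset.sum_mul]

lemma haarE_trace_genY_pow_blk [NeZero n] [NeZero d]
    (D : Matrix (Fin n × Fin d) (Fin n × Fin d) ℂ) (l : ℕ) (b v : Fin n) :
    haarE D (genY n d ^ l * blk b v).trace =
      if v = b then (n * d : ℕ) * yMom D l / n else 0 := by
  have hn : (n : ℂ) ≠ 0 := Nat.cast_ne_zero.mpr (NeZero.ne n)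
  have hN : ((n * d : ℕ) : ℂ) ≠ 0 := Nat.cast_ne_zero.mpr (mul_ne_zero (NeZero.ne n) (NeZero.ne d))
  have h1 : ∀ a, haarE D (genY n d ^ l * blk b v).trace =
      if v = b then haarE D (genY n d ^ l * blk a a).trace else 0 := by
    intro a
    have := haarE_trace_genY_pow_commutator D a b (blk a v) l
    rw [constMat_blk, sub_mul, Matrix.trace_sub, map_sub, sub_eq_zero, mul_assoc, blk_mul_blk,
      if_pos rfl, Matrix.trace_mul_comm (blk b a * _), ← mul_assoc, blk_mul_blk] at this
    rw [this]
    split_ifs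
    · rw [Matrix.trace_mul_comm]
    · simp
  have h2 : (n * d : ℕ) * yMom D l = ∑ a, haarE D (genY n d ^ l * blk a a).trace := by
    rw [yMom, mul_div_cancel₀ _ hN, ← map_sum, ← Matrix.trace_sum, ← Finset.mul_sum, sum_blk_diag,
      mul_one]
  split_ifs with h
  · have h3 : ∀ a ∈ Finset.univ, haarE D (genY n d ^ l * blk a a).trace =
        haarE D (genY n d ^ l * blk b v).trace := fun a _ => by rw [h1 a, if_pos h]
    rw [eq_div_iff hn, h2, Finset.sum_congr rfl h3]
    simp [mul_comm]
  · rw [h1 b, if_neg h]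

lemma haarE_obs_one [NeZero n] [NeZero d]
    (D : Matrix (Fin n × Fin d) (Fin n × Fin d) ℂ) (l : ℕ) (s t : Fin n × Fin n) :
    haarE D (obs 1 (blk s.1 s.2) l (blk t.1 t.2)) =
      if s = t.swap then (n * d : ℕ) * yMom D l / n else 0 := by
  obtain ⟨u, v⟩ := s
  obtain ⟨c, e⟩ := t
  have : obs 1 (blk u v) l (blk c e) =
      if e = u then (genY n d ^ l * blk c v).trace else 0 := by
    rw [obs, one_mul, constMat_blk, constMat_blk, mul_assoc, Matrix.trace_mul_comm, mul_assoc,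
      blk_mul_blk]
    split_ifs <;> simp
  simp only [this, Prod.swap_prod_mk, Prod.mk.injEq]
  by_cases h : e = u
  · rw [if_pos h, haarE_trace_genY_pow_blk]
    simp [h]
  · rw [if_neg h, map_zero, if_neg]
    tauto

lemma obs_add (Φ Ψ : Matrix (Fin n × Fin d) (Fin n × Fin d) (EntryPoly (Fin n × Fin d)))
    (B : Matrix (Fin n × Fin d) (Fin n × Fin d) ℂ) (k : ℕ)
    (B' : Matrix (Fin n × Fin d) (Fin n × Fin d) ℂ) :
    obs (Φ + Ψ) B k B' = obs Φ B k B' + obs Ψ B k B' := by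
  simp only [obs, add_mul, Matrix.trace_add]

lemma obs_smul (c : ℂ) (Φ : Matrix (Fin n × Fin d) (Fin n × Fin d) (EntryPoly (Fin n × Fin d)))
    (B : Matrix (Fin n × Fin d) (Fin n × Fin d) ℂ) (k : ℕ)
    (B' : Matrix (Fin n × Fin d) (Fin n × Fin d) ℂ) :
    obs (c • Φ) B k B' = c • obs Φ B k B' := by
  simp only [obs, smul_mul_assoc, Matrix.trace_smul]

/-- The covariance term in the loop equation. -/
def loopErr (D : Matrix (Fin n × Fin d) (Fin n × Fin d) ℂ) (j k : ℕ) (s t : Fin n × Fin n) : ℂ :=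
  ∑ r ∈ Finset.range k, ∑ w : Fin n × Fin n,
    (covU D (obs (cenPow D j) (blk s.1 s.2) r (blk w.1 w.2))
        (obs (gen _) (blk w.1 w.2) (k - 1 - r) (blk t.1 t.2)) -
      covU D (obs (gen _ * cenPow D j) (blk s.1 s.2) r (blk w.1 w.2))
        (obs 1 (blk w.1 w.2) (k - 1 - r) (blk t.1 t.2)))

lemma loop_equation [NeZero n] [NeZero d] {D : Matrix (Fin n × Fin d) (Fin n × Fin d) ℂ}
    (h0 : D.trace = 0) (j k : ℕ) (s t : Fin n × Fin n) :
    tMat D j k s t = ∑ r ∈ Finset.range k,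
      (-∑ w, tMat D j r s w * tMat D 0 (k - 1 - r) w t +
        yMom D (k - 1 - r) / n * tMat D (j + 1) r s t.swap +
        if s = t then cenConst D j * yMom D r * yMom D (k - 1 - r) / n ^ 2 else 0) -
      loopErr D j k s t / (n * d : ℕ) ^ 2 := by
  have hn : (n : ℂ) ≠ 0 := Nat.cast_ne_zero.mpr (NeZero.ne n)
  have hN : ((n * d : ℕ) : ℂ) ≠ 0 := Nat.cast_ne_zero.mpr (mul_ne_zero (NeZero.ne n) (NeZero.ne d))
  set N : ℂ := ((n * d : ℕ) : ℂ) with hNdef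
  have hT : ∀ j k s t, haarE D (obs (cenPow D j) (blk s.1 s.2) k (blk t.1 t.2)) =
      N * tMat D j k s t := fun j k s t => by rw [tMat, mul_div_cancel₀ _ hN]
  have hsucc : gen _ * cenPow D j = cenPow D (j + 1) +
      cenConst D j • (1 : Matrix (Fin n × Fin d) (Fin n × Fin d) (EntryPoly (Fin n × Fin d))) := by
    rw [cenPow_succ, sub_add_cancel]
  have key := congrArg (haarE D)
    (sum_commDer_entry (isEquivariant_cenPow D j) (blk s.1 s.2) k (blk t.1 t.2))
  have hl : haarE D (∑ x, ∑ y, commDer x y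
      ((cenPow D j * constMat (blk s.1 s.2) * genY n d ^ k * constMat (blk t.1 t.2) :
        Matrix (Fin n × Fin d) (Fin n × Fin d) (EntryPoly (Fin n × Fin d))) x y)) = 0 := by
    simp only [map_sum, haarE_commDer, Finset.sum_const_zero]
  have htr : haarE D ((cenPow D j).trace *
      (constMat (blk s.1 s.2) * genY n d ^ k * constMat (blk t.1 t.2)).trace) = 0 := by
    refine haarE_const fun V => ?_
    rw [map_mul, evalAt_trace, evM_orb_cenPow, trace_orb, trace_evM_cenPow h0, zero_mul]
  have hfirst : haarE D (((n * d : ℕ) : EntryPoly (Fin n × Fin d)) *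
      obs (cenPow D j) (blk s.1 s.2) k (blk t.1 t.2)) = N * (N * tMat D j k s t) := by
    rw [← hT, ← nsmul_eq_mul, map_nsmul, nsmul_eq_mul]
  rw [hl, map_add, map_sub, htr, hfirst, sub_zero, map_sum] at key
  have hr : ∀ r ∈ Finset.range k, haarE D (∑ u : Fin n, ∑ v : Fin n,
      (obs (cenPow D j) (blk s.1 s.2) r (blk u v) *
          obs (gen _) (blk u v) (k - 1 - r) (blk t.1 t.2) -
        obs (gen _ * cenPow D j) (blk s.1 s.2) r (blk u v) *
          obs 1 (blk u v) (k - 1 - r) (blk t.1 t.2))) =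
      -N ^ 2 * (-∑ w, tMat D j r s w * tMat D 0 (k - 1 - r) w t +
        yMom D (k - 1 - r) / n * tMat D (j + 1) r s t.swap +
        if s = t then cenConst D j * yMom D r * yMom D (k - 1 - r) / n ^ 2 else 0) +
      ∑ w : Fin n × Fin n,
        (covU D (obs (cenPow D j) (blk s.1 s.2) r (blk w.1 w.2))
            (obs (gen _) (blk w.1 w.2) (k - 1 - r) (blk t.1 t.2)) -
          covU D (obs (gen _ * cenPow D j) (blk s.1 s.2) r (blk w.1 w.2))
            (obs 1 (blk w.1 w.2) (k - 1 - r) (blk t.1 t.2))) := by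
    intro r _
    have hcov : ∀ f g, haarE D (f * g) = haarE D f * haarE D g + covU D f g := by
      intro f g; rw [covU]; ring
    have hgen : ∀ w : Fin n × Fin n, haarE D (obs (gen _) (blk w.1 w.2) (k - 1 - r) (blk t.1 t.2)) =
        N * tMat D 0 (k - 1 - r) w t := fun w => hT 0 _ _ _
    have hmul : ∀ w : Fin n × Fin n,
        haarE D (obs (gen _ * cenPow D j) (blk s.1 s.2) r (blk w.1 w.2)) =
          N * tMat D (j + 1) r s w + cenConst D j * haarE D (obs 1 (blk s.1 s.2) r (blk w.1 w.2)) := by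
      intro w
      rw [hsucc, obs_add, obs_smul, map_add, map_smul, hT, smul_eq_mul]
    have hsw : ∑ u : Fin n, ∑ v : Fin n,
        (obs (cenPow D j) (blk s.1 s.2) r (blk u v) *
            obs (gen _) (blk u v) (k - 1 - r) (blk t.1 t.2) -
          obs (gen _ * cenPow D j) (blk s.1 s.2) r (blk u v) *
            obs 1 (blk u v) (k - 1 - r) (blk t.1 t.2)) = ∑ w : Fin n × Fin n,
        (obs (cenPow D j) (blk s.1 s.2) r (blk w.1 w.2) *
            obs (gen _) (blk w.1 w.2) (k - 1 - r) (blk t.1 t.2) -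
          obs (gen _ * cenPow D j) (blk s.1 s.2) r (blk w.1 w.2) *
            obs 1 (blk w.1 w.2) (k - 1 - r) (blk t.1 t.2)) := by
      rw [Fintype.sum_prod_type]
    rw [hsw, map_sum]
    simp only [map_sub, hcov, hgen, hT, hmul, haarE_obs_one, Finset.sum_sub_distrib,
      Finset.sum_add_distrib, mul_ite, mul_zero, Finset.sum_ite_eq', Finset.mem_univ, if_true,
      Prod.swap_swap]
    have hsum : ∑ w, N * tMat D j r s w * (N * tMat D 0 (k - 1 - r) w t) =
        N ^ 2 * ∑ w, tMat D j r s w * tMat D 0 (k - 1 - r) w t := by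
      rw [Finset.mul_sum]
      exact Finset.sum_congr rfl fun w _ => by ring
    rw [hsum]
    split_ifs <;> field_simp <;> ring
  rw [Finset.sum_congr rfl hr, Finset.sum_add_distrib, ← Finset.mul_sum] at key
  change 0 = N * (N * tMat D j k s t) + (-N ^ 2 * _ + loopErr D j k s t) at key
  rw [eq_sub_iff_add_eq, ← mul_right_inj' (pow_ne_zero 2 hN), mul_add,
    mul_div_cancel₀ _ (pow_ne_zero 2 hN)]
  linear_combination -key

end LoopEquation

section RowSums

open scoped Matrix.Norms.L2Operator

variable {n d : ℕ}

/-- The maximal absolute row sum of a matrix. -/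
def rowSup {κ : Type*} [Fintype κ] (T : Matrix κ κ ℂ) : ℝ := ⨆ s, ∑ t, ‖T s t‖

lemma rowSup_nonneg {κ : Type*} [Fintype κ] (T : Matrix κ κ ℂ) : 0 ≤ rowSup T :=
  Real.iSup_nonneg fun _ => Finset.sum_nonneg fun _ _ => norm_nonneg _

lemma le_rowSup {κ : Type*} [Fintype κ] (T : Matrix κ κ ℂ) (s : κ) :
    ∑ t, ‖T s t‖ ≤ rowSup T :=
  le_ciSup (f := fun s => ∑ t, ‖T s t‖) (Set.finite_range _).bddAbove s

/-- The variance proxy of an observable of degree `k` in the partial transpose. -/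
def varProxy (D : Matrix (Fin n × Fin d) (Fin n × Fin d) ℂ) (L : ℝ) (k : ℕ) : ℝ :=
  evenMom D k + 2 * k ^ 2 * L ^ 2 * evenMom D (k - 1)

lemma norm_covU_obs_le [NeZero n] [NeZero d]
    {D : Matrix (Fin n × Fin d) (Fin n × Fin d) ℂ} (hD : D.IsHermitian) {L : ℝ} (hL : ‖D‖ ≤ L)
    {Φ Ψ : Matrix (Fin n × Fin d) (Fin n × Fin d) (EntryPoly (Fin n × Fin d))}
    (hΦ : IsEquivariant Φ) (hΨ : IsEquivariant Ψ) {b b' : ℝ}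
    (hb : ∀ V, ‖evM (orb D V) Φ‖ ≤ b) (hb' : ∀ V, ‖evM (orb D V) Ψ‖ ≤ b') (r r' : ℕ)
    (s w t : Fin n × Fin n) :
    ‖covU D (obs Φ (blk s.1 s.2) r (blk w.1 w.2)) (obs Ψ (blk w.1 w.2) r' (blk t.1 t.2))‖ ≤
      16 * (b * b') * (√(varProxy D L r) * √(varProxy D L r')) := by
  have hb0 : 0 ≤ b := (norm_nonneg _).trans (hb 1)
  have hb0' : 0 ≤ b' := (norm_nonneg _).trans (hb' 1)
  refine (norm_covU_le _ _ _).trans ?_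
  have h1 := variance_obs_le hΦ r (norm_blk_le_one s.1 s.2) (norm_blk_le_one w.1 w.2) hD hL hb
  have h2 := variance_obs_le hΨ r' (norm_blk_le_one w.1 w.2) (norm_blk_le_one t.1 t.2) hD hL hb'
  have e : ∀ x y : ℝ, 0 ≤ x → √(16 * x ^ 2 * y) = 4 * x * √y := by
    intro x y hx
    rw [show 16 * x ^ 2 * y = (4 * x) ^ 2 * y by ring, Real.sqrt_mul (sq_nonneg _),
      Real.sqrt_sq (by positivity)]
  calc _ ≤ √(16 * b ^ 2 * varProxy D L r) * √(16 * b' ^ 2 * varProxy D L r') :=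
        mul_le_mul (Real.sqrt_le_sqrt h1) (Real.sqrt_le_sqrt h2) (Real.sqrt_nonneg _)
          (Real.sqrt_nonneg _)
    _ = _ := by rw [e _ _ hb0, e _ _ hb0']; ring

lemma norm_loopErr_le [NeZero n] [NeZero d]
    {D : Matrix (Fin n × Fin d) (Fin n × Fin d) ℂ} (hD : D.IsHermitian) {L : ℝ} (hL : ‖D‖ ≤ L)
    (j k : ℕ) (s t : Fin n × Fin n) :
    ‖loopErr D j k s t‖ ≤ 32 * n ^ 2 * (j + 1) * L ^ (j + 2) *
      ∑ r ∈ Finset.range k, √(varProxy D L r) * √(varProxy D L (k - 1 - r)) := by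
  have hL0 : 0 ≤ L := (norm_nonneg _).trans hL
  have hQ : ∀ V, ‖evM (orb D V) (cenPow D j)‖ ≤ (j + 1) * L ^ (j + 1) := fun V => by
    rw [evM_orb_cenPow, norm_orb]; exact norm_cenPow_le hL j
  have hX : ∀ V, ‖evM (orb D V) (gen _)‖ ≤ L := fun V => by rwa [evM_gen, norm_orb]
  have hXQ : ∀ V, ‖evM (orb D V) (gen _ * cenPow D j)‖ ≤ L * ((j + 1) * L ^ (j + 1)) := fun V => by
    rw [map_mul]
    exact (norm_mul_le _ _).trans (mul_le_mul (hX V) (hQ V) (norm_nonneg _) hL0)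
  have h1 : ∀ V, ‖evM (orb D V) (1 : Matrix (Fin n × Fin d) (Fin n × Fin d) _)‖ ≤ 1 := fun V => by
    rw [map_one, CStarRing.norm_one]
  have hcard : (n : ℝ) ^ 2 = ((Finset.univ : Finset (Fin n × Fin n)).card : ℝ) := by
    simp [sq]
  rw [loopErr, Finset.mul_sum]
  refine (norm_sum_le _ _).trans (Finset.sum_le_sum fun r _ => ?_)
  refine (norm_sum_le _ _).trans ((Finset.sum_le_card_nsmul _ _
    (32 * (j + 1) * L ^ (j + 2) * (√(varProxy D L r) * √(varProxy D L (k - 1 - r))))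
      fun w _ => ?_).trans_eq ?_)
  · refine (norm_sub_le _ _).trans ?_
    have e1 := norm_covU_obs_le hD hL (isEquivariant_cenPow D j) isEquivariant_gen hQ hX r
      (k - 1 - r) s w t
    have e2 := norm_covU_obs_le hD hL (isEquivariant_gen.mul (isEquivariant_cenPow D j))
      isEquivariant_one hXQ h1 r (k - 1 - r) s w t
    refine (add_le_add e1 e2).trans_eq ?_
    ring
  · rw [nsmul_eq_mul, ← hcard]; ring

lemma norm_yMom_succ_le (D : Matrix (Fin n × Fin d) (Fin n × Fin d) ℂ) (k : ℕ) :
    ‖yMom D (k + 1)‖ ≤ n ^ 2 * rowSup (tMat D 0 k) := by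
  rw [yMom_succ]
  refine (norm_sum_le _ _).trans ((Finset.sum_le_card_nsmul _ _ (rowSup (tMat D 0 k))
    fun s _ => ?_).trans_eq ?_)
  · exact (Finset.single_le_sum (fun t _ => norm_nonneg (tMat D 0 k s t))
      (Finset.mem_univ s)).trans (le_rowSup _ _)
  · simp [sq]

lemma rowSup_tMat_le [NeZero n] [NeZero d]
    {D : Matrix (Fin n × Fin d) (Fin n × Fin d) ℂ} (hD : D.IsHermitian) (h0 : D.trace = 0)
    {L σ : ℝ} (hL : ‖D‖ ≤ L) (hσ : hsSq D ≤ (n * d : ℕ) * σ ^ 2) (j k : ℕ) :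
    rowSup (tMat D j k) ≤ ∑ r ∈ Finset.range k,
      (rowSup (tMat D j r) * rowSup (tMat D 0 (k - 1 - r)) +
        rowSup (tMat D (j + 1) r) * ‖yMom D (k - 1 - r)‖ / n +
        σ ^ 2 * L ^ j * ‖yMom D r‖ * ‖yMom D (k - 1 - r)‖ / n ^ 2) +
      32 * n ^ 4 * (j + 1) * L ^ (j + 2) / (n * d : ℕ) ^ 2 *
      ∑ r ∈ Finset.range k, √(varProxy D L r) * √(varProxy D L (k - 1 - r)) := by
  have hL0 : 0 ≤ L := (norm_nonneg _).trans hL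
  have hn0 : (0 : ℝ) < n := Nat.cast_pos.mpr (Nat.pos_of_ne_zero (NeZero.ne n))
  have hc : ‖cenConst D j‖ ≤ σ ^ 2 * L ^ j := norm_cenConst_le hL (by simpa using hσ) j
  have hcard : (n : ℝ) ^ 2 = ((Finset.univ : Finset (Fin n × Fin n)).card : ℝ) := by
    simp [sq]
  refine ciSup_le fun s => ?_
  have hpt : ∀ t, ‖tMat D j k s t‖ ≤ ∑ r ∈ Finset.range k,
      (∑ w, ‖tMat D j r s w‖ * ‖tMat D 0 (k - 1 - r) w t‖ +
        ‖yMom D (k - 1 - r)‖ / n * ‖tMat D (j + 1) r s t.swap‖ +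
        if s = t then σ ^ 2 * L ^ j * ‖yMom D r‖ * ‖yMom D (k - 1 - r)‖ / n ^ 2 else 0) +
      (32 * n ^ 2 * (j + 1) * L ^ (j + 2) *
        ∑ r ∈ Finset.range k, √(varProxy D L r) * √(varProxy D L (k - 1 - r))) /
        (n * d : ℕ) ^ 2 := by
    intro t
    rw [loop_equation h0]
    refine (norm_sub_le _ _).trans (add_le_add ?_ ?_)
    · refine (norm_sum_le _ _).trans (Finset.sum_le_sum fun r _ => ?_)
      refine (norm_add₃_le).trans (add_le_add (add_le_add ?_ ?_) ?_)
      · rw [norm_neg]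
        refine (norm_sum_le _ _).trans_eq ?_
        simp only [norm_mul]
      · rw [norm_mul, norm_div, Complex.norm_natCast]
      · split_ifs
        · rw [norm_div, norm_mul, norm_mul, norm_pow, Complex.norm_natCast]
          gcongr
        · simp
    · rw [norm_div, norm_pow, Complex.norm_natCast]
      gcongr
      exact norm_loopErr_le hD hL j k s t
  refine (Finset.sum_le_sum fun t _ => hpt t).trans ?_
  rw [Finset.sum_add_distrib, Finset.sum_const, nsmul_eq_mul, ← hcard, Finset.sum_comm]
  refine add_le_add (Finset.sum_le_sum fun r _ => ?_) (le_of_eq (by ring))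
  rw [Finset.sum_add_distrib, Finset.sum_add_distrib, Finset.sum_ite_eq,
    if_pos (Finset.mem_univ _)]
  refine add_le_add (add_le_add ?_ ?_) le_rfl
  · rw [Finset.sum_comm]
    calc _ = ∑ w, ‖tMat D j r s w‖ * ∑ t, ‖tMat D 0 (k - 1 - r) w t‖ := by
          simp only [Finset.mul_sum]
      _ ≤ ∑ w, ‖tMat D j r s w‖ * rowSup (tMat D 0 (k - 1 - r)) := by
          gcongr
          exact le_rowSup _ _
      _ ≤ _ := by
          rw [← Finset.sum_mul]
          exact mul_le_mul_of_nonneg_right (le_rowSup _ _) (rowSup_nonneg _)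
  · have e : ∑ t : Fin n × Fin n, ‖tMat D (j + 1) r s t.swap‖ = ∑ t, ‖tMat D (j + 1) r s t‖ :=
      (Equiv.prodComm (Fin n) (Fin n)).sum_comp fun t => ‖tMat D (j + 1) r s t‖
    rw [← Finset.mul_sum, e, mul_comm, mul_div_assoc]
    exact mul_le_mul_of_nonneg_right (le_rowSup _ _) (by positivity)

end RowSums

section Majorant

lemma sum_convolution_le {f g : ℕ → ℝ} (hf : ∀ k, 0 ≤ f k) (hg : ∀ k, 0 ≤ g k) (K : ℕ) :
    ∑ k ∈ Finset.range (K + 1), ∑ r ∈ Finset.range k, f r * g (k - 1 - r) ≤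
      (∑ k ∈ Finset.range K, f k) * ∑ k ∈ Finset.range K, g k := by
  rw [Finset.sum_range_succ', Finset.range_zero, Finset.sum_empty, add_zero]
  simp only [Nat.add_sub_cancel]
  rw [Finset.sum_range_diag_flip K fun r i => f r * g i, Finset.sum_mul]
  refine Finset.sum_le_sum fun r _ => ?_
  rw [← Finset.mul_sum]
  refine mul_le_mul_of_nonneg_left ?_ (hf r)
  exact Finset.sum_le_sum_of_subset_of_nonneg
    (Finset.range_mono (Nat.sub_le K r)) fun _ _ _ => hg _

/-- A discrete Gronwall argument for quadratic convolution recursions. -/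
lemma majorant_bound {b M ε : ℕ → ℝ} {α β κ x A H E : ℝ} {p : ℕ}
    (hα : 0 ≤ α) (hβ : 0 ≤ β) (hκ : 0 ≤ κ) (hx : 0 ≤ x) (hA0 : 0 ≤ A) (hH0 : 0 ≤ H)
    (hb : ∀ k, 0 ≤ b k) (hM : ∀ k, 0 ≤ M k) (hε0 : ∀ k, 0 ≤ ε k) (hM0 : M 0 ≤ 1)
    (hM1 : ∀ k < p, M (k + 1) ≤ κ * b k)
    (hrec : ∀ k ≤ p, b k ≤ ∑ r ∈ Finset.range k, (b r * b (k - 1 - r) +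
      α * (b r * M (k - 1 - r)) + β * (M r * M (k - 1 - r))) + ε k)
    (hε : ∑ k ∈ Finset.range (p + 1), ε k * x ^ k ≤ E)
    (hH : 1 + κ * x * A ≤ H) (hA : x * (A ^ 2 + α * (A * H) + β * H ^ 2) + E ≤ A) :
    ∀ k ≤ p, M k * x ^ k ≤ H := by
  set f : ℕ → ℝ := fun k => b k * x ^ k with hf
  set g : ℕ → ℝ := fun k => M k * x ^ k with hg
  have hf0 : ∀ k, 0 ≤ f k := fun k => mul_nonneg (hb k) (pow_nonneg hx k)
  have hg0 : ∀ k, 0 ≤ g k := fun k => mul_nonneg (hM k) (pow_nonneg hx k)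
  have hfrec : ∀ k ≤ p, f k ≤ x * (∑ r ∈ Finset.range k, f r * f (k - 1 - r) +
      α * ∑ r ∈ Finset.range k, f r * g (k - 1 - r) +
      β * ∑ r ∈ Finset.range k, g r * g (k - 1 - r)) + ε k * x ^ k := by
    intro k hk
    have h1 := mul_le_mul_of_nonneg_right (hrec k hk) (pow_nonneg hx k)
    refine h1.trans_eq ?_
    rw [add_mul, Finset.sum_mul, Finset.mul_sum, Finset.mul_sum, ← Finset.sum_add_distrib,
      ← Finset.sum_add_distrib, Finset.mul_sum]
    congr 1
    refine Finset.sum_congr rfl fun r hr => ?_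
    have hr' := Finset.mem_range.mp hr
    have hxk : x ^ k = x * (x ^ r * x ^ (k - 1 - r)) := by
      rw [← pow_add, ← pow_succ']; congr 1; omega
    simp only [hf, hg]
    rw [hxk]; ring
  have main : ∀ K ≤ p + 1, ∑ k ∈ Finset.range K, f k ≤ A ∧ ∑ k ∈ Finset.range K, g k ≤ H := by
    intro K
    induction K with
    | zero => intro _; simp [hA0, hH0]
    | succ K ih =>
      intro hK
      obtain ⟨ihA, ihH⟩ := ih (by omega)
      have sA : 0 ≤ ∑ k ∈ Finset.range K, f k := Finset.sum_nonneg fun _ _ => hf0 _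
      have sH : 0 ≤ ∑ k ∈ Finset.range K, g k := Finset.sum_nonneg fun _ _ => hg0 _
      constructor
      · have h1 : ∑ k ∈ Finset.range (K + 1), f k ≤
            x * (∑ k ∈ Finset.range (K + 1), ∑ r ∈ Finset.range k, f r * f (k - 1 - r) +
              α * ∑ k ∈ Finset.range (K + 1), ∑ r ∈ Finset.range k, f r * g (k - 1 - r) +
              β * ∑ k ∈ Finset.range (K + 1), ∑ r ∈ Finset.range k, g r * g (k - 1 - r)) +
            ∑ k ∈ Finset.range (K + 1), ε k * x ^ k := by
          simp only [Finset.mul_sum (Finset.range (K + 1)), ← Finset.sum_add_distrib]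
          exact Finset.sum_le_sum fun k hk => hfrec k (by have := Finset.mem_range.mp hk; omega)
        have h2 : ∑ k ∈ Finset.range (K + 1), ε k * x ^ k ≤ E := by
          refine le_trans ?_ hε
          exact Finset.sum_le_sum_of_subset_of_nonneg (Finset.range_mono hK)
            fun k _ _ => mul_nonneg (hε0 k) (pow_nonneg hx k)
        have h3 := (sum_convolution_le hf0 hf0 K).trans (mul_le_mul ihA ihA sA hA0)
        have h4 := (sum_convolution_le hf0 hg0 K).trans (mul_le_mul ihA ihH sH hA0)
        have h5 := (sum_convolution_le hg0 hg0 K).trans (mul_le_mul ihH ihH sH hH0)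
        refine (h1.trans (add_le_add (mul_le_mul_of_nonneg_left (add_le_add (add_le_add h3
          (mul_le_mul_of_nonneg_left h4 hα)) (mul_le_mul_of_nonneg_left h5 hβ)) hx) h2)).trans ?_
        rw [← sq, ← sq]
        exact hA
      · rw [Finset.sum_range_succ']
        have h1 : ∑ k ∈ Finset.range K, g (k + 1) ≤ κ * x * ∑ k ∈ Finset.range K, f k := by
          rw [Finset.mul_sum]
          refine Finset.sum_le_sum fun k hk => ?_
          have hk' := Finset.mem_range.mp hk
          have := mul_le_mul_of_nonneg_right (hM1 k (by omega)) (pow_nonneg hx (k + 1))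
          refine this.trans_eq ?_
          simp only [hf]; ring
        have h2 : g 0 ≤ 1 := by simpa [hg] using hM0
        have h3 : κ * x * ∑ k ∈ Finset.range K, f k ≤ κ * x * A :=
          mul_le_mul_of_nonneg_left ihA (mul_nonneg hκ hx)
        linarith
  intro k hk
  exact (Finset.single_le_sum (fun i _ => hg0 i) (Finset.mem_range.mpr (Nat.lt_succ_of_le hk))).trans
    (main (p + 1) le_rfl).2

/-- Choice of the constants in `majorant_bound`. -/
lemma exists_majorant_constants {n : ℕ} (hn : 0 < n) {L σ c : ℝ} (hL : 0 < L) (hσ : 0 < σ)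
    (hc : L + 2 * σ * (n + 1) < n * c) :
    ∃ A H E : ℝ, 0 < A ∧ 0 < H ∧ 0 < E ∧ ∀ x, 0 ≤ x → x * c ≤ 1 →
      1 + (n : ℝ) ^ 2 * x * A ≤ H ∧
      x * (A ^ 2 + L / n * (A * H) + σ ^ 2 / n ^ 2 * H ^ 2) + E ≤ A := by
  have hn0 : (0 : ℝ) < n := Nat.cast_pos.mpr hn
  have hc0 : 0 < c := by
    by_contra! h
    nlinarith [mul_pos hσ (by positivity : (0 : ℝ) < n + 1), mul_nonneg hn0.le (neg_nonneg.mpr h)]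
  set w := σ / (n + 1) with hw
  have hw0 : 0 < w := by positivity
  have hσw : σ = w * (n + 1) := by rw [hw]; field_simp
  have hkey : w ^ 2 + L * w + σ ^ 2 < w * (n * c - n ^ 2 * w) := by
    have : w * (L + 2 * σ * (n + 1)) < w * (n * c) := mul_lt_mul_of_pos_left hc hw0
    rw [hσw] at this ⊢
    nlinarith [mul_pos (mul_pos hw0 hw0) hn0]
  have h1 : 0 < c - n * w := by
    have h2 : 0 < w * (n * c - n ^ 2 * w) := lt_trans (by positivity) hkey
    have h3 : 0 < n * c - n ^ 2 * w := (mul_pos_iff_of_pos_left hw0).mp h2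
    have h4 : 0 < n * (c - n * w) := by nlinarith
    exact (mul_pos_iff_of_pos_left hn0).mp h4
  set H := c / (c - n * w) with hH
  have hH0 : 0 < H := by positivity
  set A := w * H / n with hA
  have hA0 : 0 < A := by positivity
  set F := A ^ 2 + L / n * (A * H) + σ ^ 2 / n ^ 2 * H ^ 2 with hF
  have hF0 : 0 < F := by positivity
  have hFA : F / c < A := by
    rw [div_lt_iff₀ hc0]
    have e1 : F = (w ^ 2 + L * w + σ ^ 2) * (H ^ 2 / n ^ 2) := by
      rw [hF, hA]; field_simp
    have e2 : A * c = w * (n * c - n ^ 2 * w) * (H ^ 2 / n ^ 2) := by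
      rw [hA, hH]
      have := h1.ne'
      field_simp
    rw [e1, e2]
    exact mul_lt_mul_of_pos_right hkey (by positivity)
  refine ⟨A, H, A - F / c, hA0, hH0, by linarith, fun x hx hxc => ?_⟩
  have hxc' : x ≤ 1 / c := by rwa [le_div_iff₀ hc0]
  constructor
  · have e : H = 1 + (n : ℝ) ^ 2 * (1 / c) * A := by
      rw [hA, hH]
      have := h1.ne'
      field_simp
      ring
    conv_rhs => rw [e]
    gcongr
  · have : x * F ≤ 1 / c * F := by gcongr
    have e : F / c = 1 / c * F := by ring
    linarith

/-- The two-parameter recursion of the loop equations reduces to `majorant_bound`. -/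
lemma majorant_bound_two {a : ℕ → ℕ → ℝ} {M ε : ℕ → ℝ} {n : ℕ} {L σ x A H E : ℝ} {p : ℕ}
    (hn : 0 < n) (hL : 0 < L) (hx : 0 ≤ x) (hA0 : 0 ≤ A) (hH0 : 0 ≤ H)
    (ha : ∀ j k, 0 ≤ a j k) (hM : ∀ k, 0 ≤ M k) (hε0 : ∀ k, 0 ≤ ε k) (hM0 : M 0 ≤ 1)
    (hM1 : ∀ k, M (k + 1) ≤ n ^ 2 * a 0 k)
    (hrec : ∀ j k, j + k ≤ p → a j k ≤ ∑ r ∈ Finset.range k,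
      (a j r * a 0 (k - 1 - r) + a (j + 1) r * M (k - 1 - r) / n +
        σ ^ 2 * L ^ j * M r * M (k - 1 - r) / n ^ 2) + L ^ j * ε k)
    (hε : ∑ k ∈ Finset.range (p + 1), ε k * x ^ k ≤ E)
    (hH : 1 + (n : ℝ) ^ 2 * x * A ≤ H)
    (hA : x * (A ^ 2 + L / n * (A * H) + σ ^ 2 / n ^ 2 * H ^ 2) + E ≤ A) :
    ∀ k ≤ p, M k * x ^ k ≤ H := by
  have hn0 : (0 : ℝ) < n := Nat.cast_pos.mpr hn
  set b : ℕ → ℝ := fun k => ⨆ j : Fin (p - k + 1), a j k / L ^ (j : ℕ) with hb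
  have hb0 : ∀ k, 0 ≤ b k := fun k => Real.iSup_nonneg fun j => div_nonneg (ha _ _) (by positivity)
  have hab : ∀ j k, j + k ≤ p → a j k ≤ L ^ j * b k := by
    intro j k hjk
    have := le_ciSup (f := fun j : Fin (p - k + 1) => a j k / L ^ (j : ℕ))
      (Set.finite_range _).bddAbove ⟨j, by omega⟩
    rwa [div_le_iff₀ (by positivity), mul_comm] at this
  refine majorant_bound (α := L / n) (β := σ ^ 2 / n ^ 2) (κ := n ^ 2) (by positivity)
    (by positivity) (by positivity) hx hA0 hH0 hb0 hM hε0 hM0 ?_ ?_ hε hH hA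
  · intro k hk
    refine (hM1 k).trans ?_
    gcongr
    simpa using hab 0 k (by omega)
  · intro k hk
    refine ciSup_le fun j => ?_
    have hj : (j : ℕ) + k ≤ p := by have := j.2; omega
    rw [div_le_iff₀ (by positivity)]
    refine (hrec j k hj).trans ?_
    rw [add_mul, Finset.sum_mul, mul_comm (ε k)]
    refine add_le_add (Finset.sum_le_sum fun r hr => ?_) le_rfl
    have hr' := Finset.mem_range.mp hr
    have h1 := hab j r (by omega)
    have h2 := hab 0 (k - 1 - r) (by omega)
    have h3 := hab (j + 1) r (by omega)
    rw [pow_zero, one_mul] at h2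
    calc _ ≤ L ^ (j : ℕ) * b r * b (k - 1 - r) + L ^ ((j : ℕ) + 1) * b r * M (k - 1 - r) / n +
          σ ^ 2 * L ^ (j : ℕ) * M r * M (k - 1 - r) / n ^ 2 := by
          have := ha 0 (k - 1 - r)
          have := hb0 r
          have := hM (k - 1 - r)
          gcongr
      _ = _ := by ring

end Majorant

section Bootstrap

open scoped Matrix.Norms.L2Operator

variable {n d : ℕ}

lemma evenMom_le_interpolation [NeZero n] [NeZero d]
    {D : Matrix (Fin n × Fin d) (Fin n × Fin d) ℂ} (hD : D.IsHermitian) {ρ : ℝ} (hρ : 0 < ρ)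
    {k p : ℕ} (hk : k ≤ p) :
    evenMom D k ≤ ρ ^ (2 * k) * (1 + evenMom D p / ρ ^ (2 * p)) := by
  have hN : (0 : ℝ) < (n * d : ℕ) := by
    exact_mod_cast Nat.mul_pos (Nat.pos_of_ne_zero (NeZero.ne n)) (Nat.pos_of_ne_zero (NeZero.ne d))
  have h1 : ∫ V, hsSq (ptr (orb D V) ^ k) ∂haarU (Fin n × Fin d) ≤
      ∫ V, ρ ^ (2 * k) * ((n * d : ℕ) + hsSq (ptr (orb D V) ^ p) / ρ ^ (2 * p))
        ∂haarU (Fin n × Fin d) := by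
    refine integral_mono (integrable_haarU_real (by fun_prop)) (integrable_haarU_real ?_) fun V => ?_
    · fun_prop
    · have := hsSq_pow_le (ptr_isHermitian (orb_isHermitian hD V)) hρ hk
      simpa using this
  rw [integral_const_mul, integral_add (integrable_const _)
    ((integrable_haarU_real (by fun_prop)).div_const _), integral_div, integral_const] at h1
  rw [evenMom, evenMom, div_le_iff₀ hN]
  refine h1.trans_eq ?_
  simp only [probReal_univ, one_smul]
  field_simp

lemma hsSq_pow_two_mul_le {ι : Type*} [Fintype ι] [DecidableEq ι] {Y : Matrix ι ι ℂ}
    (hY : Y.IsHermitian) (q : ℕ) : hsSq (Y ^ (2 * q)) ≤ hsSq (Y ^ q) ^ 2 := by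
  obtain ⟨U, l, hl⟩ := exists_diagonalization hY
  rw [hsSq_pow_eq_sum hl, hsSq_pow_eq_sum hl]
  have h : ∀ i, l i ^ (2 * (2 * q)) = (l i ^ (2 * q)) ^ 2 := fun i => by
    rw [← pow_mul]; congr 1; ring
  simp only [h]
  exact Finset.sum_sq_le_sq_sum_of_nonneg fun i _ => by rw [pow_mul]; positivity

/-- Concentration of `Tr Y ^ (2 * q)` bounds the moment of order `4 * q`. -/
lemma evenMom_two_mul_le [NeZero n] [NeZero d]
    {D : Matrix (Fin n × Fin d) (Fin n × Fin d) ℂ} (hD : D.IsHermitian) {L : ℝ} (hL : ‖D‖ ≤ L)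
    (q : ℕ) :
    (n * d : ℕ) * evenMom D (2 * q) ≤
      ((n * d : ℕ) * evenMom D q) ^ 2 + 16 * varProxy D L (2 * q) := by
  have hN : (0 : ℝ) < (n * d : ℕ) := by
    exact_mod_cast Nat.mul_pos (Nat.pos_of_ne_zero (NeZero.ne n)) (Nat.pos_of_ne_zero (NeZero.ne d))
  set F : UMat (Fin n × Fin d) → ℝ := fun V => hsSq (ptr (orb D V) ^ q) with hF
  have hFc : Continuous F := by rw [hF]; fun_prop
  have hintg : ∫ V, F V ∂haarU (Fin n × Fin d) = (n * d : ℕ) * evenMom D q := by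
    rw [evenMom, mul_div_cancel₀ _ hN.ne']
  have hev : ∀ V, evalAt (orb D V) (obs 1 1 (2 * q) 1) = (F V : ℂ) := by
    intro V
    rw [evalAt_obs, map_one, one_mul, one_mul, mul_one, hF,
      hsSq_pow_eq_trace (ptr_isHermitian (orb_isHermitian hD V))]
  have hmean : haarE D (obs 1 1 (2 * q) 1) = (((n * d : ℕ) * evenMom D q : ℝ) : ℂ) := by
    rw [haarE_apply, ← hintg, ← integral_complex_ofReal]
    exact integral_congr_ae (Eventually.of_forall hev)
  have h1 := variance_obs_le (n := n) (d := d) isEquivariant_one (B := 1) (B' := 1) (2 * q)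
    norm_one.le norm_one.le hD hL (b := 1) (fun V => by rw [map_one]; exact norm_one.le)
  simp only [hmean, hev, ← Complex.ofReal_sub, Complex.norm_real, Real.norm_eq_abs, sq_abs] at h1
  set m := (n * d : ℕ) * evenMom D q with hm
  have h2 : ∫ V, (F V - m) ^ 2 ∂haarU (Fin n × Fin d) =
      ∫ V, F V ^ 2 ∂haarU (Fin n × Fin d) - m ^ 2 := by
    have e : ∀ V, (F V - m) ^ 2 = F V ^ 2 - (2 * m * F V - m ^ 2) := fun V => by ring
    simp only [e]
    rw [integral_sub (integrable_haarU_real (by fun_prop)) (integrable_haarU_real (by fun_prop)),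
      integral_sub (integrable_haarU_real (by fun_prop)) (integrable_const _), integral_const_mul,
      hintg, integral_const]
    simp
    ring
  have h3 : (n * d : ℕ) * evenMom D (2 * q) ≤ ∫ V, F V ^ 2 ∂haarU (Fin n × Fin d) := by
    rw [evenMom, mul_div_cancel₀ _ hN.ne']
    exact integral_mono (integrable_haarU_real (by fun_prop)) (integrable_haarU_real (by fun_prop))
      fun V => hsSq_pow_two_mul_le (ptr_isHermitian (orb_isHermitian hD V)) q
  rw [varProxy]
  linarith

/-- If `ρ ^ (2 * q)` is the moment of order `2 * q`, the moments up to order `4 * q` are controlled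
by powers of `ρ`. -/
lemma evenMom_le_of_eq [NeZero n] [NeZero d]
    {D : Matrix (Fin n × Fin d) (Fin n × Fin d) ℂ} (hD : D.IsHermitian) {L ρ : ℝ} (hL : ‖D‖ ≤ L)
    (hρ : 0 < ρ) {q : ℕ} (hq : 0 < q) (hM : ρ ^ (2 * q) = evenMom D q)
    (hN : 32 * (1 + 2 * (2 * q) ^ 2 * L ^ 2 / ρ ^ 2) ≤ (n * d : ℕ)) {l : ℕ} (hl : l ≤ 2 * q) :
    evenMom D l ≤ ρ ^ (2 * l) * (2 * (n * d : ℕ) + 2) := by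
  have hL0 : 0 ≤ L := (norm_nonneg _).trans hL
  set N : ℝ := ((n * d : ℕ) : ℝ) with hNdef
  have hN0 : 0 < N := lt_of_lt_of_le (by positivity) hN
  set t := evenMom D (2 * q) / ρ ^ (2 * (2 * q)) with ht
  have ht0 : 0 ≤ t := div_nonneg (evenMom_nonneg _ _) (by positivity)
  have hT : evenMom D (2 * q) = t * ρ ^ (2 * (2 * q)) := by rw [ht]; field_simp
  have h1 := evenMom_two_mul_le hD hL q
  have h2 : evenMom D (2 * q - 1) ≤ ρ ^ (2 * (2 * q - 1)) * (1 + t) :=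
    evenMom_le_interpolation hD hρ (by omega)
  set R := ρ ^ (2 * (2 * q)) with hR
  have hR0 : 0 < R := by positivity
  have e1 : ρ ^ (2 * (2 * q - 1)) = R / ρ ^ 2 := by
    rw [eq_div_iff (by positivity), ← pow_add, hR]; congr 1; omega
  have e2 : evenMom D q ^ 2 = R := by rw [← hM, ← pow_mul, hR]; congr 1; ring
  rw [e1] at h2
  rw [varProxy, mul_pow, e2, hT] at h1
  have h3 : 2 * ((2 * q : ℕ) : ℝ) ^ 2 * L ^ 2 * evenMom D (2 * q - 1) ≤
      2 * ((2 * q : ℕ) : ℝ) ^ 2 * L ^ 2 * (R / ρ ^ 2 * (1 + t)) := by gcongr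
  set K := 2 * (2 * q : ℝ) ^ 2 * L ^ 2 / ρ ^ 2 with hK
  have hK0 : 0 ≤ K := by positivity
  have e3 : 2 * ((2 * q : ℕ) : ℝ) ^ 2 * L ^ 2 * (R / ρ ^ 2 * (1 + t)) = R * (K * (1 + t)) := by
    rw [hK]; push_cast; ring
  rw [e3] at h3
  have h4 : R * (N * t) ≤ R * (N ^ 2 + 16 * (t + K * (1 + t))) := by
    simp only [hNdef] at h1 ⊢
    nlinarith
  have h5 := le_of_mul_le_mul_left h4 hR0
  have h6 : t ≤ 2 * N + 1 := by
    have h7 : 16 * (t + K * (1 + t)) ≤ N / 2 * (1 + t) := by nlinarith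
    have h8 : N * t ≤ N * (2 * N + 1) := by nlinarith
    exact le_of_mul_le_mul_left h8 hN0
  refine (evenMom_le_interpolation hD hρ hl).trans ?_
  rw [← ht]
  exact mul_le_mul_of_nonneg_left (by linarith) (by positivity)

/-- Self-improving moment bound: the majorant of the loop equations controls the moments. -/
theorem evenMom_le_of_majorant [NeZero n] [NeZero d]
    {D : Matrix (Fin n × Fin d) (Fin n × Fin d) ℂ} (hD : D.IsHermitian) (h0 : D.trace = 0)
    {L σ c γ A H E : ℝ} (hL : ‖D‖ ≤ L) (hL0 : 0 < L) (hσ : hsSq D ≤ (n * d : ℕ) * σ ^ 2)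
    (hc : 0 < c) (hγ : 1 ≤ γ) (hA0 : 0 < A) (hH0 : 0 < H)
    (hmaj : ∀ x, 0 ≤ x → x * c ≤ 1 → 1 + (n : ℝ) ^ 2 * x * A ≤ H ∧
      x * (A ^ 2 + L / n * (A * H) + σ ^ 2 / n ^ 2 * H ^ 2) + E ≤ A)
    {q : ℕ} (hq : 0 < q)
    (hN : 32 * (1 + 2 * (2 * q) ^ 2 * L ^ 2 / c ^ 2) ≤ (n * d : ℕ))
    (herr : 128 * n ^ 4 * (2 * q + 1) ^ 2 * (2 * q) * L ^ 2 *
      (1 + 2 * (2 * q) ^ 2 * L ^ 2 / c ^ 2) / ((n * d : ℕ) * c) * γ ^ (2 * q) ≤ E)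
    (hH : H < γ ^ (2 * q)) :
    evenMom D q ≤ (c * γ) ^ (2 * q) := by
  by_contra! hlt
  have hγ0 : 0 < γ := by linarith
  have hnpos : 0 < n := Nat.pos_of_ne_zero (NeZero.ne n)
  set ρ := evenMom D q ^ (((2 * q : ℕ) : ℝ)⁻¹) with hρdef
  have hρM : ρ ^ (2 * q) = evenMom D q :=
    Real.rpow_inv_natCast_pow (evenMom_nonneg _ _) (by omega)
  have hρ1 : c * γ < ρ := by
    rw [← hρM] at hlt
    exact lt_of_pow_lt_pow_left₀ _ (Real.rpow_nonneg (evenMom_nonneg _ _) _) hlt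
  have hcρ : c ≤ ρ := le_trans (le_mul_of_one_le_right hc.le hγ) hρ1.le
  have hρ0 : 0 < ρ := by linarith
  set N : ℝ := ((n * d : ℕ) : ℝ) with hNdef
  set S := 1 + 2 * (2 * q : ℝ) ^ 2 * L ^ 2 / c ^ 2 with hS
  have hS0 : 0 < S := by positivity
  have hN1 : 1 ≤ N := by
    have : 0 ≤ 2 * (2 * q : ℝ) ^ 2 * L ^ 2 / c ^ 2 := by positivity
    linarith
  have hSρ : 1 + 2 * (2 * q : ℝ) ^ 2 * L ^ 2 / ρ ^ 2 ≤ S := by rw [hS]; gcongr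
  have hmom : ∀ l ≤ 2 * q, evenMom D l ≤ ρ ^ (2 * l) * (2 * N + 2) := fun l hl =>
    evenMom_le_of_eq hD hL hρ0 hq hρM (le_trans (by gcongr) hN) hl
  have hvp : ∀ r ≤ 2 * q, varProxy D L r ≤ ρ ^ (2 * r) * (4 * N * S) := by
    intro r hr
    have h1 : 2 * (r : ℝ) ^ 2 * L ^ 2 * evenMom D (r - 1) ≤
        ρ ^ (2 * r) * (2 * N + 2) * (2 * (2 * q : ℝ) ^ 2 * L ^ 2 / ρ ^ 2) := by
      rcases Nat.eq_zero_or_pos r with rfl | hr0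
      · simp; positivity
      · have hr2 : (r : ℝ) ≤ 2 * q := by exact_mod_cast hr
        have e : ρ ^ (2 * r) = ρ ^ (2 * (r - 1)) * ρ ^ 2 := by
          rw [← pow_add]; congr 1; omega
        calc _ ≤ 2 * (2 * q : ℝ) ^ 2 * L ^ 2 * (ρ ^ (2 * (r - 1)) * (2 * N + 2)) := by
              gcongr
              exacts [evenMom_nonneg _ _, hmom _ (by omega)]
          _ = _ := by rw [e]; field_simp
    have h2 := hmom r hr
    have h3 : ρ ^ (2 * r) * (2 * N + 2) * (1 + 2 * (2 * q : ℝ) ^ 2 * L ^ 2 / ρ ^ 2) ≤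
        ρ ^ (2 * r) * (4 * N) * S := by
      gcongr
      linarith
    rw [varProxy]
    linarith
  have hsqrt : ∀ r ≤ 2 * q, √(varProxy D L r) ≤ ρ ^ r * √(4 * N * S) := by
    intro r hr
    refine (Real.sqrt_le_sqrt (hvp r hr)).trans_eq ?_
    rw [Real.sqrt_mul (by positivity), mul_comm 2 r, pow_mul, Real.sqrt_sq (by positivity)]
  have hx0 : 0 < γ / ρ := by positivity
  have hxc : γ / ρ * c ≤ 1 := by
    rw [div_mul_eq_mul_div, div_le_one hρ0]; linarith
  obtain ⟨hmH, hmA⟩ := hmaj _ hx0.le hxc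
  set W := 128 * (n : ℝ) ^ 4 * (2 * q + 1) * (2 * q) * L ^ 2 * S / (N * ρ) with hW
  have hW0 : 0 ≤ W := by positivity
  have key := majorant_bound_two (a := fun j k => rowSup (tMat D j k)) (M := fun k => ‖yMom D k‖)
    (ε := fun k => W * ρ ^ k) (p := 2 * q) (σ := σ) (E := E) hnpos hL0 hx0.le hA0.le hH0.le
    (fun _ _ => rowSup_nonneg _) (fun _ => norm_nonneg _) (fun _ => by positivity)
    (by rw [yMom_zero]; simp) (norm_yMom_succ_le D) ?_ ?_ hmH hmA (2 * q) le_rfl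
  · rw [yMom_two_mul hD, Complex.norm_real, Real.norm_of_nonneg (evenMom_nonneg _ _), ← hρM,
      ← mul_pow, mul_div_cancel₀ _ hρ0.ne'] at key
    linarith
  · intro j k hjk
    refine (rowSup_tMat_le hD h0 hL hσ j k).trans (add_le_add le_rfl ?_)
    have h1 : ∑ r ∈ Finset.range k, √(varProxy D L r) * √(varProxy D L (k - 1 - r)) ≤
        2 * q * (ρ ^ k / ρ * (4 * N * S)) := by
      calc _ ≤ ∑ r ∈ Finset.range k, ρ ^ k / ρ * (4 * N * S) := by
            refine Finset.sum_le_sum fun r hr => ?_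
            have hr' := Finset.mem_range.mp hr
            refine (mul_le_mul (hsqrt r (by omega)) (hsqrt (k - 1 - r) (by omega))
              (Real.sqrt_nonneg _) (by positivity)).trans_eq ?_
            have e : ρ ^ k / ρ = ρ ^ r * ρ ^ (k - 1 - r) := by
              rw [div_eq_iff hρ0.ne', ← pow_add, ← pow_succ]; congr 1; omega
            rw [e, mul_mul_mul_comm, Real.mul_self_sqrt (by positivity)]
        _ = k * (ρ ^ k / ρ * (4 * N * S)) := by simp
        _ ≤ _ := by
            gcongr
            exact_mod_cast (by omega : k ≤ 2 * q)
    have hj : (j : ℝ) ≤ 2 * q := by exact_mod_cast (by omega : j ≤ 2 * q)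
    calc _ ≤ 32 * (n : ℝ) ^ 4 * (2 * q + 1) * L ^ (j + 2) / N ^ 2 *
          (2 * q * (ρ ^ k / ρ * (4 * N * S))) := by gcongr
      _ = _ := by
          rw [hW]
          have : N ≠ 0 := by positivity
          field_simp
          ring
  · calc ∑ k ∈ Finset.range (2 * q + 1), W * ρ ^ k * (γ / ρ) ^ k ≤
          ∑ k ∈ Finset.range (2 * q + 1), W * γ ^ (2 * q) := by
          refine Finset.sum_le_sum fun k hk => ?_
          rw [mul_assoc, ← mul_pow, mul_div_cancel₀ _ hρ0.ne']
          gcongr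
          have := Finset.mem_range.mp hk; omega
      _ = (2 * q + 1) * W * γ ^ (2 * q) := by simp; ring
      _ ≤ 128 * n ^ 4 * (2 * q + 1) ^ 2 * (2 * q) * L ^ 2 * S / (N * c) * γ ^ (2 * q) := by
          gcongr
          rw [hW]
          calc _ = 128 * n ^ 4 * (2 * q + 1) ^ 2 * (2 * q) * L ^ 2 * S / (N * ρ) := by ring
            _ ≤ _ := by gcongr
      _ ≤ E := herr

end Bootstrap

section MomentBound

open scoped Matrix.Norms.L2Operator

/-- The partial transpose of a uniformly rotated traceless matrix has small high moments. -/
theorem exists_moment_bound {n : ℕ} (hn : 0 < n) {L σ c : ℝ} (hL : 0 < L) (hσ : 0 < σ)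
    (hc : L + 2 * σ * (n + 1) < n * c) :
    ∃ d₀ : ℕ, 0 < d₀ ∧ ∀ d ≥ d₀, ∃ q : ℕ, ∀ D : Matrix (Fin n × Fin d) (Fin n × Fin d) ℂ,
      D.IsHermitian → D.trace = 0 → ‖D‖ ≤ L → hsSq D ≤ (n * d : ℕ) * σ ^ 2 →
      ∫ V, hsSq (ptr (orb D V) ^ q) ∂haarU (Fin n × Fin d) ≤ c ^ (2 * q) / (n * d : ℕ) ^ 2 := by
  have hn0 : (0 : ℝ) < n := Nat.cast_pos.mpr hn
  obtain ⟨c₁, hc₁, hc₁c⟩ : ∃ c₁, L + 2 * σ * (n + 1) < n * c₁ ∧ c₁ < c := by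
    obtain ⟨z, hz1, hz2⟩ := exists_between ((div_lt_iff₀' hn0).mpr hc)
    exact ⟨z, (div_lt_iff₀' hn0).mp hz1, hz2⟩
  have hc₁0 : 0 < c₁ := (mul_pos_iff_of_pos_left hn0).mp (lt_trans (by positivity) hc₁)
  have hc0 : 0 < c := hc₁0.trans hc₁c
  obtain ⟨A, H, E, hA0, hH0, hE0, hmaj⟩ := exists_majorant_constants hn hL hσ hc₁
  set γ := (c / c₁) ^ (((7 : ℕ) : ℝ)⁻¹) with hγdef
  have hγ7 : γ ^ 7 = c / c₁ := Real.rpow_inv_natCast_pow (by positivity) (by norm_num)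
  have hγ1 : 1 < γ := Real.one_lt_rpow ((one_lt_div hc₁0).mpr hc₁c) (by norm_num)
  have hγ0 : 0 < γ := by linarith
  set T := 1 + 8 * L ^ 2 / c₁ ^ 2 with hT
  have hT0 : 0 < T := by positivity
  set K := 128 * 18 * (n : ℝ) ^ 4 * L ^ 2 * T / c₁ * γ ^ 4 with hK
  have hK0 : 0 < K := by positivity
  set η := min (1 / (32 * T * γ ^ 4)) (E / K) with hη
  have hη0 : 0 < η := lt_min (by positivity) (by positivity)
  have ht : Tendsto (fun q : ℕ => (q : ℝ) ^ 5 * ((γ ^ 2)⁻¹) ^ q) atTop (𝓝 0) :=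
    tendsto_pow_const_mul_const_pow_of_abs_lt_one 5 (by
      rw [abs_of_pos (by positivity)]
      exact inv_lt_one_of_one_lt₀ (one_lt_pow₀ hγ1 (by norm_num)))
  have ht2 : Tendsto (fun q : ℕ => (γ ^ 2) ^ q) atTop atTop :=
    tendsto_pow_atTop_atTop_of_one_lt (one_lt_pow₀ hγ1 (by norm_num))
  obtain ⟨Q, hQ⟩ := eventually_atTop.mp ((ht.eventually (gt_mem_nhds hη0)).and
    ((ht2.eventually_gt_atTop H).and (eventually_ge_atTop 1)))
  obtain ⟨d₀, hd₀⟩ := exists_nat_gt (γ ^ (4 * Q))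
  have hd₀1 : 0 < d₀ := by
    have : (0 : ℝ) < d₀ := lt_trans (by positivity) hd₀
    exact_mod_cast this
  refine ⟨d₀, hd₀1, fun d hd => ?_⟩
  have : NeZero n := ⟨hn.ne'⟩
  have : NeZero d := ⟨by omega⟩
  set N : ℝ := ((n * d : ℕ) : ℝ) with hNdef
  have hNd : (d₀ : ℝ) ≤ N := by
    rw [hNdef]
    exact_mod_cast hd.le.trans (Nat.le_mul_of_pos_left d hn)
  have hN0 : 0 < N := lt_of_lt_of_le (by exact_mod_cast hd₀1) hNd
  have hex : ∃ q : ℕ, N ≤ γ ^ (4 * q) := by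
    obtain ⟨q, hq⟩ := pow_unbounded_of_one_lt N (one_lt_pow₀ hγ1 (four_ne_zero))
    exact ⟨q, by rw [pow_mul]; exact hq.le⟩
  classical
  obtain ⟨q, hqN, hqmin⟩ : ∃ q : ℕ, N ≤ γ ^ (4 * q) ∧ ∀ r < q, γ ^ (4 * r) < N :=
    ⟨Nat.find hex, Nat.find_spec hex, fun r hr => not_le.mp (Nat.find_min hex hr)⟩
  have hQq : Q ≤ q := by
    by_contra! h
    have : γ ^ (4 * q) ≤ γ ^ (4 * Q) := pow_le_pow_right₀ hγ1.le (by omega)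
    linarith
  obtain ⟨hq1, hq2, hq3⟩ := hQ q hQq
  rw [← pow_mul] at hq2
  have hq0 : (1 : ℝ) ≤ q := by exact_mod_cast hq3
  have hNlow : γ ^ (4 * q) / γ ^ 4 < N := by
    have := hqmin (q - 1) (by omega)
    rwa [show 4 * (q - 1) = 4 * q - 4 by omega, pow_sub₀ _ hγ0.ne' (by omega)] at this
  have hS : 1 + 2 * (2 * q : ℝ) ^ 2 * L ^ 2 / c₁ ^ 2 ≤ T * q ^ 2 := by
    have e : T * (q : ℝ) ^ 2 = q ^ 2 + 2 * (2 * q : ℝ) ^ 2 * L ^ 2 / c₁ ^ 2 := by rw [hT]; ring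
    rw [e]
    gcongr
    exact one_le_pow₀ hq0
  have e2 : ((γ ^ 2)⁻¹) ^ q = γ ^ (2 * q) / γ ^ (4 * q) := by
    rw [inv_pow, ← pow_mul, eq_div_iff (by positivity), show 4 * q = 2 * q + 2 * q by ring, pow_add]
    field_simp
  rw [e2] at hq1
  have h32 : 32 * (1 + 2 * (2 * q : ℝ) ^ 2 * L ^ 2 / c₁ ^ 2) ≤ N := by
    have h1 : (q : ℝ) ^ 2 / γ ^ (4 * q) ≤ 1 / (32 * T * γ ^ 4) := by
      refine le_trans ?_ (hq1.le.trans (min_le_left _ _))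
      rw [mul_div_assoc']
      gcongr
      calc (q : ℝ) ^ 2 ≤ q ^ 5 := pow_le_pow_right₀ hq0 (by norm_num)
        _ ≤ q ^ 5 * γ ^ (2 * q) := le_mul_of_one_le_right (by positivity) (one_le_pow₀ hγ1.le)
    calc _ ≤ 32 * (T * q ^ 2) := by gcongr
      _ = 32 * T * γ ^ 4 * ((q : ℝ) ^ 2 / γ ^ (4 * q)) * (γ ^ (4 * q) / γ ^ 4) := by field_simp
      _ ≤ 32 * T * γ ^ 4 * (1 / (32 * T * γ ^ 4)) * (γ ^ (4 * q) / γ ^ 4) := by gcongr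
      _ = γ ^ (4 * q) / γ ^ 4 := by field_simp
      _ ≤ N := hNlow.le
  have herr : 128 * (n : ℝ) ^ 4 * (2 * q + 1) ^ 2 * (2 * q) * L ^ 2 *
      (1 + 2 * (2 * q) ^ 2 * L ^ 2 / c₁ ^ 2) / (N * c₁) * γ ^ (2 * q) ≤ E := by
    calc _ ≤ 128 * (n : ℝ) ^ 4 * (3 * q) ^ 2 * (2 * q) * L ^ 2 * (T * q ^ 2) /
          (γ ^ (4 * q) / γ ^ 4 * c₁) * γ ^ (2 * q) := by
          gcongr
          linarith
      _ = K * ((q : ℝ) ^ 5 * (γ ^ (2 * q) / γ ^ (4 * q))) := by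
          rw [hK]; field_simp; ring
      _ ≤ K * (E / K) := by
          gcongr
          exact hq1.le.trans (min_le_right _ _)
      _ = E := by field_simp
  refine ⟨q, fun D hD h0 hDL hDσ => ?_⟩
  have h1 := evenMom_le_of_majorant hD h0 hDL hL hDσ hc₁0 hγ1.le hA0 hH0 hmaj hq3 h32 herr hq2
  rw [evenMom, div_le_iff₀ hN0] at h1
  refine h1.trans ?_
  have hc7 : c = c₁ * γ ^ 7 := by rw [hγ7]; field_simp
  rw [le_div_iff₀ (by positivity)]
  calc (c₁ * γ) ^ (2 * q) * N * N ^ 2 = (c₁ * γ) ^ (2 * q) * N ^ 3 := by ring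
    _ ≤ (c₁ * γ) ^ (2 * q) * (γ ^ (4 * q)) ^ 3 := by gcongr
    _ = c ^ (2 * q) := by
      rw [hc7, mul_pow, mul_pow, ← pow_mul, ← pow_mul, mul_assoc, ← pow_add]
      congr 2
      ring

end MomentBound

section Centering

open scoped Matrix.Norms.L2Operator

lemma star_trace_eq_self {ι : Type*} [Fintype ι] {M : Matrix ι ι ℂ} (hM : M.IsHermitian) :
    star M.trace = M.trace := by
  rw [← Matrix.trace_conjTranspose, hM.eq]

variable {ι : Type*} [Fintype ι] [DecidableEq ι]

/-- The traceless part of a matrix. -/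
def traceless (M : Matrix ι ι ℂ) : Matrix ι ι ℂ :=
  M - (M.trace / (Fintype.card ι : ℂ)) • (1 : Matrix ι ι ℂ)

@[fun_prop]
lemma continuous_traceless : Continuous (traceless : Matrix ι ι ℂ → Matrix ι ι ℂ) := by
  unfold traceless; fun_prop

lemma traceless_orb (M : Matrix ι ι ℂ) (V : UMat ι) :
    traceless (orb M V) = orb (traceless M) V := by
  rw [traceless, trace_orb, traceless, orb, orb, mul_sub, sub_mul, mul_smul_comm, mul_one,
    smul_mul_assoc, Unitary.mul_star_self_of_mem V.2]

lemma traceless_isHermitian {M : Matrix ι ι ℂ} (hM : M.IsHermitian) :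
    (traceless M).IsHermitian := by
  have h := star_trace_eq_self hM
  rw [Matrix.IsHermitian, traceless, Matrix.conjTranspose_sub, hM.eq, Matrix.conjTranspose_smul,
    Matrix.conjTranspose_one, star_div₀, h, star_natCast]

lemma trace_traceless [Nonempty ι] (M : Matrix ι ι ℂ) : (traceless M).trace = 0 := by
  have hN : (Fintype.card ι : ℂ) ≠ 0 := Nat.cast_ne_zero.mpr Fintype.card_ne_zero
  rw [traceless, Matrix.trace_sub, Matrix.trace_smul, Matrix.trace_one, smul_eq_mul,
    div_mul_cancel₀ _ hN, sub_self]

lemma hsSq_traceless [Nonempty ι] {M : Matrix ι ι ℂ} (hM : M.IsHermitian) :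
    (hsSq (traceless M) : ℂ) = (M ^ 2).trace - M.trace ^ 2 / Fintype.card ι := by
  have hN : (Fintype.card ι : ℂ) ≠ 0 := Nat.cast_ne_zero.mpr Fintype.card_ne_zero
  rw [hsSq_eq_trace, (traceless_isHermitian hM).eq, traceless]
  simp only [sub_mul, mul_sub, smul_mul_assoc, mul_smul_comm, one_mul, mul_one, Matrix.trace_sub,
    Matrix.trace_smul, Matrix.trace_one, smul_eq_mul, sq]
  field_simp
  ring

lemma norm_trace_le [Nonempty ι] (M : Matrix ι ι ℂ) : ‖M.trace‖ ≤ Fintype.card ι * ‖M‖ := by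
  have h1 := norm_trace_mul_sq_le M 1
  have h2 := hsSq_mul_le_left M 1
  rw [mul_one] at h1 h2
  rw [hsSq_one] at h1 h2
  refine le_of_sq_le_sq ?_ (by positivity)
  calc _ ≤ _ := h1
    _ ≤ ‖M‖ ^ 2 * Fintype.card ι * Fintype.card ι := by gcongr
    _ = _ := by ring

lemma norm_traceless_le [Nonempty ι] (M : Matrix ι ι ℂ) (z : ℂ) :
    ‖traceless M‖ ≤ 2 * ‖M - z • (1 : Matrix ι ι ℂ)‖ := by
  have hN : (0 : ℝ) < Fintype.card ι := Nat.cast_pos.mpr Fintype.card_pos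
  have hN' : (Fintype.card ι : ℂ) ≠ 0 := Nat.cast_ne_zero.mpr Fintype.card_ne_zero
  set W := M - z • (1 : Matrix ι ι ℂ) with hW
  have e : traceless M = W - (W.trace / (Fintype.card ι : ℂ)) • (1 : Matrix ι ι ℂ) := by
    rw [traceless, hW, Matrix.trace_sub, Matrix.trace_smul, Matrix.trace_one, smul_eq_mul, sub_div,
      mul_div_cancel_right₀ _ hN', sub_smul]
    abel
  rw [e]
  refine (norm_sub_le _ _).trans ?_
  rw [norm_smul, norm_one, mul_one, norm_div, Complex.norm_natCast, two_mul]
  gcongr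
  rw [div_le_iff₀' hN]
  exact norm_trace_le W

/-- Shifting a Hermitian matrix with a small high moment by a larger multiple of the identity gives a
positive semidefinite matrix. -/
lemma posSemidef_add_smul_one {Y : Matrix ι ι ℂ} (hY : Y.IsHermitian) {c : ℝ} (hc : 0 < c) {q : ℕ}
    (h : hsSq (Y ^ q) < c ^ (2 * q)) {t : ℝ} (ht : c ≤ t) :
    (Y + (t : ℂ) • (1 : Matrix ι ι ℂ)).PosSemidef := by
  obtain ⟨U, l, hl⟩ := exists_diagonalization hY
  have h1 : ∀ i, 0 ≤ l i + t := by
    intro i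
    rw [hsSq_pow_eq_sum hl] at h
    have h2 : |l i| ^ (2 * q) < c ^ (2 * q) := by
      rw [Even.pow_abs (even_two_mul q)]
      exact (Finset.single_le_sum (f := fun i => l i ^ (2 * q))
        (fun j _ => by rw [pow_mul]; positivity) (Finset.mem_univ i)).trans_lt h
    have h3 := lt_of_pow_lt_pow_left₀ _ hc.le h2
    linarith [neg_abs_le (l i)]
  have h2 : Y + (t : ℂ) • (1 : Matrix ι ι ℂ) = (U : Matrix ι ι ℂ) *
      Matrix.diagonal (fun i => ((l i + t : ℝ) : ℂ)) * (U : Matrix ι ι ℂ)ᴴ := by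
    have e : Matrix.diagonal (fun i => ((l i + t : ℝ) : ℂ)) =
        Matrix.diagonal (fun i => (l i : ℂ) ^ 1) + (t : ℂ) • (1 : Matrix ι ι ℂ) := by
      rw [← Matrix.diagonal_one, ← Matrix.diagonal_smul, Matrix.diagonal_add]
      simp
    have h4 := hl 1
    rw [pow_one] at h4
    rw [e, mul_add, add_mul, ← Matrix.star_eq_conjTranspose, ← h4, mul_smul_comm, mul_one,
      smul_mul_assoc, Unitary.mul_star_self_of_mem U.2]
  rw [h2]
  refine (Matrix.PosSemidef.diagonal fun i => ?_).mul_mul_conjTranspose_same _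
  exact Complex.zero_le_real.mpr (h1 i)

lemma continuous_orb_prod : Continuous fun s : Matrix ι ι ℂ × UMat ι => orb s.1 s.2 := by
  unfold orb; fun_prop

/-- A unitarily invariant law is an average of the uniform laws on unitary orbits. -/
lemma measure_eq_lintegral_haarU {ν : Measure (Matrix ι ι ℂ)} [IsProbabilityMeasure ν]
    (hν : ∀ V : UMat ι, ν.map (fun M => orb M V) = ν) {S : Set (Matrix ι ι ℂ)}
    (hS : MeasurableSet S) : ν S = ∫⁻ M, haarU ι {V | orb M V ∈ S} ∂ν := by
  have hm : Measurable fun s : Matrix ι ι ℂ × UMat ι => orb s.1 s.2 :=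
    continuous_orb_prod.measurable
  have h1 := Measure.prod_apply (μ := ν) (ν := haarU ι) (hm hS)
  have h2 := Measure.prod_apply_symm (μ := ν) (ν := haarU ι) (hm hS)
  rw [h1] at h2
  refine Eq.symm (h2.trans ?_)
  have h3 : ∀ V : UMat ι, ν ((fun M => (M, V)) ⁻¹'
      ((fun s : Matrix ι ι ℂ × UMat ι => orb s.1 s.2) ⁻¹' S)) = ν S := by
    intro V
    conv_rhs => rw [← hν V]
    exact (Measure.map_apply (hm.comp measurable_prodMk_right) hS).symm
  simp only [h3]
  simp

end Centering

section BadEvent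

open scoped Matrix.Norms.L2Operator

variable {n d : ℕ}

/-- Hermitian matrices whose spectrum has controlled width and variance. -/
def regularSet (n d : ℕ) (L σ : ℝ) : Set (Matrix (Fin n × Fin d) (Fin n × Fin d) ℂ) :=
  {M | M.IsHermitian ∧ ‖traceless M‖ ≤ L ∧ hsSq (traceless M) ≤ (n * d : ℕ) * σ ^ 2}

/-- Matrices whose traceless part has a partial transpose with a large moment. -/
def largeMomentSet (n d : ℕ) (c : ℝ) (q : ℕ) : Set (Matrix (Fin n × Fin d) (Fin n × Fin d) ℂ) :=
  {M | c ^ (2 * q) ≤ hsSq (ptr (traceless M) ^ q)}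

lemma measurableSet_regularSet (L σ : ℝ) : MeasurableSet (regularSet n d L σ) := by
  have h1 : IsClosed {M : Matrix (Fin n × Fin d) (Fin n × Fin d) ℂ | Mᴴ = M} :=
    isClosed_eq (by fun_prop) (by fun_prop)
  have h2 : IsClosed {M : Matrix (Fin n × Fin d) (Fin n × Fin d) ℂ | ‖traceless M‖ ≤ L} :=
    isClosed_le (by fun_prop) (by fun_prop)
  have h3 : IsClosed {M : Matrix (Fin n × Fin d) (Fin n × Fin d) ℂ |
      hsSq (traceless M) ≤ (n * d : ℕ) * σ ^ 2} := isClosed_le (by fun_prop) (by fun_prop)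
  exact (h1.inter (h2.inter h3)).measurableSet

lemma measurableSet_largeMomentSet (c : ℝ) (q : ℕ) : MeasurableSet (largeMomentSet n d c q) :=
  (isClosed_le (by fun_prop) (by fun_prop)).measurableSet

lemma hsSq_orb {ι : Type*} [Fintype ι] [DecidableEq ι] (D : Matrix ι ι ℂ) (V : UMat ι) :
    hsSq (orb D V) = hsSq D := by
  rw [orb, ← Unitary.coe_star, hsSq_mul_unitary, hsSq_unitary_mul]

lemma isHermitian_of_orb {ι : Type*} [Fintype ι] [DecidableEq ι] {D : Matrix ι ι ℂ} {V : UMat ι}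
    (h : (orb D V).IsHermitian) : D.IsHermitian := by
  have e : D = orb (orb D V) (star V) := by
    simp only [orb, Unitary.coe_star, star_star]
    rw [← mul_assoc, ← mul_assoc, Unitary.star_mul_self_of_mem V.2, one_mul, mul_assoc,
      Unitary.star_mul_self_of_mem V.2, mul_one]
  rw [e]
  exact orb_isHermitian h _

/-- For a unitarily invariant law, regular matrices rarely have a large moment. -/
lemma measure_regularSet_inter_le [NeZero n] [NeZero d] {L σ c : ℝ} (hc : 0 < c) {q : ℕ}
    (hq : ∀ D : Matrix (Fin n × Fin d) (Fin n × Fin d) ℂ,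
      D.IsHermitian → D.trace = 0 → ‖D‖ ≤ L → hsSq D ≤ (n * d : ℕ) * σ ^ 2 →
      ∫ V, hsSq (ptr (orb D V) ^ q) ∂haarU (Fin n × Fin d) ≤ c ^ (2 * q) / (n * d : ℕ) ^ 2)
    {ν : Measure (Matrix (Fin n × Fin d) (Fin n × Fin d) ℂ)} [IsProbabilityMeasure ν]
    (hν : ∀ V : UMat (Fin n × Fin d), ν.map (fun M => orb M V) = ν) :
    ν (regularSet n d L σ ∩ largeMomentSet n d c q) ≤ ENNReal.ofReal (1 / (n * d : ℕ) ^ 2) := by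
  rw [measure_eq_lintegral_haarU hν
    ((measurableSet_regularSet L σ).inter (measurableSet_largeMomentSet c q))]
  have key : ∀ M : Matrix (Fin n × Fin d) (Fin n × Fin d) ℂ,
      haarU (Fin n × Fin d) {V | orb M V ∈ regularSet n d L σ ∩ largeMomentSet n d c q} ≤
        ENNReal.ofReal (1 / (n * d : ℕ) ^ 2) := by
    intro M
    by_cases hM : M ∈ regularSet n d L σ
    · obtain ⟨h1, h2, h3⟩ := hM
      have h4 := hq _ (traceless_isHermitian h1) (trace_traceless M) h2 h3
      have h5 := mul_meas_ge_le_integral_of_nonneg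
        (Eventually.of_forall fun V => hsSq_nonneg (ptr (orb (traceless M) V) ^ q))
        (integrable_haarU_real (by fun_prop)) (c ^ (2 * q))
      have h6 : (haarU (Fin n × Fin d)).real
          {V | c ^ (2 * q) ≤ hsSq (ptr (orb (traceless M) V) ^ q)} ≤ 1 / (n * d : ℕ) ^ 2 := by
        refine le_of_mul_le_mul_left (h5.trans (h4.trans_eq ?_)) (pow_pos hc (2 * q))
        ring
      rw [← ofReal_measureReal]
      refine ENNReal.ofReal_le_ofReal (le_trans (measureReal_mono fun V hV => ?_) h6)
      have h7 : c ^ (2 * q) ≤ hsSq (ptr (traceless (orb M V)) ^ q) := hV.2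
      rwa [traceless_orb] at h7
    · have : {V | orb M V ∈ regularSet n d L σ ∩ largeMomentSet n d c q} = ∅ := by
        refine Set.eq_empty_of_forall_notMem fun V hV => hM ?_
        obtain ⟨h1, h2, h3⟩ := hV.1
        rw [traceless_orb, norm_orb] at h2
        rw [traceless_orb, hsSq_orb] at h3
        exact ⟨isHermitian_of_orb h1, h2, h3⟩
      rw [this, measure_empty]
      exact zero_le
  refine (lintegral_mono key).trans ?_
  simp

end BadEvent

section Asymptotics

open scoped Matrix.Norms.L2Operator

lemma tendsto_measure_of_ae_eventually {Ω : Type*} [MeasurableSpace Ω] {ℙ : Measure Ω}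
    [IsProbabilityMeasure ℙ] {S : ℕ → Set Ω} (h : ∀ᵐ ω ∂ℙ, ∀ᶠ d in atTop, ω ∈ S d) :
    Tendsto (fun d => ℙ (S d)) atTop (𝓝 1) := by
  set T : ℕ → Set Ω := fun k => ⋂ d ≥ k, S d with hT
  have hmono : Monotone T := fun a b hab =>
    Set.biInter_subset_biInter_left fun d (hd : b ≤ d) => hab.trans hd
  have hU : ℙ (⋃ k, T k) = 1 := by
    rw [← measure_univ (μ := ℙ)]
    refine measure_congr (eventuallyEq_univ.mpr ?_)
    filter_upwards [h] with ω hω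
    obtain ⟨k, hk⟩ := eventually_atTop.mp hω
    exact Set.mem_iUnion.mpr ⟨k, Set.mem_iInter₂.mpr hk⟩
  have h1 := tendsto_measure_iUnion_atTop (μ := ℙ) hmono
  rw [hU] at h1
  exact tendsto_of_tendsto_of_tendsto_of_le_of_le h1 tendsto_const_nhds
    (fun k => measure_mono (Set.biInter_subset_of_mem (le_refl k))) fun k => prob_le_one

lemma msupport_nonempty (μ : Measure ℝ) [IsProbabilityMeasure μ] : (msupport μ).Nonempty := by
  by_contra! h
  have h0 : μ Set.univ = 0 := by
    refine measure_null_of_locally_null _ fun x _ => ?_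
    have hx : x ∉ msupport μ := by rw [h]; exact Set.notMem_empty x
    simp only [msupport, Set.mem_ofPred_eq, not_forall, not_lt, nonpos_iff_eq_zero] at hx
    obtain ⟨U, hU, hxU, hμ⟩ := hx
    exact ⟨U, mem_nhdsWithin_of_mem_nhds (hU.mem_nhds hxU), hμ⟩
  simp at h0

lemma polyApply_X_sub_C {N : Type*} [Fintype N] [DecidableEq N] (a : ℝ) (M : Matrix N N ℂ) :
    polyApply (Polynomial.X - Polynomial.C a) M = M - (a : ℂ) • (1 : Matrix N N ℂ) := by
  simp [polyApply, Algebra.algebraMap_eq_smul_one]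

lemma opNorm_eq {N : Type*} [Fintype N] [DecidableEq N] (M : Matrix N N ℂ) : opNorm M = ‖M‖ :=
  (Matrix.l2_opNorm_toEuclideanCLM M).symm

/-- Matrices whose first two moments and norm converge are eventually regular. -/
lemma eventually_mem_regularSet {n : ℕ} (hn : 0 < n)
    {M : (d : ℕ) → Matrix (Fin n × Fin d) (Fin n × Fin d) ℂ} (hM : ∀ d, (M d).IsHermitian)
    {m v a r L σ : ℝ}
    (h1 : Tendsto (fun d : ℕ => ((n : ℂ) * (d : ℂ))⁻¹ * (M d).trace) atTop (𝓝 (m : ℂ)))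
    (h2 : Tendsto (fun d : ℕ => ((n : ℂ) * (d : ℂ))⁻¹ * (M d ^ 2).trace) atTop (𝓝 (v : ℂ)))
    (h3 : Tendsto (fun d : ℕ => ‖M d - (a : ℂ) • (1 : Matrix (Fin n × Fin d) (Fin n × Fin d) ℂ)‖)
      atTop (𝓝 r))
    (hr : 2 * r < L) (hσ : v - m ^ 2 < σ ^ 2) : ∀ᶠ d in atTop, M d ∈ regularSet n d L σ := by
  have h4 := (Complex.continuous_re.tendsto _).comp (h2.sub (h1.pow 2))
  have e : ((v : ℂ) - (m : ℂ) ^ 2).re = v - m ^ 2 := by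
    rw [← Complex.ofReal_pow, ← Complex.ofReal_sub, Complex.ofReal_re]
  rw [e] at h4
  filter_upwards [h4.eventually (gt_mem_nhds hσ), (h3.const_mul 2).eventually (gt_mem_nhds hr),
    eventually_gt_atTop 0] with d h5 h6 hd
  have : NeZero n := ⟨hn.ne'⟩
  have : NeZero d := ⟨hd.ne'⟩
  refine ⟨hM d, (norm_traceless_le (M d) a).trans h6.le, ?_⟩
  have hN : (0 : ℝ) < (n * d : ℕ) := by exact_mod_cast Nat.mul_pos hn hd
  have hN' : ((n * d : ℕ) : ℂ) ≠ 0 := by exact_mod_cast hN.ne'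
  have h7 : ((n : ℂ) * (d : ℂ))⁻¹ * (M d ^ 2).trace - (((n : ℂ) * (d : ℂ))⁻¹ * (M d).trace) ^ 2 =
      ((hsSq (traceless (M d)) / (n * d : ℕ) : ℝ) : ℂ) := by
    rw [Complex.ofReal_div, hsSq_traceless (hM d), Complex.ofReal_natCast, ← Nat.cast_mul,
      Fintype.card_prod, Fintype.card_fin, Fintype.card_fin]
    field_simp
  simp only [Function.comp_apply] at h5
  rw [h7, Complex.ofReal_re, div_lt_iff₀' hN] at h5
  exact h5.le

lemma ptr_smul_one {n d : ℕ} (z : ℂ) :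
    ptr (z • (1 : Matrix (Fin n × Fin d) (Fin n × Fin d) ℂ)) = z • 1 := by
  ext ⟨a, b⟩ ⟨a', b'⟩
  simp only [ptr, Matrix.smul_apply, Matrix.one_apply, Prod.mk.injEq]
  simp only [eq_comm (a := a) (b := a')]

lemma mem_PPT_of_notMem_largeMomentSet {n d : ℕ} {M : Matrix (Fin n × Fin d) (Fin n × Fin d) ℂ}
    (hM : M.PosSemidef) {c : ℝ} (hc : 0 < c) {q : ℕ} (h : M ∉ largeMomentSet n d c q)
    (ht : c ≤ (((n : ℂ) * (d : ℂ))⁻¹ * M.trace).re) : M ∈ PPT n d := by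
  refine ⟨hM, ?_⟩
  have hY : (ptr (traceless M)).IsHermitian :=
    ptr_isHermitian (traceless_isHermitian hM.isHermitian)
  set z := ((n : ℂ) * (d : ℂ))⁻¹ * M.trace with hz
  have hzr : (z.re : ℂ) = z := by
    refine Complex.conj_eq_iff_re.mp ?_
    have := star_trace_eq_self hM.isHermitian
    rw [hz, starRingEnd_apply, star_mul', this]
    simp
  have h1 := posSemidef_add_smul_one hY hc (not_le.mp h) ht
  rw [hzr] at h1
  have e : ptrans M = ptr (traceless M) + z • 1 := by
    have e1 : M = traceless M + z • (1 : Matrix (Fin n × Fin d) (Fin n × Fin d) ℂ) := by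
      rw [traceless, hz, Fintype.card_prod, Fintype.card_fin, Fintype.card_fin, Nat.cast_mul,
        div_eq_inv_mul, sub_add_cancel]
    rw [← ptr_smul_one z]
    conv_lhs => rw [e1]
    rfl
  rw [e]
  exact h1

end Asymptotics

/-- If `n(m − 2σ) > B − A + 2σ`, a unitarily invariant strongly
convergent sequence of random PSD matrices is asymptotically PPT. -/
theorem stmt0
    {Ω : Type*} [MeasurableSpace Ω] (ℙ : Measure Ω) [IsProbabilityMeasure ℙ]
    (n : ℕ) (hn : 2 ≤ n)
    (X : (d : ℕ) → Ω → Matrix (Fin n × Fin d) (Fin n × Fin d) ℂ)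
    (hmeas : ∀ d, Measurable (X d))
    (hpsd : ∀ d ω, (X d ω).PosSemidef)
    (hUI : UnitInv ℙ n X)
    (μ : Measure ℝ) [IsProbabilityMeasure μ]
    (A B m σ : ℝ) (hA : 0 ≤ A) (hσ : 0 ≤ σ)
    (hsupp : msupport μ ⊆ Set.Icc A B)
    (hmean : (∫ x, x ∂μ) = m)
    (hvar : (∫ x, x ^ 2 ∂μ) - m ^ 2 = σ ^ 2)
    (hconv : StrongConv ℙ n X μ)
    (hcond : (n : ℝ) * (m - 2 * σ) > B - A + 2 * σ) :
    (∀ᵐ ω ∂ℙ, ∀ᶠ d : ℕ in atTop, X d ω ∈ PPT n d) ∧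
      Tendsto (fun d : ℕ => ℙ {ω | X d ω ∈ PPT n d}) atTop (𝓝 1) := by
  suffices hae : ∀ᵐ ω ∂ℙ, ∀ᶠ d : ℕ in atTop, X d ω ∈ PPT n d from
    ⟨hae, tendsto_measure_of_ae_eventually hae⟩
  have hn1 : 0 < n := by omega
  have hn0 : (0 : ℝ) < n := Nat.cast_pos.mpr hn1
  have hne := msupport_nonempty μ
  have hAB : A ≤ B := by
    obtain ⟨x, hx⟩ := hne
    exact (hsupp hx).1.trans (hsupp hx).2
  set s := n * m - (B - A) - 2 * σ * (n + 1) with hs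
  have hs0 : 0 < s := by rw [hs]; linarith
  set L := B - A + s / 4 with hL
  set τ := σ + s / (8 * (n + 1)) with hτ
  set c := m - s / (4 * n) with hc
  have hL0 : 0 < L := by rw [hL]; linarith
  have hτ0 : σ < τ := lt_add_of_pos_right _ (by positivity)
  have hcm : c < m := sub_lt_self _ (by positivity)
  have hcond' : L + 2 * τ * (n + 1) < n * c := by
    have e1 : 2 * τ * (n + 1) = 2 * σ * (n + 1) + s / 4 := by rw [hτ]; field_simp; ring
    have e2 : n * c = n * m - s / 4 := by rw [hc]; field_simp
    rw [e1, e2, hL]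
    linarith
  have hc0 : 0 < c := (mul_pos_iff_of_pos_left hn0).mp
    (lt_trans (by have := hσ.trans_lt hτ0; positivity) hcond')
  obtain ⟨d₀, hd₀, hd₀q⟩ := exists_moment_bound hn1 hL0 (hσ.trans_lt hτ0) hcond'
  choose! q hq using hd₀q
  have hbad : ∀ᵐ ω ∂ℙ, ∀ᶠ d in atTop,
      ω ∉ {ω | d₀ ≤ d ∧ X d ω ∈ regularSet n d L τ ∩ largeMomentSet n d c (q d)} := by
    refine ae_eventually_notMem (ne_top_of_le_ne_top ?_
      (ENNReal.tsum_le_tsum (g := fun d : ℕ => ENNReal.ofReal (1 / (d : ℝ) ^ 2)) fun d => ?_))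
    · exact (Real.summable_one_div_nat_pow.mpr one_lt_two).tsum_ofReal_ne_top
    · by_cases hd : d₀ ≤ d
      swap
      · simp [hd]
      have : NeZero n := ⟨hn1.ne'⟩
      have : NeZero d := ⟨by omega⟩
      have : IsProbabilityMeasure (ℙ.map (X d)) :=
        Measure.isProbabilityMeasure_map (hmeas d).aemeasurable
      have hinv : ∀ V : UMat (Fin n × Fin d),
          (ℙ.map (X d)).map (fun M => orb M V) = ℙ.map (X d) := by
        intro V
        rw [Measure.map_map (by unfold orb; fun_prop) (hmeas d)]
        exact hUI d V V.2
      have h1 := measure_regularSet_inter_le hc0 (hq d hd) hinv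
      rw [Measure.map_apply (hmeas d)
        ((measurableSet_regularSet L τ).inter (measurableSet_largeMomentSet c (q d)))] at h1
      refine (measure_mono fun ω hω => hω.2).trans (h1.trans (ENNReal.ofReal_le_ofReal ?_))
      have hd1 : (0 : ℝ) < d := by exact_mod_cast hd₀.trans_le hd
      gcongr
      exact Nat.le_mul_of_pos_left d hn1
  filter_upwards [hconv, hbad] with ω hω hbω
  have h1 := (hω Polynomial.X).1
  have h2 := (hω (Polynomial.X ^ 2)).1
  have h3 := (hω (Polynomial.X - Polynomial.C ((A + B) / 2))).2
  simp only [polyApply, Polynomial.map_X, Polynomial.aeval_X, Polynomial.eval_X, hmean] at h1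
  simp only [polyApply, Polynomial.map_pow, Polynomial.map_X, map_pow, Polynomial.aeval_X,
    Polynomial.eval_pow, Polynomial.eval_X] at h2
  simp only [polyApply_X_sub_C, opNorm_eq] at h3
  have hr : sSup ((fun x => |(Polynomial.X - Polynomial.C ((A + B) / 2)).eval x|) '' msupport μ) ≤
      (B - A) / 2 := by
    refine csSup_le (hne.image _) ?_
    rintro _ ⟨x, hx, rfl⟩
    have := hsupp hx
    simp only [Polynomial.eval_sub, Polynomial.eval_X, Polynomial.eval_C]
    exact abs_le.mpr ⟨by linarith [this.1], by linarith [this.2]⟩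
  have hreg := eventually_mem_regularSet hn1 (fun d => (hpsd d ω).isHermitian) h1 h2 h3
    (L := L) (σ := τ) (by linarith) (by rw [hvar]; gcongr)
  have h4 := (Complex.continuous_re.tendsto _).comp h1
  filter_upwards [hbω, hreg, h4.eventually (lt_mem_nhds hcm), eventually_ge_atTop d₀] with
    d hb hg ht hd
  exact mem_PPT_of_notMem_largeMomentSet (hpsd d ω) hc0 (fun h => hb ⟨hd, hg, h⟩) ht.le
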